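/- Fix θ ∈ Θ_M°. As |x| → ∞ the score functions satisfy: ℓ_μ(x) = O(|x|^{−1}), ℓ_σ(x) = O(1), ℓ_α(x) = O(log|x|), ℓ_β(x) = O(1), and moreover ℓ_{μμ}(x) = −ℓ_μ'(x) = O(|x|^{−2}), ℓ_{μσ}(x) = −ℓ_σ'(x) = O(|x|^{−1}), ℓ_{μα}(x) = −ℓ_α'(x) = O(|x|^{−1} log|x|), ℓ_{μβ}(x) = −ℓ_β'(x) = O(|x|^{−1}). -/

import Mathlib

/-!
After the substitution `x ↦ (x - μ) / σ`, the density and its derivatives in `x`, `α` and `β` are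
one-sided Fourier integrals `Re ∫₀^∞ e^{-ity} D(t) e^{Ψ(t)} dt`, where `Ψ` is the stable exponent
and the amplitude `D` has polynomial growth. Both continue holomorphically to the right
half-plane, so the contour may be moved to the segment `[0, -i]` followed by `-i + [0, ∞)`. The
second part contributes `O(e^{-y})`, and the first becomes the Laplace integral over `u ∈ [0, 1]`
of the imaginary part of `D e^Ψ` at `-iu`. That imaginary part is of order `u^α` for the density,
every derivative in `x` contributes a factor `u`, and a derivative in `α` a factor `log u`.
Watson's lemma turns these orders into the power tails `|x|^{-(α + k + 1)}` of the `k`-th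
derivatives in `x`, with an additional `log |x|` for the derivative in `α`. The negative
half-line is reached by `f(-x; β) = f(x; -β)`, and since `|β| < 1` the leading coefficients,
which are proportional to `1 ± β`, do not vanish; this bounds the density itself from below by a
multiple of `|x|^{-(α + 1)}`.

The scores are quotients by the density, so positivity at every point is needed for their
derivatives. The lower bound makes the sum of `f` and a large multiple of a Gaussian density
nonnegative. The law with this density, normalized, is in the domain of attraction of the stable
law, whence `f ≥ 0`. By stability `f` is also an affine image of `f ∗ f`, and this convolution is
strictly positive because `f` is positive far out on both sides.
-/

open MeasureTheory Filter

noncomputable section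

def ThetaInt : Set (Fin 4 → ℝ) :=
  {θ | 0 < θ 1 ∧ θ 2 ∈ Set.Ioo (0:ℝ) 2 ∧ θ 3 ∈ Set.Ioo (-1:ℝ) 1}

/-- Cumulant (log characteristic function) of the continuous (M₀) parameterization,
with `θ = (μ, σ, α, β)`. -/
def psiM (θ : Fin 4 → ℝ) (t : ℝ) : ℂ :=
  if θ 2 = 1 then
    ((-(|θ 1 * t|) : ℝ) : ℂ)
      - Complex.I * (((2 * θ 3 / Real.pi) * (θ 1 * t) * Real.log |θ 1 * t| : ℝ) : ℂ)
      + Complex.I * ((θ 0 * t : ℝ) : ℂ)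
  else
    ((-(|θ 1 * t| ^ (θ 2)) : ℝ) : ℂ) *
        (1 + Complex.I * ((θ 3 * Real.sign t * Real.tan (Real.pi * θ 2 / 2)
            * (|θ 1 * t| ^ (1 - θ 2) - 1) : ℝ) : ℂ))
      + Complex.I * ((θ 0 * t : ℝ) : ℂ)

/-- Characteristic function of the (M₀) parameterization. -/
def phiM (θ : Fin 4 → ℝ) (t : ℝ) : ℂ := Complex.exp (psiM θ t)

/-- Stable density in the (M₀) parameterization, via Fourier inversion. -/
def fM (θ : Fin 4 → ℝ) (x : ℝ) : ℝ :=
  (1 / (2 * Real.pi)) *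
    (∫ t : ℝ, Complex.exp (-Complex.I * (t : ℂ) * (x : ℂ)) * phiM θ t).re

/-- Partial derivative of the density in parameter `i`. -/
def fP (i : Fin 4) (θ : Fin 4 → ℝ) (x : ℝ) : ℝ :=
  deriv (fun s => fM (Function.update θ i s) x) (θ i)

/-- Second partial derivative of the density in parameters `i`, `j`. -/
def fPP (i j : Fin 4) (θ : Fin 4 → ℝ) (x : ℝ) : ℝ :=
  deriv (fun s => fP i (Function.update θ j s) x) (θ j)

/-- Derivative of the density in `x`. -/
def fX (θ : Fin 4 → ℝ) (x : ℝ) : ℝ := deriv (fun y => fM θ y) x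

/-- Mixed derivative `∂²f/∂x∂θᵢ`. -/
def fPX (i : Fin 4) (θ : Fin 4 → ℝ) (x : ℝ) : ℝ := deriv (fun y => fP i θ y) x

/-- Score functions. -/
def ellP (i : Fin 4) (θ : Fin 4 → ℝ) (x : ℝ) : ℝ := fP i θ x / fM θ x

/-- Derivative of the score in `x`. -/
def ellPX (i : Fin 4) (θ : Fin 4 → ℝ) (x : ℝ) : ℝ := deriv (fun y => ellP i θ y) x

/-- Derivative of the score `ℓ_{θᵢ}` in the parameter `θⱼ`. -/
def ellPP (i j : Fin 4) (θ : Fin 4 → ℝ) (x : ℝ) : ℝ :=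
  deriv (fun s => ellP i (Function.update θ j s) x) (θ j)

/-- `h = O(r)` as `|x| → ∞`. -/
def IsBigOAtInfty (h r : ℝ → ℝ) : Prop :=
  ∃ c > 0, ∃ M > 0, ∀ x : ℝ, M ≤ |x| → |h x| ≤ c * r x


end

namespace StableLaw

open Complex Set Asymptotics Bornology
open scoped Topology ComplexConjugate FourierTransform

section HalfLineFourier

/-- The half-line Fourier integral `∫₀^∞ e^{-ity} h(t) dt`. For an integrand with
`h (-t) = conj (h t)` the full Fourier integral is twice its real part. -/
noncomputable def halfFourier (h : ℝ → ℂ) (y : ℝ) : ℂ :=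
  ∫ t in Ioi (0 : ℝ), exp (-I * t * y) * h t

lemma norm_exp_neg_I_mul (z : ℂ) (y : ℝ) : ‖exp (-I * z * y)‖ = Real.exp (z.im * y) := by
  simp [Complex.norm_exp]

lemma norm_exp_neg_I_mul_ofReal (t y : ℝ) : ‖exp (-I * t * y)‖ = 1 := by
  rw [norm_exp_neg_I_mul, ofReal_im, zero_mul, Real.exp_zero]

lemma integrableOn_exp_mul {h : ℝ → ℂ} {s : Set ℝ} (hh : IntegrableOn h s) (y : ℝ) :
    IntegrableOn (fun t : ℝ ↦ exp (-I * t * y) * h t) s :=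
  Integrable.bdd_mul hh (Continuous.aestronglyMeasurable (by fun_prop))
    (Eventually.of_forall fun t ↦ (norm_exp_neg_I_mul_ofReal t y).le)

lemma hasDerivAt_halfFourier_param {h h' : ℝ → ℝ → ℂ} {s : Set ℝ} {s₀ : ℝ} (hs : s ∈ 𝓝 s₀)
    {bound : ℝ → ℝ} (hint : ∀ r ∈ s, IntegrableOn (h r) (Ioi 0))
    (hmeas : AEStronglyMeasurable (h' s₀) (volume.restrict (Ioi 0)))
    (hbound : ∀ r ∈ s, ∀ t > 0, ‖h' r t‖ ≤ bound t) (hbound_int : IntegrableOn bound (Ioi 0))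
    (hderiv : ∀ r ∈ s, ∀ t > 0, HasDerivAt (h · t) (h' r t) r) (y : ℝ) :
    HasDerivAt (fun r ↦ halfFourier (h r) y) (halfFourier (h' s₀) y) s₀ := by
  refine (hasDerivAt_integral_of_dominated_loc_of_deriv_le (bound := bound)
    (F := fun r (t : ℝ) ↦ exp (-I * t * y) * h r t)
    (F' := fun r (t : ℝ) ↦ exp (-I * t * y) * h' r t) hs ?_
    (integrableOn_exp_mul (hint s₀ (mem_of_mem_nhds hs)) y)
    (AEStronglyMeasurable.mul (Continuous.aestronglyMeasurable (by fun_prop)) hmeas)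
    ?_ hbound_int ?_).2
  · filter_upwards [hs] with r hr using (integrableOn_exp_mul (hint r hr) y).aestronglyMeasurable
  · filter_upwards [ae_restrict_mem measurableSet_Ioi] with t ht r hr
    rw [norm_mul, norm_exp_neg_I_mul_ofReal, one_mul]
    exact hbound r hr t ht
  · filter_upwards [ae_restrict_mem measurableSet_Ioi] with t ht r hr
    exact (hderiv r hr t ht).const_mul _

lemma hasDerivAt_halfFourier {h : ℝ → ℂ} (hint : IntegrableOn h (Ioi 0))
    (hint' : IntegrableOn (fun t ↦ I * t * h t) (Ioi 0)) (y : ℝ) :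
    HasDerivAt (halfFourier h) (-halfFourier (fun t ↦ I * t * h t) y) y := by
  have key := (hasDerivAt_integral_of_dominated_loc_of_deriv_le (x₀ := y)
    (F := fun (y t : ℝ) ↦ exp (-I * t * y) * h t) (bound := fun t ↦ ‖I * t * h t‖)
    (F' := fun (y t : ℝ) ↦ -(exp (-I * t * y) * (I * t * h t))) univ_mem
    (Eventually.of_forall fun y ↦ (integrableOn_exp_mul hint y).aestronglyMeasurable)
    (integrableOn_exp_mul hint y) (integrableOn_exp_mul hint' y).neg.aestronglyMeasurable
    (Eventually.of_forall fun t y _ ↦ ?_) hint'.norm (Eventually.of_forall fun t y _ ↦ ?_)).2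
  · rwa [integral_neg] at key
  · rw [norm_neg, norm_mul, norm_exp_neg_I_mul_ofReal, one_mul]
  · have hlin : HasDerivAt (fun y : ℝ ↦ -I * t * (y : ℂ)) (-I * t) y := by
      simpa using (hasDerivAt_id y).ofReal_comp.const_mul (-I * (t : ℂ))
    exact (hlin.cexp.mul_const (h t)).congr_deriv (by ring)

end HalfLineFourier

section HalfStrip

/-- The closed half-strip `{z | 0 ≤ Re z, -1 ≤ Im z ≤ 0}` lying between the half-line `[0, ∞)` and
its translate by `-i`. -/
def halfStrip : Set ℂ := Ici 0 ×ℂ Icc (-1) 0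

lemma mem_halfStrip {z : ℂ} : z ∈ halfStrip ↔ 0 ≤ z.re ∧ -1 ≤ z.im ∧ z.im ≤ 0 := Iff.rfl

lemma interior_halfStrip : interior halfStrip = Ioi 0 ×ℂ Ioo (-1) 0 := by
  rw [halfStrip, interior_reProdIm, interior_Ici, interior_Icc]

lemma ofReal_mem_halfStrip {t : ℝ} (ht : 0 ≤ t) : (t : ℂ) ∈ halfStrip := by
  simpa [mem_halfStrip] using ht

lemma ofReal_sub_I_mem_halfStrip {t : ℝ} (ht : 0 ≤ t) : (t - I : ℂ) ∈ halfStrip := by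
  simpa [mem_halfStrip] using ht

lemma neg_I_mul_mem_halfStrip {u : ℝ} (hu : u ∈ Icc 0 1) : -I * u ∈ halfStrip := by
  simpa [mem_halfStrip, and_comm] using hu

lemma norm_le_one_add_re {z : ℂ} (hz : z ∈ halfStrip) : ‖z‖ ≤ 1 + z.re := by
  obtain ⟨hre, him, him'⟩ := mem_halfStrip.1 hz
  have := Complex.norm_le_abs_re_add_abs_im z
  rw [abs_of_nonneg hre, abs_of_nonpos him'] at this
  linarith

lemma integrableOn_of_norm_le_inv_one_add_sq {E : Type*} [NormedAddCommGroup E] {F : ℝ → E}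
    {C : ℝ} (hF : ContinuousOn F (Ici 0))
    (hb : ∀ t ≥ 0, ‖F t‖ ≤ C * (1 + t ^ 2)⁻¹) : IntegrableOn F (Ioi 0) := by
  refine Integrable.mono' (integrable_inv_one_add_sq.const_mul C).integrableOn
    ((hF.mono Ioi_subset_Ici_self).aestronglyMeasurable measurableSet_Ioi) ?_
  filter_upwards [ae_restrict_mem measurableSet_Ioi] with t ht using hb t (le_of_lt ht)

lemma integral_rect_halfStrip {F : ℂ → ℂ} (hc : ContinuousOn F halfStrip)
    (hd : DifferentiableOn ℂ F (interior halfStrip)) {R : ℝ} (hR : 0 ≤ R) :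
    ∫ t in (0 : ℝ)..R, F t = -I * (∫ u in (0 : ℝ)..1, F (-I * u)) +
      (∫ t in (0 : ℝ)..R, F (t - I)) + I * ∫ v in (-1 : ℝ)..0, F (R + v * I) := by
  have hrect := Complex.integral_boundary_rect_eq_zero_of_continuousOn_of_differentiableOn F (-I) R
    (hc.mono ?_) (hd.mono ?_)
  · have hleft : ∫ v in (-1 : ℝ)..0, F (v * I) = ∫ u in (0 : ℝ)..1, F (-I * u) := by
      have := intervalIntegral.integral_comp_neg (a := 0) (b := 1) (fun v : ℝ ↦ F (v * I))
      rw [neg_zero] at this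
      rw [← this]
      refine intervalIntegral.integral_congr fun u _ ↦ congrArg F ?_
      push_cast
      ring
    simp only [neg_re, I_re, neg_zero, ofReal_re, neg_im, I_im, ofReal_im, smul_eq_mul, ofReal_neg,
      ofReal_one, neg_mul, one_mul, ofReal_zero, zero_mul, add_zero, zero_add, hleft,
      ← sub_eq_add_neg] at hrect
    rw [neg_mul]
    simp only [neg_mul] at hrect ⊢
    linear_combination -hrect
  · intro z hz
    simp only [mem_reProdIm, neg_re, I_re, neg_zero, ofReal_re, uIcc_of_le hR, neg_im, I_im,
      ofReal_im, uIcc_of_le (neg_one_lt_zero (R := ℝ)).le, Set.mem_Icc] at hz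
    exact mem_halfStrip.2 ⟨hz.1.1, hz.2⟩
  · intro z hz
    rw [interior_halfStrip]
    simp only [mem_reProdIm, neg_re, I_re, neg_zero, ofReal_re, min_eq_left hR, neg_im, I_im,
      ofReal_im, min_eq_left (neg_one_lt_zero (R := ℝ)).le,
      max_eq_right (neg_one_lt_zero (R := ℝ)).le, Set.mem_Ioo] at hz
    exact ⟨hz.1.1, hz.2⟩

lemma integral_Ioi_eq_of_halfStrip {F : ℂ → ℂ} {C : ℝ} (hc : ContinuousOn F halfStrip)
    (hd : DifferentiableOn ℂ F (interior halfStrip))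
    (hb : ∀ z ∈ halfStrip, ‖F z‖ ≤ C * (1 + z.re ^ 2)⁻¹) :
    ∫ t in Ioi (0 : ℝ), F t =
      -I * (∫ u in (0 : ℝ)..1, F (-I * u)) + ∫ t in Ioi (0 : ℝ), F (t - I) := by
  have htop : IntegrableOn (fun t : ℝ ↦ F t) (Ioi 0) :=
    integrableOn_of_norm_le_inv_one_add_sq
      (hc.comp (by fun_prop) fun t ht ↦ ofReal_mem_halfStrip ht)
      fun t ht ↦ by simpa using hb t (ofReal_mem_halfStrip ht)
  have hbot : IntegrableOn (fun t : ℝ ↦ F (t - I)) (Ioi 0) :=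
    integrableOn_of_norm_le_inv_one_add_sq
      (hc.comp (by fun_prop) fun t ht ↦ ofReal_sub_I_mem_halfStrip ht)
      fun t ht ↦ by simpa using hb (t - I) (ofReal_sub_I_mem_halfStrip ht)
  have hdecay : Tendsto (fun R : ℝ ↦ C * (1 + R ^ 2)⁻¹) atTop (𝓝 0) := by
    simpa using (tendsto_inv_atTop_zero.comp
      (tendsto_atTop_add_const_left _ 1 (tendsto_pow_atTop two_ne_zero))).const_mul C
  have hside : Tendsto (fun R : ℝ ↦ I * ∫ v in (-1 : ℝ)..0, F (R + v * I)) atTop (𝓝 0) := by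
    refine squeeze_zero_norm' ?_ hdecay
    filter_upwards [eventually_ge_atTop 0] with R hR
    have hle : ‖∫ v in (-1 : ℝ)..0, F (R + v * I)‖ ≤ C * (1 + R ^ 2)⁻¹ * |0 - (-1)| := by
      refine intervalIntegral.norm_integral_le_of_norm_le_const fun v hv ↦ ?_
      rw [uIoc_of_le (by norm_num)] at hv
      have hmem : (R + v * I : ℂ) ∈ halfStrip := by
        simpa [mem_halfStrip] using ⟨hR, hv.1.le, hv.2⟩
      simpa using hb _ hmem
    simpa using hle
  have hlim := ((intervalIntegral_tendsto_integral_Ioi 0 hbot tendsto_id).const_add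
    (-I * ∫ u in (0 : ℝ)..1, F (-I * u))).add hside
  rw [add_zero] at hlim
  refine tendsto_nhds_unique (intervalIntegral_tendsto_integral_Ioi 0 htop tendsto_id)
    (hlim.congr' ?_)
  filter_upwards [eventually_ge_atTop 0] with R hR
    using (integral_rect_halfStrip hc hd hR).symm

/-- Functions on the half-strip that are continuous, holomorphic inside and decay faster than any
power of `Re z`: the integrands whose contour may be moved. -/
structure RapidDecay (h : ℂ → ℂ) : Prop where
  continuousOn : ContinuousOn h halfStrip
  differentiableOn : DifferentiableOn ℂ h (interior halfStrip)
  bound (n : ℕ) : ∃ C, ∀ z ∈ halfStrip, ‖h z‖ * (1 + z.re) ^ n ≤ C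

/-- Functions on the half-strip that are continuous, holomorphic inside and grow at most
polynomially in `Re z`: the amplitudes that multiply a characteristic function. -/
structure PolyGrowth (D : ℂ → ℂ) : Prop where
  continuousOn : ContinuousOn D halfStrip
  differentiableOn : DifferentiableOn ℂ D (interior halfStrip)
  bound : ∃ (K : ℝ) (n : ℕ), ∀ z ∈ halfStrip, ‖D z‖ ≤ K * (1 + z.re) ^ n

lemma PolyGrowth.mul {D E : ℂ → ℂ} (hD : PolyGrowth D) (hE : PolyGrowth E) :
    PolyGrowth fun z ↦ D z * E z where
  continuousOn := hD.continuousOn.mul hE.continuousOn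
  differentiableOn := hD.differentiableOn.mul hE.differentiableOn
  bound := by
    obtain ⟨K, m, hK⟩ := hD.bound
    obtain ⟨L, n, hL⟩ := hE.bound
    refine ⟨K * L, m + n, fun z hz ↦ ?_⟩
    calc ‖D z * E z‖ ≤ (K * (1 + z.re) ^ m) * (L * (1 + z.re) ^ n) :=
          norm_mul_le_of_le (hK z hz) (hL z hz)
      _ = K * L * (1 + z.re) ^ (m + n) := by ring

lemma polyGrowth_const (c : ℂ) : PolyGrowth fun _ ↦ c :=
  ⟨continuousOn_const, differentiableOn_const c, ‖c‖, 0, fun z _ ↦ by simp⟩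

lemma polyGrowth_id : PolyGrowth fun z ↦ z :=
  ⟨continuousOn_id, differentiableOn_id, 1, 1, fun z hz ↦ by simpa using norm_le_one_add_re hz⟩

lemma PolyGrowth.add {D E : ℂ → ℂ} (hD : PolyGrowth D) (hE : PolyGrowth E) :
    PolyGrowth fun z ↦ D z + E z where
  continuousOn := hD.continuousOn.add hE.continuousOn
  differentiableOn := hD.differentiableOn.add hE.differentiableOn
  bound := by
    obtain ⟨K, m, hK⟩ := hD.bound
    obtain ⟨L, n, hL⟩ := hE.bound
    refine ⟨|K| + |L|, max m n, fun z hz ↦ (norm_add_le _ _).trans ?_⟩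
    have hre : 1 ≤ 1 + z.re := by linarith [(mem_halfStrip.1 hz).1]
    rw [add_mul]
    refine add_le_add ((hK z hz).trans ?_) ((hL z hz).trans ?_)
    · gcongr
      exacts [le_abs_self K, le_max_left m n]
    · gcongr
      exacts [le_abs_self L, le_max_right m n]

lemma PolyGrowth.const_mul {D : ℂ → ℂ} (hD : PolyGrowth D) (c : ℂ) : PolyGrowth fun z ↦ c * D z :=
  (polyGrowth_const c).mul hD

lemma RapidDecay.polyGrowth_mul {D h : ℂ → ℂ} (hh : RapidDecay h) (hD : PolyGrowth D) :
    RapidDecay fun z ↦ D z * h z where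
  continuousOn := hD.continuousOn.mul hh.continuousOn
  differentiableOn := hD.differentiableOn.mul hh.differentiableOn
  bound n := by
    obtain ⟨K, m, hK⟩ := hD.bound
    obtain ⟨C, hC⟩ := hh.bound (m + n)
    refine ⟨|K| * C, fun z hz ↦ ?_⟩
    have hre : 0 ≤ 1 + z.re := by linarith [(mem_halfStrip.1 hz).1]
    calc ‖D z * h z‖ * (1 + z.re) ^ n
        ≤ (|K| * (1 + z.re) ^ m * ‖h z‖) * (1 + z.re) ^ n := by
          rw [norm_mul]
          gcongr
          exact (hK z hz).trans (by gcongr; exact le_abs_self K)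
      _ = |K| * (‖h z‖ * (1 + z.re) ^ (m + n)) := by ring
      _ ≤ |K| * C := by gcongr; exact hC z hz

variable {h : ℂ → ℂ}

lemma RapidDecay.exists_norm_le_inv_one_add_sq (hh : RapidDecay h) :
    ∃ C, ∀ z ∈ halfStrip, ‖h z‖ ≤ C * (1 + z.re ^ 2)⁻¹ := by
  obtain ⟨C, hC⟩ := hh.bound 2
  refine ⟨C, fun z hz ↦ ?_⟩
  rw [← div_eq_mul_inv, le_div_iff₀ (by positivity)]
  refine (mul_le_mul_of_nonneg_left ?_ (norm_nonneg _)).trans (hC z hz)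
  nlinarith [(mem_halfStrip.1 hz).1]

lemma RapidDecay.integrableOn (hh : RapidDecay h) : IntegrableOn (fun t : ℝ ↦ h t) (Ioi 0) := by
  obtain ⟨C, hC⟩ := hh.exists_norm_le_inv_one_add_sq
  exact integrableOn_of_norm_le_inv_one_add_sq
    (hh.continuousOn.comp (by fun_prop) fun t ht ↦ ofReal_mem_halfStrip ht)
    fun t ht ↦ by simpa using hC t (ofReal_mem_halfStrip ht)

lemma RapidDecay.intervalIntegrable_neg_I (hh : RapidDecay h) :
    IntervalIntegrable (fun u : ℝ ↦ h (-I * u)) volume 0 1 := by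
  refine ContinuousOn.intervalIntegrable ?_
  rw [uIcc_of_le zero_le_one]
  exact hh.continuousOn.comp (by fun_prop) fun u hu ↦ neg_I_mul_mem_halfStrip hu

/-- On the segment `[0, -i]` the Fourier kernel becomes the Laplace kernel `e^{-uy}`, and on the
translated half-line it is uniformly exponentially small. -/
lemma RapidDecay.halfFourier_re_sub_laplace_isBigO (hh : RapidDecay h) :
    (fun y ↦ (halfFourier (fun t ↦ h t) y).re -
      ∫ u in (0 : ℝ)..1, Real.exp (-(u * y)) * (h (-I * u)).im) =O[atTop]
      fun y ↦ Real.exp (-y) := by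
  obtain ⟨C, hC⟩ := hh.exists_norm_le_inv_one_add_sq
  refine IsBigO.of_bound (∫ t in Ioi (0 : ℝ), C * (1 + t ^ 2)⁻¹) ?_
  filter_upwards [eventually_ge_atTop 0] with y hy
  have hkernel_diff : Differentiable ℂ fun z : ℂ ↦ exp (-I * z * y) := by fun_prop
  have hshift := integral_Ioi_eq_of_halfStrip (F := fun z ↦ exp (-I * z * y) * h z) (C := C)
    (hkernel_diff.continuous.continuousOn.mul hh.continuousOn)
    (hkernel_diff.differentiableOn.mul hh.differentiableOn) fun z hz ↦ by
      rw [norm_mul, norm_exp_neg_I_mul]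
      refine (mul_le_of_le_one_left (norm_nonneg _) ?_).trans (hC z hz)
      exact Real.exp_le_one_iff.2 (mul_nonpos_of_nonpos_of_nonneg (mem_halfStrip.1 hz).2.2 hy)
  have hkernel (u : ℝ) : exp (-I * (-I * u) * y) = (Real.exp (-(u * y)) : ℂ) := by
    rw [ofReal_exp]
    congr 1
    push_cast
    linear_combination (u * y : ℂ) * I_mul_I
  have hsegment : (-I * ∫ u in (0 : ℝ)..1, exp (-I * (-I * u) * y) * h (-I * u)).re =
      ∫ u in (0 : ℝ)..1, Real.exp (-(u * y)) * (h (-I * u)).im := by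
    have hint := hh.intervalIntegrable_neg_I.continuousOn_mul
      (g := fun u : ℝ ↦ exp (-I * (-I * u) * y)) (by fun_prop)
    rw [neg_mul, neg_re, I_mul_re, neg_neg, ← imCLM_apply,
      ← ContinuousLinearMap.intervalIntegral_comp_comm _ hint]
    exact intervalIntegral.integral_congr fun u _ ↦ by
      simp only [hkernel, imCLM_apply, im_ofReal_mul]
  rw [halfFourier, hshift, add_re, hsegment, add_sub_cancel_left, Real.norm_eq_abs,
    Real.norm_of_nonneg (Real.exp_nonneg _), mul_comm, ← integral_const_mul]
  refine (abs_re_le_norm _).trans (norm_integral_le_of_norm_le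
    ((integrable_inv_one_add_sq.const_mul C).const_mul _).integrableOn ?_)
  filter_upwards [ae_restrict_mem measurableSet_Ioi] with t ht
  rw [norm_mul, norm_exp_neg_I_mul]
  have hbt := hC _ (ofReal_sub_I_mem_halfStrip (le_of_lt ht))
  simp only [sub_re, ofReal_re, I_re, sub_zero] at hbt
  simpa using mul_le_mul_of_nonneg_left hbt (Real.exp_nonneg (-y))

end HalfStrip

section Exponent

/-- The entire function `(e^w - 1) / w`. -/
noncomputable def expQuot : ℂ → ℂ := dslope exp 0

lemma differentiable_expQuot : Differentiable ℂ expQuot := by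
  rw [← differentiableOn_univ]
  exact (Complex.differentiableOn_dslope univ_mem).2 differentiable_exp.differentiableOn

lemma mul_expQuot (w : ℂ) : w * expQuot w = exp w - 1 := by
  simpa [expQuot] using sub_smul_dslope exp 0 w

lemma hasDerivAt_mul_expQuot (w : ℂ) : HasDerivAt (fun w ↦ w * expQuot w) (exp w) w := by
  simpa only [mul_expQuot] using (hasDerivAt_exp w).sub_const 1

lemma norm_expQuot_le (w : ℂ) : ‖expQuot w‖ ≤ 1 + Real.exp w.re := by
  rcases eq_or_ne w 0 with rfl | hw
  · simp [expQuot]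
  have hconvex : Convex ℝ {z : ℂ | z.re ≤ max 0 w.re} := convex_halfSpace_re_le _
  have hmv := hconvex.norm_image_sub_le_of_norm_deriv_le (f := exp)
    (C := 1 + Real.exp w.re) (x := 0) (y := w)
    (fun z _ ↦ differentiableAt_exp) (fun z hz ↦ ?_) (by simp) (by simp)
  · rw [exp_zero, sub_zero, ← mul_expQuot, norm_mul, mul_comm] at hmv
    exact le_of_mul_le_mul_right hmv (norm_pos_iff.2 hw)
  · rw [Complex.deriv_exp, Complex.norm_exp]
    rcases le_max_iff.1 (mem_ofPred.1 hz) with h | h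
    · exact (Real.exp_le_one_iff.2 h).trans (by linarith [Real.exp_pos w.re])
    · exact (Real.exp_le_exp.2 h).trans (by linarith)

lemma norm_deriv_expQuot_le (w : ℂ) : ‖deriv expQuot w‖ ≤ 1 + Real.exp 1 * Real.exp w.re := by
  have hsphere : ∀ z ∈ Metric.sphere w 1, ‖expQuot z‖ ≤ 1 + Real.exp 1 * Real.exp w.re := by
    intro z hz
    refine (norm_expQuot_le z).trans ?_
    rw [← Real.exp_add]
    gcongr
    have := (re_le_norm (z - w)).trans (mem_sphere_iff_norm.1 hz).le
    rw [sub_re] at this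
    linarith
  simpa using Complex.norm_deriv_le_of_forall_mem_sphere_norm_le one_pos
    differentiable_expQuot.diffContOnCl hsphere

/-- The analytic continuation `(2/π) cos v / sinc v`, `v = π(a-1)/2`, of `-(a-1) tan(πa/2)` to
`a = 1`. -/
noncomputable def skewCoeff (a : ℝ) : ℝ :=
  2 / Real.pi * (Real.cos (Real.pi * (a - 1) / 2) / Real.sinc (Real.pi * (a - 1) / 2))

lemma analyticAt_sinc (v : ℝ) : AnalyticAt ℝ Real.sinc v := by
  rcases eq_or_ne v 0 with rfl | hv
  · obtain ⟨p, hp⟩ := Real.analyticAt_sin (x := 0)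
    rw [Real.sinc_eq_dslope]
    exact ⟨_, hp.has_fpower_series_dslope_fslope⟩
  · refine (Real.analyticAt_sin.div analyticAt_id hv).congr ?_
    filter_upwards [isOpen_ne.mem_nhds hv] with x hx using (Real.sinc_of_ne_zero hx).symm

lemma sin_pi_mul_half (a : ℝ) :
    Real.sin (Real.pi * a / 2) = Real.cos (Real.pi * (a - 1) / 2) := by
  rw [← Real.sin_add_pi_div_two]
  congr 1
  ring

lemma sinc_ne_zero {a : ℝ} (ha : a ∈ Ioo (0 : ℝ) 2) : Real.sinc (Real.pi * (a - 1) / 2) ≠ 0 := by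
  rcases eq_or_ne a 1 with rfl | ha1
  · simp
  have hv : Real.pi * (a - 1) / 2 ≠ 0 := by
    have := sub_ne_zero.2 ha1
    positivity
  rw [Real.sinc_of_ne_zero hv]
  refine div_ne_zero (fun h ↦ hv (Real.injOn_sin ?_ ?_ (h.trans Real.sin_zero.symm))) hv
  all_goals constructor <;> nlinarith [Real.pi_pos, ha.1, ha.2]

lemma analyticAt_skewCoeff {a : ℝ} (ha : a ∈ Ioo (0 : ℝ) 2) : AnalyticAt ℝ skewCoeff a := by
  have hv : AnalyticAt ℝ (fun a : ℝ ↦ Real.pi * (a - 1) / 2) a := by fun_prop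
  exact analyticAt_const.mul
    ((Real.analyticAt_cos.comp hv).div ((analyticAt_sinc _).comp hv) (sinc_ne_zero ha))

lemma hasDerivAt_skewCoeff {a : ℝ} (ha : a ∈ Ioo (0 : ℝ) 2) :
    HasDerivAt skewCoeff (deriv skewCoeff a) a :=
  (analyticAt_skewCoeff ha).differentiableAt.hasDerivAt

lemma exists_abs_skewCoeff_le {a₁ a₂ : ℝ} (h₁ : 0 < a₁) (h₂ : a₂ < 2) :
    ∃ C, 0 ≤ C ∧ ∀ a ∈ Icc a₁ a₂, |skewCoeff a| ≤ C ∧ |deriv skewCoeff a| ≤ C := by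
  have hsub : Icc a₁ a₂ ⊆ Ioo 0 2 := fun a ha ↦ ⟨h₁.trans_le ha.1, ha.2.trans_lt h₂⟩
  obtain ⟨C, hC⟩ := isCompact_Icc.exists_bound_of_continuousOn (f := skewCoeff)
    fun a ha ↦ (analyticAt_skewCoeff (hsub ha)).continuousAt.continuousWithinAt
  obtain ⟨C', hC'⟩ := isCompact_Icc.exists_bound_of_continuousOn (f := deriv skewCoeff)
    fun a ha ↦ (analyticAt_skewCoeff (hsub ha)).deriv.continuousAt.continuousWithinAt
  exact ⟨|C| + |C'|, by positivity, fun a ha ↦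
    ⟨(hC a ha).trans (by linarith [le_abs_self C, abs_nonneg C']),
      (hC' a ha).trans (by linarith [le_abs_self C', abs_nonneg C])⟩⟩

/-- The skewness part of the stable exponent, `tan(πa/2)(z - z^a)` continued analytically in `a`
through `a = 1`, where it is `(2/π) z log z`. -/
noncomputable def skewTerm (a : ℝ) (z : ℂ) : ℂ :=
  skewCoeff a * (z * log z * expQuot ((a - 1) * log z))

/-- The derivative of `skewTerm a z` in `a`. -/
noncomputable def skewTermDeriv (a : ℝ) (z : ℂ) : ℂ :=
  deriv skewCoeff a * (z * log z * expQuot ((a - 1) * log z)) +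
    skewCoeff a * (z * log z ^ 2 * deriv expQuot ((a - 1) * log z))

/-- The holomorphic continuation to the right half-plane of the log characteristic function
`t ↦ log φ(t; (0, 1, a, b))`, `t > 0`, of a standardized stable law. -/
noncomputable def stableExp (a b : ℝ) (z : ℂ) : ℂ := -z ^ (a : ℂ) - I * b * skewTerm a z

/-- The derivative of `stableExp a b z` in `a`. -/
noncomputable def stableExpDeriv (a b : ℝ) (z : ℂ) : ℂ :=
  -(z ^ (a : ℂ) * log z) - I * b * skewTermDeriv a z

lemma hasDerivAt_skewTerm_param {a : ℝ} (ha : a ∈ Ioo (0 : ℝ) 2) (z : ℂ) :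
    HasDerivAt (fun a ↦ skewTerm a z) (skewTermDeriv a z) a := by
  have hquot : HasDerivAt (fun a : ℝ ↦ expQuot ((a - 1) * log z))
      (deriv expQuot ((a - 1) * log z) * log z) a := by
    have hlin : HasDerivAt (fun a : ℝ ↦ ((a : ℂ) - 1) * log z) (log z) a := by
      simpa using ((hasDerivAt_id a).ofReal_comp.sub_const 1).mul_const (log z)
    exact (differentiable_expQuot _).hasDerivAt.comp a hlin
  refine ((hasDerivAt_skewCoeff ha).ofReal_comp.mul
    (hquot.const_mul (z * log z))).congr_deriv ?_
  rw [skewTermDeriv]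
  ring

lemma hasDerivAt_stableExp_param {a : ℝ} (ha : a ∈ Ioo (0 : ℝ) 2) (b : ℝ) {z : ℂ} (hz : z ≠ 0) :
    HasDerivAt (fun a ↦ stableExp a b z) (stableExpDeriv a b z) a := by
  have hpow : HasDerivAt (fun a : ℝ ↦ z ^ (a : ℂ)) (z ^ (a : ℂ) * log z) a := by
    simpa using ((hasDerivAt_id (a : ℂ)).const_cpow (Or.inl hz)).comp_ofReal
  exact hpow.neg.sub ((hasDerivAt_skewTerm_param ha z).const_mul _)

lemma hasDerivAt_stableExp_skew (a b : ℝ) (z : ℂ) :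
    HasDerivAt (fun b ↦ stableExp a b z) (-I * skewTerm a z) b := by
  have hlin : HasDerivAt (fun b : ℝ ↦ I * (b : ℂ) * skewTerm a z) (I * skewTerm a z) b := by
    simpa using ((hasDerivAt_id b).ofReal_comp.const_mul I).mul_const (skewTerm a z)
  simpa [stableExp] using hlin.const_sub (-z ^ (a : ℂ))

lemma skewTerm_of_ne_one {a : ℝ} (ha : a ∈ Ioo (0 : ℝ) 2) (ha1 : a ≠ 1) {z : ℂ} (hz : z ≠ 0) :
    skewTerm a z = Real.tan (Real.pi * a / 2) * (z - z ^ (a : ℂ)) := by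
  have hv : Real.pi * (a - 1) / 2 ≠ 0 := by
    have := sub_ne_zero.2 ha1
    positivity
  have hcoeff : skewCoeff a = -((a - 1) * Real.tan (Real.pi * a / 2)) := by
    have hcos : Real.cos (Real.pi * a / 2) = -Real.sin (Real.pi * (a - 1) / 2) := by
      rw [← Real.cos_add_pi_div_two]
      congr 1
      ring
    have hsin : Real.sin (Real.pi * (a - 1) / 2) ≠ 0 := by
      have := sinc_ne_zero ha
      rw [Real.sinc_of_ne_zero hv] at this
      exact (div_ne_zero_iff.1 this).1
    rw [skewCoeff, Real.sinc_of_ne_zero hv, Real.tan_eq_sin_div_cos, ← sin_pi_mul_half, hcos]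
    field_simp
  have hquot := mul_expQuot ((a - 1) * log z)
  have hexp : z * exp ((a - 1) * log z) = z ^ (a : ℂ) := by
    rw [cpow_def_of_ne_zero hz]
    nth_rw 1 [← exp_log hz]
    rw [← exp_add]
    congr 1
    ring
  rw [skewTerm, hcoeff]
  push_cast
  linear_combination -Complex.tan (Real.pi * a / 2) * z * hquot +
    -Complex.tan (Real.pi * a / 2) * hexp

lemma skewTerm_one (z : ℂ) : skewTerm 1 z = 2 / Real.pi * (z * log z) := by
  simp [skewTerm, skewCoeff, expQuot]

end Exponent

section ExponentBounds

lemma rpow_le_one_add {q r : ℝ} (hq : q ∈ Icc (0 : ℝ) 1) (hr : 0 ≤ r) : r ^ q ≤ 1 + r := by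
  rcases le_total r 1 with h | h
  · exact (Real.rpow_le_one hr h hq.1).trans (by linarith)
  · calc r ^ q ≤ r ^ (1 : ℝ) := Real.rpow_le_rpow_of_exponent_le h hq.2
      _ ≤ 1 + r := by rw [Real.rpow_one]; linarith

lemma norm_log_le (z : ℂ) : ‖log z‖ ≤ |Real.log ‖z‖| + Real.pi := by
  refine (norm_le_abs_re_add_abs_im _).trans ?_
  rw [log_re, log_im]
  gcongr
  exact abs_arg_le_pi z

lemma one_add_norm_log_mul_rpow_le {q : ℝ} (hq : 0 < q) (hq1 : q ≤ 1) {z : ℂ} (hz : z ≠ 0) :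
    (1 + ‖log z‖) * ‖z‖ ^ q ≤ (2 + Real.pi + 1 / q) * (1 + ‖z‖) ^ 2 := by
  set r := ‖z‖
  have hr : 0 < r := norm_pos_iff.2 hz
  have hpow : r ^ q ≤ 1 + r := rpow_le_one_add ⟨hq.le, hq1⟩ hr.le
  have hlog : |Real.log r| * r ^ q ≤ (1 + 1 / q) * (1 + r) ^ 2 := by
    have hqi : 0 < 1 / q := by positivity
    rcases le_total r 1 with h | h
    · have := (Real.abs_log_mul_self_rpow_lt r q hr h hq).le
      rw [abs_mul, abs_of_pos (Real.rpow_pos_of_pos hr q)] at this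
      nlinarith [mul_nonneg hqi.le hr.le, mul_nonneg hqi.le (sq_nonneg r)]
    · rw [abs_of_nonneg (Real.log_nonneg h)]
      calc Real.log r * r ^ q ≤ (1 + r) * (1 + r) := by
            gcongr
            linarith [Real.log_le_sub_one_of_pos hr]
        _ ≤ (1 + 1 / q) * (1 + r) ^ 2 := by nlinarith
  calc (1 + ‖log z‖) * r ^ q ≤ (1 + (|Real.log r| + Real.pi)) * r ^ q := by
        gcongr
        exact norm_log_le z
    _ = (1 + Real.pi) * r ^ q + |Real.log r| * r ^ q := by ring
    _ ≤ (1 + Real.pi) * (1 + r) ^ 2 + (1 + 1 / q) * (1 + r) ^ 2 := by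
        gcongr
        nlinarith
    _ = _ := by ring

/-- The common majorant of the constituents of the stable exponent: a power of `z` between the
`p`-th and the second, times the at most two logarithms produced by differentiating in `a`. -/
noncomputable def logWeight (p : ℝ) (z : ℂ) : ℝ := (1 + ‖log z‖) ^ 2 * (‖z‖ ^ p + ‖z‖ ^ 2)

lemma exists_logWeight_le {p q : ℝ} (hq : 0 ≤ q) (hqp : q < p) (hp1 : p ≤ 1) :
    ∃ K, 0 ≤ K ∧ ∀ z : ℂ, z ≠ 0 → logWeight p z ≤ K * (‖z‖ ^ q * (1 + ‖z‖) ^ 6) := by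
  have he : 0 < (p - q) / 2 := by linarith
  set C := 2 + Real.pi + 1 / ((p - q) / 2)
  refine ⟨2 * C ^ 2, by positivity, fun z hz ↦ ?_⟩
  have hr : 0 < ‖z‖ := norm_pos_iff.2 hz
  have hlog := one_add_norm_log_mul_rpow_le he (by linarith) hz
  set r := ‖z‖
  have hsplit : r ^ p + r ^ 2 = (r ^ ((p - q) / 2)) ^ 2 * (r ^ q * (1 + r ^ (2 - p))) := by
    rw [mul_add, mul_add, mul_one, ← Real.rpow_natCast, ← Real.rpow_natCast, ← Real.rpow_mul hr.le,
      ← Real.rpow_add hr, ← Real.rpow_add hr, ← Real.rpow_add hr]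
    congr 2 <;> push_cast <;> ring
  have htail : 1 + r ^ (2 - p) ≤ 2 * (1 + r) ^ 2 := by
    have : r ^ (2 - p) ≤ (1 + r) ^ (2 : ℝ) :=
      (Real.rpow_le_rpow hr.le (by linarith) (by linarith)).trans
        (Real.rpow_le_rpow_of_exponent_le (by linarith) (by linarith))
    rw [Real.rpow_two] at this
    nlinarith
  calc logWeight p z = (1 + ‖log z‖) ^ 2 * (r ^ p + r ^ 2) := rfl
    _ = ((1 + ‖log z‖) * r ^ ((p - q) / 2)) ^ 2 * (r ^ q * (1 + r ^ (2 - p))) := by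
        rw [hsplit]
        ring
    _ ≤ (C * (1 + r) ^ 2) ^ 2 * (r ^ q * (2 * (1 + r) ^ 2)) := by gcongr
    _ = 2 * C ^ 2 * (r ^ q * (1 + r) ^ 6) := by ring

lemma rpow_le_rpow_add_sq {p a r : ℝ} (hpa : p ≤ a) (ha : a ≤ 2) (hr : 0 < r) :
    r ^ a ≤ r ^ p + r ^ 2 := by
  rcases le_total r 1 with h | h
  · exact (Real.rpow_le_rpow_of_exponent_ge hr h hpa).trans (by nlinarith)
  · refine (Real.rpow_le_rpow_of_exponent_le h ha).trans ?_
    rw [Real.rpow_two]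
    linarith [Real.rpow_pos_of_pos hr p]

lemma exp_re_sub_one_mul_log (a : ℝ) {z : ℂ} (hz : z ≠ 0) :
    Real.exp (((a - 1 : ℂ) * log z).re) = ‖z‖ ^ (a - 1) := by
  rw [← ofReal_one, ← ofReal_sub, re_ofReal_mul, log_re, mul_comm,
    Real.rpow_def_of_pos (norm_pos_iff.2 hz)]

lemma norm_mul_one_add_mul_exp_le {p a c : ℝ} (hp : p ≤ 1) (hpa : p ≤ a) (ha : a ≤ 2) (hc : 0 ≤ c)
    {z : ℂ} (hz : z ≠ 0) :
    ‖z‖ * (1 + c * Real.exp (((a - 1 : ℂ) * log z).re)) ≤ (1 + c) * (‖z‖ ^ p + ‖z‖ ^ 2) := by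
  have hr : 0 < ‖z‖ := norm_pos_iff.2 hz
  rw [exp_re_sub_one_mul_log a hz]
  calc ‖z‖ * (1 + c * ‖z‖ ^ (a - 1)) = ‖z‖ ^ (1 : ℝ) + c * ‖z‖ ^ a := by
        rw [Real.rpow_sub_one hr.ne', Real.rpow_one]
        field_simp
    _ ≤ (‖z‖ ^ p + ‖z‖ ^ 2) + c * (‖z‖ ^ p + ‖z‖ ^ 2) := by
        gcongr
        · exact rpow_le_rpow_add_sq hp one_le_two hr
        · exact rpow_le_rpow_add_sq hpa ha hr
    _ = _ := by ring

lemma norm_cpow_le_logWeight {p a : ℝ} (hpa : p ≤ a) (ha : a ≤ 2) {z : ℂ} (hz : z ≠ 0) :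
    (1 + ‖log z‖) * ‖z ^ (a : ℂ)‖ ≤ logWeight p z := by
  rw [norm_cpow_real, logWeight]
  gcongr ?_ * ?_
  · nlinarith [norm_nonneg (log z)]
  · exact rpow_le_rpow_add_sq hpa ha (norm_pos_iff.2 hz)

lemma norm_mul_log_expQuot_le {p a : ℝ} (hp : p ≤ 1) (hpa : p ≤ a) (ha : a ≤ 2) {z : ℂ}
    (hz : z ≠ 0) : ‖z * log z * expQuot ((a - 1) * log z)‖ ≤ 2 * logWeight p z := by
  have hL := norm_nonneg (log z)
  calc ‖z * log z * expQuot ((a - 1) * log z)‖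
      ≤ ‖log z‖ * (‖z‖ * (1 + 1 * Real.exp ((a - 1) * log z).re)) := by
        rw [norm_mul, norm_mul, mul_comm ‖z‖, mul_assoc, one_mul]
        gcongr
        exact norm_expQuot_le _
    _ ≤ (1 + ‖log z‖) ^ 2 * ((1 + 1) * (‖z‖ ^ p + ‖z‖ ^ 2)) := by
        gcongr ?_ * ?_
        · nlinarith
        · exact norm_mul_one_add_mul_exp_le hp hpa ha zero_le_one hz
    _ = 2 * logWeight p z := by
        rw [logWeight]
        ring

lemma norm_mul_log_sq_deriv_expQuot_le {p a : ℝ} (hp : p ≤ 1) (hpa : p ≤ a) (ha : a ≤ 2) {z : ℂ}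
    (hz : z ≠ 0) :
    ‖z * log z ^ 2 * deriv expQuot ((a - 1) * log z)‖ ≤ (1 + Real.exp 1) * logWeight p z := by
  calc ‖z * log z ^ 2 * deriv expQuot ((a - 1) * log z)‖
      ≤ ‖log z‖ ^ 2 * (‖z‖ * (1 + Real.exp 1 * Real.exp ((a - 1) * log z).re)) := by
        rw [norm_mul, norm_mul, mul_comm ‖z‖, mul_assoc, norm_pow]
        gcongr
        exact norm_deriv_expQuot_le _
    _ ≤ (1 + ‖log z‖) ^ 2 * ((1 + Real.exp 1) * (‖z‖ ^ p + ‖z‖ ^ 2)) := by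
        gcongr ?_ ^ 2 * ?_
        · linarith
        · exact norm_mul_one_add_mul_exp_le hp hpa ha (Real.exp_nonneg 1) hz
    _ = (1 + Real.exp 1) * logWeight p z := by
        rw [logWeight]
        ring

lemma exists_norm_le_logWeight {a₁ a₂ p : ℝ} (h₁ : 0 < a₁) (h₂ : a₂ < 2) (hp : p ≤ 1)
    (hpa₁ : p ≤ a₁) : ∃ K, 0 ≤ K ∧ ∀ a ∈ Icc a₁ a₂, ∀ z : ℂ, z ≠ 0 →
      ‖z ^ (a : ℂ)‖ ≤ K * logWeight p z ∧ ‖z ^ (a : ℂ) * log z‖ ≤ K * logWeight p z ∧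
      ‖skewTerm a z‖ ≤ K * logWeight p z ∧ ‖skewTermDeriv a z‖ ≤ K * logWeight p z := by
  obtain ⟨C, hC0, hC⟩ := exists_abs_skewCoeff_le h₁ h₂
  have he := Real.exp_pos 1
  refine ⟨1 + C * 2 + C * (1 + Real.exp 1), by positivity, fun a ha z hz ↦ ?_⟩
  obtain ⟨hc, hc'⟩ := hC a ha
  have hpa : p ≤ a := hpa₁.trans ha.1
  have ha2 : a ≤ 2 := ha.2.trans h₂.le
  have hpow := norm_cpow_le_logWeight hpa ha2 hz
  have hquot := norm_mul_log_expQuot_le hp hpa ha2 hz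
  have hquot' := norm_mul_log_sq_deriv_expQuot_le hp hpa ha2 hz
  set W := logWeight p z
  have hL := mul_nonneg (norm_nonneg (log z)) (norm_nonneg (z ^ (a : ℂ)))
  have hW : 0 ≤ W := by linarith [norm_nonneg (z ^ (a : ℂ))]
  have hterm : ‖skewTerm a z‖ ≤ C * (2 * W) := by
    rw [skewTerm, norm_mul, norm_real]
    exact mul_le_mul hc hquot (norm_nonneg _) hC0
  have hderiv : ‖skewTermDeriv a z‖ ≤ C * (2 * W) + C * ((1 + Real.exp 1) * W) := by
    rw [skewTermDeriv]
    refine norm_add_le_of_le ?_ ?_ <;> rw [norm_mul, norm_real]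
    · exact mul_le_mul hc' hquot (norm_nonneg _) hC0
    · exact mul_le_mul hc hquot' (norm_nonneg _) hC0
  have hCW := mul_nonneg hC0 hW
  have heCW := mul_nonneg he.le hCW
  refine ⟨?_, ?_, ?_, ?_⟩
  · nlinarith
  · rw [norm_mul]
    nlinarith [norm_nonneg (z ^ (a : ℂ))]
  · nlinarith
  · nlinarith

lemma exists_norm_le_rpow_mul {a₁ a₂ p : ℝ} (hp : 0 < p) (hpa₁ : p < min a₁ 1) (h₂ : a₂ < 2) :
    ∃ K, 0 ≤ K ∧ ∀ a ∈ Icc a₁ a₂, ∀ z : ℂ, z ≠ 0 →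
      ‖z ^ (a : ℂ)‖ ≤ K * (‖z‖ ^ p * (1 + ‖z‖) ^ 6) ∧
      ‖z ^ (a : ℂ) * log z‖ ≤ K * (‖z‖ ^ p * (1 + ‖z‖) ^ 6) ∧
      ‖skewTerm a z‖ ≤ K * (‖z‖ ^ p * (1 + ‖z‖) ^ 6) ∧
      ‖skewTermDeriv a z‖ ≤ K * (‖z‖ ^ p * (1 + ‖z‖) ^ 6) := by
  obtain ⟨K, hK0, hK⟩ := exists_logWeight_le hp.le hpa₁ (min_le_right _ _)
  obtain ⟨L, hL0, hL⟩ := exists_norm_le_logWeight (hp.trans (hpa₁.trans_le (min_le_left _ _))) h₂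
    (min_le_right a₁ 1) (min_le_left _ _)
  refine ⟨L * K, by positivity, fun a ha z hz ↦ ?_⟩
  have hweight : L * logWeight (min a₁ 1) z ≤ L * K * (‖z‖ ^ p * (1 + ‖z‖) ^ 6) := by
    rw [mul_assoc]
    exact mul_le_mul_of_nonneg_left (hK z hz) hL0
  obtain ⟨hpow, hpowlog, hterm, hderiv⟩ := hL a ha z hz
  exact ⟨hpow.trans hweight, hpowlog.trans hweight, hterm.trans hweight, hderiv.trans hweight⟩

end ExponentBounds

section ExponentGrowth

lemma mem_slitPlane_of_mem_halfStrip {z : ℂ} (hz : z ∈ halfStrip) (hz0 : z ≠ 0) :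
    z ∈ slitPlane := by
  obtain ⟨hre, -, -⟩ := mem_halfStrip.1 hz
  refine mem_slitPlane_iff.2 (hre.lt_or_eq.imp_right fun h him ↦ hz0 ?_)
  exact Complex.ext h.symm him

lemma continuousAt_zero_of_norm_le_rpow {f : ℂ → ℂ} (hf0 : f 0 = 0) {p K : ℝ} {n : ℕ} (hp : 0 < p)
    (hb : ∀ z ≠ 0, ‖f z‖ ≤ K * (‖z‖ ^ p * (1 + ‖z‖) ^ n)) : ContinuousAt f 0 := by
  have hcont : Continuous fun z : ℂ ↦ K * (‖z‖ ^ p * (1 + ‖z‖) ^ n) := by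
    have := continuous_norm (E := ℂ) |>.rpow_const fun _ ↦ Or.inr hp.le
    fun_prop
  have hlim : Tendsto (fun z : ℂ ↦ K * (‖z‖ ^ p * (1 + ‖z‖) ^ n)) (𝓝 0) (𝓝 0) := by
    simpa [Real.zero_rpow hp.ne'] using hcont.tendsto 0
  rw [ContinuousAt, hf0]
  refine squeeze_zero_norm (fun z ↦ ?_) hlim
  rcases eq_or_ne z 0 with rfl | hz0
  · simp [hf0, Real.zero_rpow hp.ne']
  · exact hb z hz0

/-- The factor `‖z‖ ^ p` gives continuity at the branch point `0`. -/
lemma polyGrowth_of_norm_le_rpow {f : ℂ → ℂ} (hf : DifferentiableOn ℂ f slitPlane) (hf0 : f 0 = 0)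
    {p K : ℝ} {n : ℕ} (hp : 0 < p) (hK : 0 ≤ K)
    (hb : ∀ z ≠ 0, ‖f z‖ ≤ K * (‖z‖ ^ p * (1 + ‖z‖) ^ n)) : PolyGrowth f where
  differentiableOn := by
    refine hf.mono fun z hz ↦ ?_
    rw [interior_halfStrip] at hz
    exact Or.inl hz.1
  continuousOn z hz := by
    rcases eq_or_ne z 0 with rfl | hz0
    · exact (continuousAt_zero_of_norm_le_rpow hf0 hp hb).continuousWithinAt
    · exact (hf.continuousOn.continuousAt
        (isOpen_slitPlane.mem_nhds (mem_slitPlane_of_mem_halfStrip hz hz0))).continuousWithinAt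
  bound := by
    refine ⟨K * 2 ^ n, ⌈p⌉₊ + n, fun z hz ↦ ?_⟩
    have hre := (mem_halfStrip.1 hz).1
    rcases eq_or_ne z 0 with rfl | hz0
    · simpa [hf0] using by positivity
    have hpow : ‖z‖ ^ p ≤ (1 + z.re) ^ ⌈p⌉₊ := by
      calc ‖z‖ ^ p ≤ (1 + z.re) ^ p :=
            Real.rpow_le_rpow (norm_nonneg z) (norm_le_one_add_re hz) hp.le
        _ ≤ (1 + z.re) ^ (⌈p⌉₊ : ℝ) :=
            Real.rpow_le_rpow_of_exponent_le (by linarith) (Nat.le_ceil p)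
        _ = (1 + z.re) ^ ⌈p⌉₊ := Real.rpow_natCast _ _
    calc ‖f z‖ ≤ K * (‖z‖ ^ p * (1 + ‖z‖) ^ n) := hb z hz0
      _ ≤ K * ((1 + z.re) ^ ⌈p⌉₊ * (2 * (1 + z.re)) ^ n) := by
          gcongr
          linarith [norm_le_one_add_re hz]
      _ = K * 2 ^ n * (1 + z.re) ^ (⌈p⌉₊ + n) := by
          rw [mul_pow]
          ring

lemma differentiableOn_log : DifferentiableOn ℂ log slitPlane :=
  fun _ hz ↦ (differentiableAt_log hz).differentiableWithinAt

lemma differentiableOn_skewTerm (a : ℝ) : DifferentiableOn ℂ (skewTerm a) slitPlane := by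
  have hquot := differentiable_expQuot.comp_differentiableOn
    (differentiableOn_log.const_mul ((a : ℂ) - 1))
  exact ((differentiableOn_id.mul differentiableOn_log).mul hquot).const_mul _

lemma differentiableOn_skewTermDeriv (a : ℝ) :
    DifferentiableOn ℂ (skewTermDeriv a) slitPlane := by
  have hlin := differentiableOn_log.const_mul ((a : ℂ) - 1)
  have hquot' : Differentiable ℂ (deriv expQuot) := by
    rw [← differentiableOn_univ]
    exact differentiable_expQuot.differentiableOn.deriv isOpen_univ
  exact (((differentiableOn_id.mul differentiableOn_log).mul
    (differentiable_expQuot.comp_differentiableOn hlin)).const_mul _).add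
    (((differentiableOn_id.mul (differentiableOn_log.pow 2)).mul
      (hquot'.comp_differentiableOn hlin)).const_mul _)

lemma differentiableOn_cpow_const (a : ℂ) : DifferentiableOn ℂ (fun z ↦ z ^ a) slitPlane :=
  differentiableOn_id.cpow_const fun _ hz ↦ hz

variable {a : ℝ}

lemma polyGrowth_skewTerm (ha : a ∈ Ioo (0 : ℝ) 2) : PolyGrowth (skewTerm a) := by
  obtain ⟨p, hp, hpa⟩ := exists_between (lt_min ha.1 one_pos)
  obtain ⟨K, hK0, hK⟩ := exists_norm_le_rpow_mul hp hpa ha.2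
  exact polyGrowth_of_norm_le_rpow (differentiableOn_skewTerm a) (by simp [skewTerm]) hp hK0
    fun z hz ↦ (hK a ⟨le_rfl, le_rfl⟩ z hz).2.2.1

lemma polyGrowth_skewTermDeriv (ha : a ∈ Ioo (0 : ℝ) 2) : PolyGrowth (skewTermDeriv a) := by
  obtain ⟨p, hp, hpa⟩ := exists_between (lt_min ha.1 one_pos)
  obtain ⟨K, hK0, hK⟩ := exists_norm_le_rpow_mul hp hpa ha.2
  exact polyGrowth_of_norm_le_rpow (differentiableOn_skewTermDeriv a) (by simp [skewTermDeriv]) hp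
    hK0 fun z hz ↦ (hK a ⟨le_rfl, le_rfl⟩ z hz).2.2.2

lemma polyGrowth_cpow (ha : a ∈ Ioo (0 : ℝ) 2) : PolyGrowth fun z ↦ z ^ (a : ℂ) := by
  obtain ⟨p, hp, hpa⟩ := exists_between (lt_min ha.1 one_pos)
  obtain ⟨K, hK0, hK⟩ := exists_norm_le_rpow_mul hp hpa ha.2
  exact polyGrowth_of_norm_le_rpow (differentiableOn_cpow_const a)
    (zero_cpow (ofReal_ne_zero.2 ha.1.ne')) hp hK0 fun z hz ↦ (hK a ⟨le_rfl, le_rfl⟩ z hz).1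

lemma polyGrowth_cpow_mul_log (ha : a ∈ Ioo (0 : ℝ) 2) :
    PolyGrowth fun z ↦ z ^ (a : ℂ) * log z := by
  obtain ⟨p, hp, hpa⟩ := exists_between (lt_min ha.1 one_pos)
  obtain ⟨K, hK0, hK⟩ := exists_norm_le_rpow_mul hp hpa ha.2
  exact polyGrowth_of_norm_le_rpow ((differentiableOn_cpow_const a).mul differentiableOn_log)
    (by simp) hp hK0 fun z hz ↦ (hK a ⟨le_rfl, le_rfl⟩ z hz).2.1

lemma polyGrowth_stableExp (ha : a ∈ Ioo (0 : ℝ) 2) (b : ℝ) : PolyGrowth (stableExp a b) := by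
  convert ((polyGrowth_cpow ha).const_mul (-1)).add ((polyGrowth_skewTerm ha).const_mul (-(I * b)))
    using 2
  rw [stableExp]
  ring

lemma polyGrowth_stableExpDeriv (ha : a ∈ Ioo (0 : ℝ) 2) (b : ℝ) :
    PolyGrowth (stableExpDeriv a b) := by
  convert ((polyGrowth_cpow_mul_log ha).const_mul (-1)).add
    ((polyGrowth_skewTermDeriv ha).const_mul (-(I * b))) using 2
  rw [stableExpDeriv]
  ring

end ExponentGrowth

section Reality

lemma expQuot_ofReal_im (x : ℝ) : (expQuot x).im = 0 := by
  rcases eq_or_ne x 0 with rfl | hx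
  · simp [expQuot]
  · have h := congrArg im (mul_expQuot x)
    rw [im_ofReal_mul, ← ofReal_exp, ← ofReal_one, ← ofReal_sub, ofReal_im] at h
    exact (mul_eq_zero.1 h).resolve_left hx

lemma skewTerm_ofReal_im (a : ℝ) {t : ℝ} (ht : 0 ≤ t) : (skewTerm a t).im = 0 := by
  have := expQuot_ofReal_im ((a - 1) * Real.log t)
  rw [skewTerm, ← ofReal_log ht, ← ofReal_mul, ← ofReal_one, ← ofReal_sub, ← ofReal_mul,
    im_ofReal_mul, im_ofReal_mul, this, mul_zero, mul_zero]

lemma skewTermDeriv_ofReal_im {a : ℝ} (ha : a ∈ Ioo (0 : ℝ) 2) {t : ℝ} (ht : 0 ≤ t) :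
    (skewTermDeriv a t).im = 0 := by
  have hderiv := imCLM.hasFDerivAt.comp_hasDerivAt a (hasDerivAt_skewTerm_param ha t)
  have hzero : (imCLM ∘ fun a ↦ skewTerm a t) = fun _ ↦ 0 :=
    funext fun a ↦ skewTerm_ofReal_im a ht
  rw [hzero] at hderiv
  exact hderiv.unique (hasDerivAt_const a 0)

lemma stableExp_ofReal_re (a b : ℝ) {t : ℝ} (ht : 0 ≤ t) : (stableExp a b t).re = -t ^ a := by
  rw [stableExp, ← ofReal_cpow ht, sub_re, neg_re, ofReal_re, mul_assoc, I_mul_re, im_ofReal_mul,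
    skewTerm_ofReal_im a ht, mul_zero, neg_zero, sub_zero]

lemma stableExp_neg_skew (a b : ℝ) {t : ℝ} (ht : 0 ≤ t) :
    stableExp a (-b) t = conj (stableExp a b t) := by
  have hterm := conj_eq_iff_im.2 (skewTerm_ofReal_im a ht)
  simp only [stableExp, ← ofReal_cpow ht, map_sub, map_neg, map_mul, conj_ofReal, conj_I, hterm,
    ofReal_neg]
  ring

lemma stableExpDeriv_neg_skew {a : ℝ} (ha : a ∈ Ioo (0 : ℝ) 2) (b : ℝ) {t : ℝ} (ht : 0 ≤ t) :
    stableExpDeriv a (-b) t = conj (stableExpDeriv a b t) := by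
  have hterm := conj_eq_iff_im.2 (skewTermDeriv_ofReal_im ha ht)
  simp only [stableExpDeriv, ← ofReal_cpow ht, ← ofReal_log ht, map_sub, map_neg, map_mul,
    conj_ofReal, conj_I, hterm, ofReal_neg]
  ring

lemma norm_exp_stableExp_ofReal (a b : ℝ) {t : ℝ} (ht : 0 ≤ t) :
    ‖exp (stableExp a b t)‖ = Real.exp (-t ^ a) := by
  rw [Complex.norm_exp, stableExp_ofReal_re a b ht]

end Reality

section Decay

variable {a : ℝ}

lemma hasDerivAt_skewTerm (a : ℝ) {z : ℂ} (hz : z ∈ slitPlane) :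
    HasDerivAt (skewTerm a)
      (skewCoeff a * (log z * expQuot ((a - 1) * log z) + exp ((a - 1) * log z))) z := by
  set w : ℂ := (a - 1) * log z
  have hlog := hasDerivAt_log hz
  have hquot : HasDerivAt (fun z ↦ expQuot ((a - 1) * log z))
      (deriv expQuot w * ((a - 1) * z⁻¹)) z :=
    (differentiable_expQuot w).hasDerivAt.comp z (hlog.const_mul _)
  have hexp : expQuot w + w * deriv expQuot w = exp w := by
    simpa using ((hasDerivAt_id w).mul (differentiable_expQuot w).hasDerivAt).unique
      (hasDerivAt_mul_expQuot w)
  refine ((((hasDerivAt_id z).mul hlog).mul hquot).const_mul (skewCoeff a : ℂ)).congr_deriv ?_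
  have hz0 := slitPlane_ne_zero hz
  rw [← hexp]
  simp only [id_eq, Pi.mul_apply, w]
  field_simp
  ring

lemma hasDerivAt_stableExp (a b : ℝ) {z : ℂ} (hz : z ∈ slitPlane) :
    HasDerivAt (stableExp a b) (-(a * z ^ (a - 1 : ℂ)) - I * b * (skewCoeff a *
      (log z * expQuot ((a - 1) * log z) + exp ((a - 1) * log z)))) z := by
  have hpow : HasDerivAt (fun z : ℂ ↦ z ^ (a : ℂ)) (a * z ^ (a - 1 : ℂ)) z := by
    simpa using (hasDerivAt_id z).cpow_const (c := (a : ℂ)) hz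
  exact hpow.neg.sub ((hasDerivAt_skewTerm a hz).const_mul _)

lemma one_add_norm_log_le_rpow {δ : ℝ} (hδ : 0 < δ) {z : ℂ} (hz : 1 ≤ ‖z‖) :
    1 + ‖log z‖ ≤ (1 + Real.pi + 1 / δ) * ‖z‖ ^ δ := by
  have hle := Real.log_le_rpow_div (norm_nonneg z) hδ
  have hone : 1 ≤ ‖z‖ ^ δ := Real.one_le_rpow hz hδ.le
  have hlog := norm_log_le z
  rw [abs_of_nonneg (Real.log_nonneg hz)] at hlog
  rw [add_mul, one_div_mul_eq_div]
  nlinarith [Real.pi_pos]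

/-- Since `max (a - 1) 0 < a`, the derivative of the exponent is of smaller order than
the exponent itself. -/
lemma exists_norm_deriv_stableExp_le (ha : a ∈ Ioo (0 : ℝ) 2) (b : ℝ) :
    ∃ q, 0 ≤ q ∧ q < a ∧ ∃ C, 0 ≤ C ∧
      ∀ z ∈ slitPlane, 1 ≤ ‖z‖ → ‖deriv (stableExp a b) z‖ ≤ C * ‖z‖ ^ q := by
  set q := max (a - 1) 0
  have hqa : q < a := max_lt (by linarith) ha.1
  set δ := (a - q) / 2 with hδ_def
  have hδ : 0 < δ := by linarith
  refine ⟨q + δ, add_nonneg (le_max_right _ _) hδ.le, by linarith,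
    (2 + 2 * |b * skewCoeff a|) * (1 + Real.pi + 1 / δ), by positivity, fun z hz hz1 ↦ ?_⟩
  have hz0 := slitPlane_ne_zero hz
  have hpow : ‖z‖ ^ (a - 1) ≤ ‖z‖ ^ q := Real.rpow_le_rpow_of_exponent_le hz1 (le_max_left _ _)
  have hone : 1 ≤ ‖z‖ ^ q := Real.one_le_rpow hz1 (le_max_right _ _)
  have hbracket : ‖log z * expQuot ((a - 1) * log z) + exp ((a - 1) * log z)‖ ≤
      2 * ((1 + ‖log z‖) * ‖z‖ ^ q) := by
    have hquot := norm_expQuot_le ((a - 1) * log z)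
    rw [exp_re_sub_one_mul_log a hz0] at hquot
    calc _ ≤ ‖log z‖ * (1 + ‖z‖ ^ (a - 1)) + ‖z‖ ^ (a - 1) := by
          refine norm_add_le_of_le (norm_mul_le_of_le le_rfl hquot) ?_
          rw [Complex.norm_exp, exp_re_sub_one_mul_log a hz0]
      _ ≤ 2 * ((1 + ‖log z‖) * ‖z‖ ^ q) := by nlinarith [norm_nonneg (log z)]
  have hlead : ‖(a : ℂ) * z ^ (a - 1 : ℂ)‖ ≤ 2 * ((1 + ‖log z‖) * ‖z‖ ^ q) := by
    rw [← ofReal_one, ← ofReal_sub, norm_mul, norm_cpow_real, norm_real,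
      Real.norm_of_nonneg ha.1.le]
    gcongr
    · exact ha.2.le
    · nlinarith [norm_nonneg (log z)]
  calc ‖deriv (stableExp a b) z‖
      ≤ 2 * ((1 + ‖log z‖) * ‖z‖ ^ q) + |b * skewCoeff a| * (2 * ((1 + ‖log z‖) * ‖z‖ ^ q)) := by
        rw [(hasDerivAt_stableExp a b hz).deriv]
        refine norm_sub_le_of_le (by rwa [norm_neg]) ?_
        rw [← mul_assoc, norm_mul]
        gcongr ?_ * ?_
        simp [abs_mul]
    _ = (2 + 2 * |b * skewCoeff a|) * ((1 + ‖log z‖) * ‖z‖ ^ q) := by ring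
    _ ≤ (2 + 2 * |b * skewCoeff a|) * ((1 + Real.pi + 1 / δ) * ‖z‖ ^ δ * ‖z‖ ^ q) := by
        gcongr
        exact one_add_norm_log_le_rpow hδ hz1
    _ = _ := by
        rw [Real.rpow_add (norm_pos_iff.2 hz0)]
        ring

lemma norm_stableExp_sub_le {b q C : ℝ} (hq : 0 ≤ q) (hC0 : 0 ≤ C)
    (hC : ∀ z ∈ slitPlane, 1 ≤ ‖z‖ → ‖deriv (stableExp a b) z‖ ≤ C * ‖z‖ ^ q)
    {z : ℂ} (hz : z ∈ halfStrip) (hre : 1 ≤ z.re) :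
    ‖stableExp a b z - stableExp a b z.re‖ ≤ C * (1 + z.re) ^ q := by
  obtain ⟨-, him, him'⟩ := mem_halfStrip.1 hz
  have hconvex : Convex ℝ ({z.re} ×ℂ Icc (-1) 0) :=
    ((convex_singleton z.re).linear_preimage reLm).inter ((convex_Icc _ _).linear_preimage imLm)
  have hslit : ∀ w ∈ ({z.re} ×ℂ Icc (-1) 0 : Set ℂ), w ∈ slitPlane := fun w hw ↦
    Or.inl (by rw [show w.re = z.re from hw.1]; linarith)
  have hmv := hconvex.norm_image_sub_le_of_norm_deriv_le (f := stableExp a b)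
    (C := C * (1 + z.re) ^ q) (x := (z.re : ℂ)) (y := z)
    (fun w hw ↦ (hasDerivAt_stableExp a b (hslit w hw)).differentiableAt) (fun w hw ↦ ?_)
    (by simp [mem_reProdIm]) ⟨rfl, him, him'⟩
  · refine hmv.trans (mul_le_of_le_one_right (by positivity) ?_)
    have hsub : z - z.re = z.im * I := by
      linear_combination -(re_add_im z)
    rw [hsub, norm_mul, norm_I, mul_one, norm_real, Real.norm_eq_abs, abs_le]
    exact ⟨him, by linarith⟩
  · have hw_re : w.re = z.re := hw.1
    have hw_strip : w ∈ halfStrip := mem_halfStrip.2 ⟨by linarith, hw.2⟩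
    refine (hC w (hslit w hw) ?_).trans ?_
    · rw [← hw_re] at hre
      exact hre.trans (re_le_norm w)
    · rw [← hw_re]
      gcongr
      exact norm_le_one_add_re hw_strip

lemma exists_mul_rpow_le_add_rpow_half {q : ℝ} (hq : 0 ≤ q) (hqa : q < a) {C : ℝ} (hC : 0 ≤ C) :
    ∃ A, ∀ x ≥ 1, C * (1 + x) ^ q ≤ A + x ^ a / 2 := by
  have htend := tendsto_rpow_atTop (sub_pos.2 hqa)
  obtain ⟨R, hR⟩ := eventually_atTop.1 (htend.eventually_ge_atTop (2 * (C * 2 ^ q)))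
  refine ⟨C * (1 + |R|) ^ q, fun x hx ↦ ?_⟩
  have hx0 : 0 < x := by linarith
  rcases le_total R x with h | h
  · calc C * (1 + x) ^ q ≤ C * (2 * x) ^ q := by
          gcongr
          linarith
      _ = 2 * (C * 2 ^ q) * x ^ q / 2 := by
          rw [Real.mul_rpow zero_le_two hx0.le]
          ring
      _ ≤ x ^ (a - q) * x ^ q / 2 := by
          gcongr
          exact hR x h
      _ = x ^ a / 2 := by rw [← Real.rpow_add hx0, sub_add_cancel]
      _ ≤ _ := by linarith [show 0 ≤ C * (1 + |R|) ^ q by positivity]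
  · have : C * (1 + x) ^ q ≤ C * (1 + |R|) ^ q := by
      gcongr
      exact h.trans (le_abs_self R)
    linarith [Real.rpow_pos_of_pos hx0 a]

lemma exists_stableExp_re_le (ha : a ∈ Ioo (0 : ℝ) 2) (b : ℝ) :
    ∃ A, ∀ z ∈ halfStrip, (stableExp a b z).re ≤ A - z.re ^ a / 2 := by
  obtain ⟨q, hq, hqa, C, hC0, hC⟩ := exists_norm_deriv_stableExp_le ha b
  obtain ⟨A, hA⟩ := exists_mul_rpow_le_add_rpow_half hq hqa hC0
  obtain ⟨K, n, hK⟩ := (polyGrowth_stableExp ha b).bound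
  refine ⟨max A (|K| * 2 ^ n + 1), fun z hz ↦ ?_⟩
  have hre := (mem_halfStrip.1 hz).1
  rcases le_total 1 z.re with h1 | h1
  · have hdiff := (re_le_norm _).trans (norm_stableExp_sub_le hq hC0 hC hz h1)
    rw [sub_re, stableExp_ofReal_re a b hre] at hdiff
    linarith [hA z.re h1, le_max_left A (|K| * 2 ^ n + 1)]
  · have hpow : z.re ^ a ≤ 1 := Real.rpow_le_one hre h1 ha.1.le
    have hnorm : (stableExp a b z).re ≤ |K| * 2 ^ n := by
      refine (re_le_norm _).trans ((hK z hz).trans ?_)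
      gcongr
      · exact le_abs_self K
      · linarith
    linarith [le_max_right A (|K| * 2 ^ n + 1)]

lemma exists_exp_neg_rpow_mul_pow_le (ha : 0 < a) {c : ℝ} (hc : 0 < c) (n : ℕ) :
    ∃ C, ∀ x ≥ 0, Real.exp (-(c * x ^ a)) * (1 + x) ^ n ≤ C := by
  have hlim : Tendsto (fun x : ℝ ↦ Real.exp (-(c * x ^ a)) * x ^ n) atTop (𝓝 0) := by
    have := (tendsto_rpow_mul_exp_neg_mul_atTop_nhds_zero (n / a) c hc).comp
      (tendsto_rpow_atTop ha)
    refine this.congr' ?_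
    filter_upwards [eventually_ge_atTop 0] with x hx
    rw [Function.comp, ← Real.rpow_mul hx, mul_div_cancel₀ _ ha.ne', Real.rpow_natCast, neg_mul,
      mul_comm]
  obtain ⟨R, hR⟩ := eventually_atTop.1 (hlim.eventually_le_const one_pos)
  refine ⟨(1 + max R 1) ^ n, fun x hx ↦ ?_⟩
  rcases le_total (max R 1) x with h | h
  · obtain ⟨hRx, h1⟩ := max_le_iff.1 h
    calc Real.exp (-(c * x ^ a)) * (1 + x) ^ n ≤ Real.exp (-(c * x ^ a)) * (2 * x) ^ n := by
          gcongr
          linarith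
      _ = 2 ^ n * (Real.exp (-(c * x ^ a)) * x ^ n) := by
          rw [mul_pow]
          ring
      _ ≤ 2 ^ n * 1 := by
          gcongr
          exact hR x hRx
      _ ≤ (1 + max R 1) ^ n := by
          rw [mul_one]
          gcongr
          linarith [le_max_right R 1]
  · have hexp : Real.exp (-(c * x ^ a)) ≤ 1 := by
      rw [Real.exp_le_one_iff, neg_nonpos]
      positivity
    calc Real.exp (-(c * x ^ a)) * (1 + x) ^ n ≤ 1 * (1 + max R 1) ^ n := by gcongr
      _ = _ := one_mul _

lemma rapidDecay_exp_stableExp (ha : a ∈ Ioo (0 : ℝ) 2) (b : ℝ) :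
    RapidDecay fun z ↦ exp (stableExp a b z) where
  continuousOn := (polyGrowth_stableExp ha b).continuousOn.cexp
  differentiableOn := (polyGrowth_stableExp ha b).differentiableOn.cexp
  bound n := by
    obtain ⟨A, hA⟩ := exists_stableExp_re_le ha b
    obtain ⟨C, hC⟩ := exists_exp_neg_rpow_mul_pow_le ha.1 one_half_pos n
    refine ⟨Real.exp A * C, fun z hz ↦ ?_⟩
    have hre := (mem_halfStrip.1 hz).1
    calc ‖exp (stableExp a b z)‖ * (1 + z.re) ^ n
        ≤ Real.exp (A - z.re ^ a / 2) * (1 + z.re) ^ n := by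
          rw [Complex.norm_exp]
          gcongr
          exact hA z hz
      _ = Real.exp A * (Real.exp (-(1 / 2 * z.re ^ a)) * (1 + z.re) ^ n) := by
          rw [sub_eq_add_neg, Real.exp_add, one_div_mul_eq_div]
          ring
      _ ≤ Real.exp A * C := by
          gcongr
          exact hC _ hre

end Decay

section Laplace

lemma laplace_eq_inv_mul_integral (g : ℝ → ℝ) {y : ℝ} (hy : 0 < y) :
    ∫ u in (0 : ℝ)..1, Real.exp (-(u * y)) * g u =
      y⁻¹ * ∫ v in Ioi 0, Real.exp (-v) * (Ioc 0 1).indicator g (v / y) := by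
  have hscale := integral_comp_mul_right_Ioi
    (fun v ↦ Real.exp (-v) * (Ioc 0 1).indicator g (v / y)) 0 hy
  simp only [mul_div_cancel_right₀ _ hy.ne', zero_mul, smul_eq_mul] at hscale
  have hinter : Ioi (0 : ℝ) ∩ Ioc 0 1 = Ioc 0 1 :=
    inter_eq_self_of_subset_right Ioc_subset_Ioi_self
  rw [← hscale, intervalIntegral.integral_of_le zero_le_one, ← hinter,
    ← setIntegral_indicator measurableSet_Ioc, hinter]
  simp only [indicator_mul_right]

lemma abs_indicator_div_le {g w : ℝ → ℝ} (hw : ∀ u > 0, 0 ≤ w u)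
    (hg : ∀ u ∈ Ioc (0 : ℝ) 1, |g u| ≤ w u) {u : ℝ} (hu : 0 < u) :
    |(Ioc 0 1).indicator g u| ≤ w u := by
  by_cases h : u ∈ Ioc (0 : ℝ) 1
  · rw [indicator_of_mem h]
    exact hg u h
  · rw [indicator_of_notMem h, abs_zero]
    exact hw u hu

lemma one_add_abs_log_pow_le {δ : ℝ} (hδ : 0 < δ) (m : ℕ) {v : ℝ} (hv : 0 < v) :
    (1 + |Real.log v|) ^ m ≤ (1 + 1 / δ) ^ m * (v ^ (m * δ) + v ^ (-(m * δ))) := by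
  have hone : 1 + |Real.log v| ≤ (1 + 1 / δ) * Real.exp (δ * |Real.log v|) := by
    have hexp := Real.add_one_le_exp (δ * |Real.log v|)
    have hexp1 : 1 ≤ Real.exp (δ * |Real.log v|) := Real.one_le_exp (by positivity)
    have : |Real.log v| ≤ 1 / δ * Real.exp (δ * |Real.log v|) := by
      rw [one_div, ← div_eq_inv_mul, le_div_iff₀ hδ]
      linarith
    linarith
  calc (1 + |Real.log v|) ^ m ≤ ((1 + 1 / δ) * Real.exp (δ * |Real.log v|)) ^ m := by gcongr
    _ = (1 + 1 / δ) ^ m * Real.exp (m * δ * |Real.log v|) := by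
        rw [mul_pow, ← Real.exp_nat_mul, mul_assoc]
    _ ≤ _ := by
        gcongr
        rw [Real.rpow_def_of_pos hv, Real.rpow_def_of_pos hv]
        rcases abs_choice (Real.log v) with h | h <;> rw [h]
        · rw [mul_comm (Real.log v)]
          exact le_add_of_nonneg_right (Real.exp_pos _).le
        · rw [mul_neg, mul_neg, mul_comm (Real.log v)]
          exact le_add_of_nonneg_left (Real.exp_pos _).le

lemma integrableOn_exp_neg_mul_rpow_mul_log_pow {q : ℝ} (hq : -1 < q) (m : ℕ) :
    IntegrableOn (fun v ↦ Real.exp (-v) * (v ^ q * (1 + |Real.log v|) ^ m)) (Ioi 0) := by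
  set δ := (q + 1) / (m + 1) with hδ_def
  have hδ : 0 < δ := div_pos (by linarith) (by positivity)
  have hmδ : m * δ < q + 1 := by
    rw [hδ_def, mul_div_assoc', div_lt_iff₀ (by positivity)]
    linarith
  have hgamma : ∀ r : ℝ, -1 < r → IntegrableOn (fun v : ℝ ↦ Real.exp (-v) * v ^ r) (Ioi 0) :=
    fun r hr ↦ by simpa using Real.GammaIntegral_convergent (s := r + 1) (by linarith)
  have hdom : IntegrableOn (fun v : ℝ ↦ (1 + 1 / δ) ^ m *
      (Real.exp (-v) * v ^ (q + m * δ) + Real.exp (-v) * v ^ (q - m * δ))) (Ioi 0) :=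
    Integrable.const_mul ((hgamma _ (by linarith [mul_nonneg m.cast_nonneg hδ.le])).add
      (hgamma _ (by linarith))) _
  refine hdom.mono' (by fun_prop) ((ae_restrict_iff' measurableSet_Ioi).2
    (Eventually.of_forall fun v (hv : 0 < v) ↦ ?_))
  rw [Real.norm_of_nonneg (by positivity)]
  calc Real.exp (-v) * (v ^ q * (1 + |Real.log v|) ^ m)
      ≤ Real.exp (-v) * (v ^ q * ((1 + 1 / δ) ^ m * (v ^ (m * δ) + v ^ (-(m * δ))))) := by
        gcongr
        exact one_add_abs_log_pow_le hδ m hv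
    _ = _ := by
        rw [sub_eq_add_neg, Real.rpow_add hv, Real.rpow_add hv]
        ring

lemma div_rpow_mul_log_pow_le {q v y : ℝ} (m : ℕ) (hv : 0 < v) (hy : 1 ≤ y) :
    (v / y) ^ q * (1 + |Real.log (v / y)|) ^ m ≤
      y ^ (-q) * (1 + Real.log y) ^ m * (v ^ q * (1 + |Real.log v|) ^ m) := by
  have hy0 : 0 < y := by linarith
  have hlogy := Real.log_nonneg hy
  have hlog : 1 + |Real.log (v / y)| ≤ (1 + Real.log y) * (1 + |Real.log v|) := by
    rw [Real.log_div hv.ne' hy0.ne']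
    have := abs_sub (Real.log v) (Real.log y)
    rw [abs_of_nonneg hlogy] at this
    nlinarith [mul_nonneg hlogy (abs_nonneg (Real.log v))]
  calc (v / y) ^ q * (1 + |Real.log (v / y)|) ^ m
      ≤ (v / y) ^ q * ((1 + Real.log y) * (1 + |Real.log v|)) ^ m := by gcongr
    _ = _ := by
        rw [Real.div_rpow hv.le hy0.le, Real.rpow_neg hy0.le, mul_pow]
        ring

lemma laplace_isBigO {g : ℝ → ℝ} {q K : ℝ} (hq : -1 < q) (hK : 0 ≤ K) {m : ℕ}
    (hg : ∀ u ∈ Ioc (0 : ℝ) 1, |g u| ≤ K * (u ^ q * (1 + |Real.log u|) ^ m)) :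
    (fun y ↦ ∫ u in (0 : ℝ)..1, Real.exp (-(u * y)) * g u) =O[atTop]
      fun y ↦ y ^ (-(q + 1)) * (1 + Real.log y) ^ m := by
  set J := ∫ v in Ioi 0, Real.exp (-v) * (v ^ q * (1 + |Real.log v|) ^ m)
  refine IsBigO.of_bound (K * J) ?_
  filter_upwards [eventually_ge_atTop 1] with y hy
  have hy0 : 0 < y := by linarith
  have hlogy := Real.log_nonneg hy
  have hbound : ‖∫ v in Ioi 0, Real.exp (-v) * (Ioc 0 1).indicator g (v / y)‖ ≤
      ∫ v in Ioi 0, K * (y ^ (-q) * (1 + Real.log y) ^ m) *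
        (Real.exp (-v) * (v ^ q * (1 + |Real.log v|) ^ m)) := by
    refine norm_integral_le_of_norm_le
      ((integrableOn_exp_neg_mul_rpow_mul_log_pow hq m).const_mul _)
      ((ae_restrict_iff' measurableSet_Ioi).2 (Eventually.of_forall fun v (hv : 0 < v) ↦ ?_))
    have hind := abs_indicator_div_le (fun u hu ↦ by positivity) hg (div_pos hv hy0)
    rw [norm_mul, Real.norm_of_nonneg (Real.exp_pos _).le]
    calc Real.exp (-v) * ‖(Ioc 0 1).indicator g (v / y)‖
        ≤ Real.exp (-v) * (K * (y ^ (-q) * (1 + Real.log y) ^ m *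
            (v ^ q * (1 + |Real.log v|) ^ m))) := by
          gcongr
          exact hind.trans (mul_le_mul_of_nonneg_left (div_rpow_mul_log_pow_le m hv hy) hK)
      _ = _ := by ring
  rw [integral_const_mul] at hbound
  rw [laplace_eq_inv_mul_integral g hy0, norm_mul, norm_inv, Real.norm_of_nonneg hy0.le,
    Real.norm_of_nonneg (show 0 ≤ y ^ (-(q + 1)) * (1 + Real.log y) ^ m by positivity)]
  calc y⁻¹ * ‖∫ v in Ioi 0, Real.exp (-v) * (Ioc 0 1).indicator g (v / y)‖
      ≤ y⁻¹ * (K * (y ^ (-q) * (1 + Real.log y) ^ m) * J) := by gcongr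
    _ = _ := by
        rw [neg_add, Real.rpow_add hy0, Real.rpow_neg_one]
        ring

lemma tendsto_rpow_mul_indicator_div {g : ℝ → ℝ} {q L : ℝ}
    (hL : Tendsto (fun u ↦ u ^ (-q) * g u) (𝓝[>] 0) (𝓝 L)) {v : ℝ} (hv : 0 < v) :
    Tendsto (fun y : ℝ ↦ y ^ q * (Ioc 0 1).indicator g (v / y)) atTop (𝓝 (L * v ^ q)) := by
  have hdiv : Tendsto (fun y ↦ v / y) atTop (𝓝[>] 0) :=
    tendsto_nhdsWithin_iff.2 ⟨tendsto_const_nhds.div_atTop tendsto_id,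
      (eventually_gt_atTop 0).mono fun y hy ↦ div_pos hv hy⟩
  refine ((hL.comp hdiv).mul_const (v ^ q)).congr' ?_
  filter_upwards [eventually_ge_atTop v, eventually_gt_atTop 0] with y hvy hy
  have hmem : v / y ∈ Ioc (0 : ℝ) 1 := ⟨div_pos hv hy, (div_le_one hy).2 hvy⟩
  rw [indicator_of_mem hmem, Function.comp, Real.div_rpow hv.le hy.le, Real.rpow_neg hv.le,
    Real.rpow_neg hy.le]
  field_simp

/-- Watson's lemma, to leading order. -/
lemma tendsto_rpow_mul_laplace {g : ℝ → ℝ} {q K L : ℝ} (hq : -1 < q)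
    (hg_cont : ContinuousOn g (Icc 0 1)) (hg : ∀ u ∈ Ioc (0 : ℝ) 1, |g u| ≤ K * u ^ q)
    (hL : Tendsto (fun u ↦ u ^ (-q) * g u) (𝓝[>] 0) (𝓝 L)) :
    Tendsto (fun y ↦ y ^ (q + 1) * ∫ u in (0 : ℝ)..1, Real.exp (-(u * y)) * g u) atTop
      (𝓝 (L * Real.Gamma (q + 1))) := by
  have hK : 0 ≤ K := by simpa using (abs_nonneg _).trans (hg 1 ⟨one_pos, le_rfl⟩)
  have hmeas : Measurable ((Ioc 0 1).indicator g) := by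
    rw [← piecewise_eq_indicator]
    exact (hg_cont.mono Ioc_subset_Icc_self).measurable_piecewise continuousOn_const
      measurableSet_Ioc
  have hint : IntegrableOn (fun v : ℝ ↦ K * (Real.exp (-v) * v ^ q)) (Ioi 0) := by
    simpa [IntegrableOn] using (integrableOn_exp_neg_mul_rpow_mul_log_pow hq 0).const_mul K
  have hlim : Tendsto (fun y : ℝ ↦ ∫ v in Ioi 0, y ^ q *
      (Real.exp (-v) * (Ioc 0 1).indicator g (v / y))) atTop
      (𝓝 (∫ v in Ioi 0, L * (Real.exp (-v) * v ^ q))) := by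
    refine tendsto_integral_filter_of_dominated_convergence _
      (Eventually.of_forall fun y ↦ by fun_prop) ?_ hint ?_
    · filter_upwards [eventually_gt_atTop 0] with y hy
      refine (ae_restrict_iff' measurableSet_Ioi).2 (Eventually.of_forall fun v (hv : 0 < v) ↦ ?_)
      have hind := abs_indicator_div_le (fun u hu ↦ by positivity) hg (div_pos hv hy)
      rw [norm_mul, norm_mul, Real.norm_of_nonneg (by positivity),
        Real.norm_of_nonneg (Real.exp_pos _).le]
      calc y ^ q * (Real.exp (-v) * ‖(Ioc 0 1).indicator g (v / y)‖)
          ≤ y ^ q * (Real.exp (-v) * (K * (v / y) ^ q)) := by gcongr; exact hind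
        _ = K * (Real.exp (-v) * v ^ q) := by
            rw [Real.div_rpow hv.le hy.le]
            field_simp
    · refine (ae_restrict_iff' measurableSet_Ioi).2 (Eventually.of_forall fun v (hv : 0 < v) ↦ ?_)
      simpa only [mul_left_comm] using
        (tendsto_rpow_mul_indicator_div hL hv).const_mul (Real.exp (-v))
  rw [integral_const_mul, show ∫ v in Ioi 0, Real.exp (-v) * v ^ q = Real.Gamma (q + 1) by
    rw [Real.Gamma_eq_integral (by linarith), add_sub_cancel_right]] at hlim
  refine hlim.congr' ?_
  filter_upwards [eventually_gt_atTop 0] with y hy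
  rw [laplace_eq_inv_mul_integral g hy, integral_const_mul, Real.rpow_add hy, Real.rpow_one]
  field_simp

end Laplace

section ImaginaryAxis

variable {a u : ℝ}

lemma log_neg_I_mul_ofReal (hu : 0 < u) : log (-I * u) = Real.log u - Real.pi / 2 * I := by
  rw [log_mul_ofReal u hu _ (neg_ne_zero.2 I_ne_zero), log_neg_I]
  ring

lemma neg_I_mul_ofReal_ne_zero (hu : 0 < u) : -I * u ≠ 0 :=
  mul_ne_zero (neg_ne_zero.2 I_ne_zero) (ofReal_ne_zero.2 hu.ne')

lemma neg_I_mul_cpow (a : ℝ) (hu : 0 < u) :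
    (-I * u) ^ (a : ℂ) = (u ^ a : ℝ) *
      (Real.cos (Real.pi * a / 2) - Real.sin (Real.pi * a / 2) * I : ℂ) := by
  rw [cpow_def_of_ne_zero (neg_I_mul_ofReal_ne_zero hu), log_neg_I_mul_ofReal hu,
    Real.rpow_def_of_pos hu, ofReal_exp, ofReal_mul,
    show ((Real.log u : ℂ) - Real.pi / 2 * I) * a =
      Real.log u * a + (-(Real.pi * a / 2) : ℝ) * I by push_cast; ring,
    exp_add, exp_mul_I, ← ofReal_cos, ← ofReal_sin, Real.cos_neg, Real.sin_neg]
  push_cast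
  ring

lemma neg_I_mul_cpow_re (a : ℝ) (hu : 0 < u) :
    ((-I * u) ^ (a : ℂ)).re = Real.cos (Real.pi * a / 2) * u ^ a := by
  rw [neg_I_mul_cpow a hu, re_ofReal_mul, sub_re, ofReal_re, re_ofReal_mul, I_re, mul_zero,
    sub_zero, mul_comm]

lemma neg_I_mul_cpow_im (a : ℝ) (hu : 0 < u) :
    ((-I * u) ^ (a : ℂ)).im = -(Real.sin (Real.pi * a / 2) * u ^ a) := by
  rw [neg_I_mul_cpow a hu, im_ofReal_mul, sub_im, ofReal_im, im_ofReal_mul, I_im, mul_one,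
    zero_sub, mul_neg, mul_comm]

lemma skewTerm_neg_I_mul_re (ha : a ∈ Ioo (0 : ℝ) 2) (hu : 0 < u) :
    (skewTerm a (-I * u)).re = -(Real.sin (Real.pi * a / 2) * u ^ a) := by
  rcases eq_or_ne a 1 with rfl | ha1
  · have hreal : skewTerm 1 (-I * u) = (-u : ℝ) + (-(2 / Real.pi * u * Real.log u) : ℝ) * I := by
      rw [skewTerm_one, log_neg_I_mul_ofReal hu]
      push_cast
      field_simp
      linear_combination (Real.pi * u : ℂ) * I_sq
    rw [hreal, add_re, ofReal_re, re_ofReal_mul, I_re, mul_zero, add_zero, mul_one,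
      Real.sin_pi_div_two, one_mul, Real.rpow_one]
  · have hcos : Real.cos (Real.pi * a / 2) ≠ 0 := by
      intro h
      obtain ⟨n, hn⟩ := Real.cos_eq_zero_iff.1 h
      have han : a = 2 * n + 1 := by
        field_simp at hn
        linarith
      have h0 : -1 < n := by exact_mod_cast (by linarith [ha.1] : (-1 : ℝ) < n)
      have h2 : n < 1 := by exact_mod_cast (by linarith [ha.2] : (n : ℝ) < 1)
      exact ha1 (by simpa [show n = 0 by omega] using han)
    rw [skewTerm_of_ne_one ha ha1 (neg_I_mul_ofReal_ne_zero hu), re_ofReal_mul, sub_re,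
      neg_I_mul_cpow_re a hu, neg_mul, neg_re, I_mul_re, ofReal_im, neg_zero, neg_zero, zero_sub,
      Real.tan_eq_sin_div_cos]
    field_simp

lemma stableExp_neg_I_mul_im (ha : a ∈ Ioo (0 : ℝ) 2) (b : ℝ) (hu : 0 < u) :
    (stableExp a b (-I * u)).im = (1 + b) * (Real.sin (Real.pi * a / 2) * u ^ a) := by
  rw [stableExp, sub_im, neg_im, neg_I_mul_cpow_im a hu, mul_assoc I, I_mul_im, re_ofReal_mul,
    skewTerm_neg_I_mul_re ha hu]
  ring

lemma stableExpDeriv_neg_I_mul_im (ha : a ∈ Ioo (0 : ℝ) 2) (b : ℝ) (hu : 0 < u) :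
    (stableExpDeriv a b (-I * u)).im = (1 + b) * (Real.pi / 2 * Real.cos (Real.pi * a / 2) +
      Real.sin (Real.pi * a / 2) * Real.log u) * u ^ a := by
  have hlhs : HasDerivAt (fun a ↦ (stableExp a b (-I * u)).im)
      (stableExpDeriv a b (-I * u)).im a :=
    imCLM.hasFDerivAt.comp_hasDerivAt a
      (hasDerivAt_stableExp_param ha b (neg_I_mul_ofReal_ne_zero hu))
  have hsin : HasDerivAt (fun a ↦ Real.sin (Real.pi * a / 2))
      (Real.cos (Real.pi * a / 2) * (Real.pi / 2)) a := by
    refine (Real.hasDerivAt_sin _).comp a ?_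
    simpa using ((hasDerivAt_id a).const_mul Real.pi).div_const 2
  have hrhs : HasDerivAt (fun a ↦ (1 + b) * (Real.sin (Real.pi * a / 2) * u ^ a))
      ((1 + b) * (Real.pi / 2 * Real.cos (Real.pi * a / 2) +
        Real.sin (Real.pi * a / 2) * Real.log u) * u ^ a) a := by
    refine ((hsin.mul (Real.hasStrictDerivAt_const_rpow hu a).hasDerivAt).const_mul
      (1 + b)).congr_deriv ?_
    ring
  refine hlhs.unique (hrhs.congr_of_eventuallyEq ?_)
  filter_upwards [isOpen_Ioo.mem_nhds ha] with a' ha' using stableExp_neg_I_mul_im ha' b hu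

lemma PolyGrowth.exists_norm_neg_I_mul_le {D : ℂ → ℂ} (hD : PolyGrowth D) :
    ∃ C, 0 ≤ C ∧ ∀ u ∈ Icc (0 : ℝ) 1, ‖D (-I * u)‖ ≤ C := by
  obtain ⟨K, n, hK⟩ := hD.bound
  have hle (u : ℝ) (hu : u ∈ Icc (0 : ℝ) 1) : ‖D (-I * u)‖ ≤ K := by
    simpa using hK _ (neg_I_mul_mem_halfStrip hu)
  exact ⟨K, (norm_nonneg _).trans (hle 0 (by simp)), hle⟩

lemma exists_norm_exp_stableExp_neg_I_mul_le (ha : a ∈ Ioo (0 : ℝ) 2) (b : ℝ) :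
    ∃ C, 0 ≤ C ∧ ∀ u ∈ Ioc (0 : ℝ) 1, ‖exp (stableExp a b (-I * u))‖ ≤ C ∧
      |(exp (stableExp a b (-I * u))).im| ≤ C * u ^ a := by
  obtain ⟨A, -, hA⟩ := (polyGrowth_stableExp ha b).exists_norm_neg_I_mul_le
  have hexp (u : ℝ) (hu : u ∈ Ioc (0 : ℝ) 1) : ‖exp (stableExp a b (-I * u))‖ ≤ Real.exp A := by
    rw [Complex.norm_exp]
    exact Real.exp_le_exp.2 ((re_le_norm _).trans (hA u ⟨hu.1.le, hu.2⟩))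
  refine ⟨Real.exp A * (1 + |1 + b|), by positivity, fun u hu ↦
    ⟨(hexp u hu).trans (le_mul_of_one_le_right (Real.exp_nonneg A) (by simp)), ?_⟩⟩
  have hpow : 0 < u ^ a := Real.rpow_pos_of_pos hu.1 a
  calc |(exp (stableExp a b (-I * u))).im|
      = ‖exp (stableExp a b (-I * u))‖ * |Real.sin (stableExp a b (-I * u)).im| := by
        rw [exp_im, Complex.norm_exp, abs_mul, Real.abs_exp]
    _ ≤ Real.exp A * |(1 + b) * (Real.sin (Real.pi * a / 2) * u ^ a)| := by
        rw [← stableExp_neg_I_mul_im ha b hu.1]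
        exact mul_le_mul (hexp u hu) Real.abs_sin_le_abs (abs_nonneg _) (Real.exp_nonneg A)
    _ ≤ Real.exp A * (|1 + b| * (1 * u ^ a)) := by
        rw [abs_mul, abs_mul, abs_of_pos hpow]
        gcongr
        exact Real.abs_sin_le_one _
    _ ≤ Real.exp A * (1 + |1 + b|) * u ^ a := by
        rw [one_mul, ← mul_assoc]
        gcongr
        linarith

/-- Amplitudes `D` whose imaginary part on `[0, -i]` is `O(u^a |log u|^m)` at `-iu`. Together with
the behaviour of the exponent, `m` determines the tail of the Fourier integral of `D e^Ψ`. -/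
structure TailAmplitude (a : ℝ) (m : ℕ) (D : ℂ → ℂ) : Prop where
  polyGrowth : PolyGrowth D
  im_bound : ∃ K, 0 ≤ K ∧ ∀ u ∈ Ioc (0 : ℝ) 1,
    |(D (-I * u)).im| ≤ K * (u ^ a * (1 + |Real.log u|) ^ m)

lemma tailAmplitude_one (a : ℝ) : TailAmplitude a 0 fun _ ↦ 1 :=
  ⟨polyGrowth_const 1, 0, le_rfl, by simp⟩

lemma TailAmplitude.neg {m : ℕ} {D : ℂ → ℂ} (hD : TailAmplitude a m D) :
    TailAmplitude a m fun z ↦ -D z where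
  polyGrowth := by simpa using hD.polyGrowth.const_mul (-1)
  im_bound := by simpa using hD.im_bound

lemma tailAmplitude_skew (ha : a ∈ Ioo (0 : ℝ) 2) :
    TailAmplitude a 0 fun z ↦ -I * skewTerm a z where
  polyGrowth := (polyGrowth_skewTerm ha).const_mul _
  im_bound := ⟨1, zero_le_one, fun u hu ↦ by
    have hpow : 0 < u ^ a := Real.rpow_pos_of_pos hu.1 a
    rw [neg_mul, neg_im, I_mul_im, skewTerm_neg_I_mul_re ha hu.1, neg_neg, abs_mul,
      abs_of_pos hpow, pow_zero, mul_one]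
    gcongr
    exact Real.abs_sin_le_one _⟩

lemma tailAmplitude_stableExpDeriv (ha : a ∈ Ioo (0 : ℝ) 2) (b : ℝ) :
    TailAmplitude a 1 (stableExpDeriv a b) where
  polyGrowth := polyGrowth_stableExpDeriv ha b
  im_bound := ⟨|1 + b| * (Real.pi / 2), by positivity, fun u hu ↦ by
    have hpow : 0 < u ^ a := Real.rpow_pos_of_pos hu.1 a
    have hcos := Real.abs_cos_le_one (Real.pi * a / 2)
    have hsin := Real.abs_sin_le_one (Real.pi * a / 2)
    have hpi : 1 ≤ Real.pi / 2 := by linarith [Real.pi_gt_three]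
    have htrig : |Real.pi / 2 * Real.cos (Real.pi * a / 2) +
        Real.sin (Real.pi * a / 2) * Real.log u| ≤ Real.pi / 2 * (1 + |Real.log u|) := by
      refine (abs_add_le _ _).trans ?_
      rw [abs_mul, abs_mul, abs_of_pos Real.pi_div_two_pos, mul_add]
      gcongr
      exact hsin.trans hpi
    rw [stableExpDeriv_neg_I_mul_im ha b hu.1, abs_mul, abs_mul, abs_of_pos hpow, pow_one]
    calc _ ≤ |1 + b| * (Real.pi / 2 * (1 + |Real.log u|)) * u ^ a := by gcongr
      _ = _ := by ring⟩

lemma TailAmplitude.mul_exp_stableExp_bound {m : ℕ} {D : ℂ → ℂ} (hD : TailAmplitude a m D)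
    (ha : a ∈ Ioo (0 : ℝ) 2) (b : ℝ) :
    ∃ K, 0 ≤ K ∧ ∀ u ∈ Ioc (0 : ℝ) 1,
      |(D (-I * u) * exp (stableExp a b (-I * u))).im| ≤
        K * (u ^ a * (1 + |Real.log u|) ^ m) := by
  obtain ⟨K, hK0, hK⟩ := hD.im_bound
  obtain ⟨A, hA0, hA⟩ := hD.polyGrowth.exists_norm_neg_I_mul_le
  obtain ⟨C, hC0, hC⟩ := exists_norm_exp_stableExp_neg_I_mul_le ha b
  refine ⟨A * C + K * C, by positivity, fun u hu ↦ ?_⟩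
  obtain ⟨hnorm, him⟩ := hC u hu
  have hpow : 0 < u ^ a := Real.rpow_pos_of_pos hu.1 a
  have hlog : 1 ≤ (1 + |Real.log u|) ^ m := one_le_pow₀ (by linarith [abs_nonneg (Real.log u)])
  rw [mul_im]
  calc _ ≤ |(D (-I * u)).re| * |(exp (stableExp a b (-I * u))).im| +
        |(D (-I * u)).im| * |(exp (stableExp a b (-I * u))).re| := by
        rw [← abs_mul, ← abs_mul]
        exact abs_add_le _ _
    _ ≤ A * (C * (u ^ a * (1 + |Real.log u|) ^ m)) +
        K * (u ^ a * (1 + |Real.log u|) ^ m) * C := by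
        gcongr
        · exact (abs_re_le_norm _).trans (hA u ⟨hu.1.le, hu.2⟩)
        · refine him.trans ?_
          gcongr
          exact le_mul_of_one_le_right hpow.le hlog
        · exact hK u hu
        · exact (abs_re_le_norm _).trans hnorm
    _ = _ := by ring

end ImaginaryAxis

section StableIntegral

/-- The one-sided Fourier integral `Re ∫₀^∞ e^{-ity} D(t) e^{Ψ(t)} dt` of the amplitude `D` against
a standardized stable characteristic function. -/
noncomputable def stableIntegral (a b : ℝ) (D : ℂ → ℂ) (y : ℝ) : ℝ :=
  (halfFourier (fun t ↦ D t * exp (stableExp a b t)) y).re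

variable {a : ℝ} {D : ℂ → ℂ}

lemma stableIntegral_neg {b : ℝ} {D' : ℂ → ℂ} (hD : ∀ t : ℝ, 0 < t → D' t = conj (D t)) (y : ℝ) :
    stableIntegral a b D (-y) = stableIntegral a (-b) D' y := by
  rw [stableIntegral, stableIntegral, ← conj_re, halfFourier, halfFourier, ← integral_conj]
  congr 1
  refine setIntegral_congr_fun measurableSet_Ioi fun t (ht : 0 < t) ↦ ?_
  simp only [map_mul, ← exp_conj, stableExp_neg_skew a b ht.le, hD t ht]
  simp

lemma stableIntegral_const_mul (a b c : ℝ) (D : ℂ → ℂ) (y : ℝ) :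
    stableIntegral a b (fun z ↦ c * D z) y = c * stableIntegral a b D y := by
  rw [stableIntegral, stableIntegral, halfFourier, halfFourier, ← re_ofReal_mul,
    ← integral_const_mul]
  congr 2
  ext t
  ring

lemma stableIntegral_sub_laplace_isBigO (ha : a ∈ Ioo (0 : ℝ) 2) (b : ℝ) (hD : PolyGrowth D) :
    (fun y ↦ stableIntegral a b D y - ∫ u in (0 : ℝ)..1,
      Real.exp (-(u * y)) * (D (-I * u) * exp (stableExp a b (-I * u))).im) =O[atTop]
      fun y ↦ Real.exp (-y) :=
  ((rapidDecay_exp_stableExp ha b).polyGrowth_mul hD).halfFourier_re_sub_laplace_isBigO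

lemma polyGrowth_I_mul_pow (k : ℕ) : PolyGrowth fun z ↦ (I * z) ^ k := by
  induction k with
  | zero => simpa using polyGrowth_const 1
  | succ k ih => simpa only [pow_succ] using ih.mul (polyGrowth_id.const_mul I)

lemma exp_neg_isBigO_rpow_mul_log_pow (s : ℝ) (m : ℕ) :
    (fun y : ℝ ↦ Real.exp (-y)) =O[atTop] fun y ↦ y ^ s * (1 + Real.log y) ^ m := by
  have hexp := (isLittleO_exp_neg_mul_rpow_atTop one_pos s).isBigO
  simp only [neg_mul, one_mul] at hexp
  refine hexp.trans (IsBigO.of_bound 1 ?_)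
  filter_upwards [eventually_ge_atTop 1] with y hy
  rw [norm_mul, one_mul]
  refine le_mul_of_one_le_right (norm_nonneg _) ((one_le_pow₀ ?_).trans (Real.le_norm_self _))
  linarith [Real.log_nonneg hy]

lemma TailAmplitude.stableIntegral_isBigO_atTop {m : ℕ} (hD : TailAmplitude a m D)
    (ha : a ∈ Ioo (0 : ℝ) 2) (b : ℝ) (k : ℕ) :
    stableIntegral a b (fun z ↦ (I * z) ^ k * D z) =O[atTop]
      fun y ↦ y ^ (-(a + k + 1)) * (1 + Real.log y) ^ m := by
  obtain ⟨K, hK0, hK⟩ := hD.mul_exp_stableExp_bound ha b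
  have hbound : ∀ u ∈ Ioc (0 : ℝ) 1,
      |((I * (-I * u)) ^ k * D (-I * u) * exp (stableExp a b (-I * u))).im| ≤
        K * (u ^ (a + k) * (1 + |Real.log u|) ^ m) := fun u hu ↦ by
    have hreal : I * (-I * u) = u := by linear_combination -(u : ℂ) * I_sq
    rw [hreal, mul_assoc, ← ofReal_pow, im_ofReal_mul, abs_mul, abs_of_pos (pow_pos hu.1 k),
      Real.rpow_add hu.1, Real.rpow_natCast]
    calc _ ≤ u ^ k * (K * (u ^ a * (1 + |Real.log u|) ^ m)) :=
          mul_le_mul_of_nonneg_left (hK u hu) (pow_pos hu.1 k).le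
      _ = _ := by ring
  have hq : -1 < a + k := by linarith [ha.1, k.cast_nonneg (α := ℝ)]
  refine (((stableIntegral_sub_laplace_isBigO ha b
    ((polyGrowth_I_mul_pow k).mul hD.polyGrowth)).trans
      (exp_neg_isBigO_rpow_mul_log_pow _ m)).add (laplace_isBigO hq hK0 hbound)).congr_left
    fun y ↦ sub_add_cancel _ _

lemma TailAmplitude.stableIntegral_isBigO {m : ℕ} {D' : ℂ → ℂ} (hD : TailAmplitude a m D)
    (hD' : TailAmplitude a m D') (hconj : ∀ t : ℝ, 0 < t → D' t = conj (D t))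
    (ha : a ∈ Ioo (0 : ℝ) 2) (b : ℝ) (k : ℕ) :
    stableIntegral a b (fun z ↦ (I * z) ^ k * D z) =O[cobounded ℝ]
      fun y ↦ |y| ^ (-(a + k + 1)) * (1 + Real.log |y|) ^ m := by
  rw [IsOrderBornology.cobounded_eq]
  refine IsBigO.sup ?_ ?_
  · have hreflect (y : ℝ) : stableIntegral a b (fun z ↦ (I * z) ^ k * D z) y =
        (-1) ^ k * stableIntegral a (-b) (fun z ↦ (I * z) ^ k * D' z) (-y) := by
      rw [← stableIntegral_const_mul, stableIntegral_neg (D' := fun z ↦ (I * z) ^ k * D z),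
        neg_neg]
      intro t ht
      simp only [hconj t ht, map_mul, map_pow, conj_I, conj_ofReal, ofReal_pow, ofReal_neg,
        ofReal_one, conj_conj, map_neg, map_one]
      rw [← mul_assoc, ← mul_pow]
      ring
    have htail := ((hD'.stableIntegral_isBigO_atTop ha (-b) k).comp_tendsto
      tendsto_neg_atBot_atTop).const_mul_left ((-1) ^ k)
    refine (htail.congr_left fun y ↦ (hreflect y).symm).congr' EventuallyEq.rfl ?_
    filter_upwards [eventually_le_atBot 0] with y hy
    rw [Function.comp, abs_of_nonpos hy]
  · refine (hD.stableIntegral_isBigO_atTop ha b k).congr' EventuallyEq.rfl ?_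
    filter_upwards [eventually_ge_atTop 0] with y hy
    rw [abs_of_nonneg hy]

lemma continuousOn_stableExp_neg_I_mul (ha : a ∈ Ioo (0 : ℝ) 2) (b : ℝ) :
    ContinuousOn (fun u : ℝ ↦ stableExp a b (-I * u)) (Icc 0 1) :=
  (polyGrowth_stableExp ha b).continuousOn.comp (by fun_prop)
    fun u hu ↦ neg_I_mul_mem_halfStrip hu

lemma sin_eq_mul_sinc (x : ℝ) : Real.sin x = x * Real.sinc x := by
  rcases eq_or_ne x 0 with rfl | h
  · simp
  · rw [Real.sinc_of_ne_zero h, mul_div_cancel₀ _ h]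

lemma tendsto_rpow_neg_mul_exp_stableExp_im (ha : a ∈ Ioo (0 : ℝ) 2) (b : ℝ) :
    Tendsto (fun u : ℝ ↦ u ^ (-a) * (exp (stableExp a b (-I * u))).im) (𝓝[>] 0)
      (𝓝 ((1 + b) * Real.sin (Real.pi * a / 2))) := by
  set c := (1 + b) * Real.sin (Real.pi * a / 2)
  have hΨ : Tendsto (fun u : ℝ ↦ stableExp a b (-I * u)) (𝓝[>] 0) (𝓝 0) := by
    have h0 : stableExp a b (-I * (0 : ℝ)) = 0 := by
      simp [stableExp, skewTerm, zero_cpow (ofReal_ne_zero.2 ha.1.ne')]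
    rw [← h0, ← nhdsWithin_Ioo_eq_nhdsGT one_pos]
    exact (continuousOn_stableExp_neg_I_mul ha b 0 (by simp)).mono Ioo_subset_Icc_self
  have hpow : Tendsto (fun u : ℝ ↦ u ^ a) (𝓝[>] 0) (𝓝 0) := by
    simpa [Real.zero_rpow ha.1.ne'] using
      ((Real.continuous_rpow_const ha.1.le).tendsto 0).mono_left nhdsWithin_le_nhds
  have hsinc := (Real.continuous_sinc.tendsto (c * 0)).comp (hpow.const_mul c)
  have hre := (Real.continuous_exp.tendsto _).comp ((continuous_re.tendsto 0).comp hΨ)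
  have hprod := hre.mul (hsinc.const_mul c)
  simp only [zero_re, Real.exp_zero, one_mul, mul_zero, Real.sinc_zero, mul_one] at hprod
  refine hprod.congr' ?_
  filter_upwards [self_mem_nhdsWithin] with u (hu : 0 < u)
  simp only [Function.comp, exp_im, stableExp_neg_I_mul_im ha b hu]
  rw [← mul_assoc (1 + b), show (1 + b) * Real.sin (Real.pi * a / 2) = c from rfl,
    sin_eq_mul_sinc (c * u ^ a), Real.rpow_neg hu.le]
  field_simp

lemma tendsto_rpow_mul_stableIntegral_one (ha : a ∈ Ioo (0 : ℝ) 2) (b : ℝ) :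
    Tendsto (fun y ↦ y ^ (a + 1) * stableIntegral a b (fun _ ↦ 1) y) atTop
      (𝓝 ((1 + b) * Real.sin (Real.pi * a / 2) * Real.Gamma (a + 1))) := by
  obtain ⟨K, -, hK⟩ := (tailAmplitude_one a).mul_exp_stableExp_bound ha b
  simp only [pow_zero, mul_one, one_mul] at hK
  have hlaplace := tendsto_rpow_mul_laplace (by linarith [ha.1])
    (continuous_im.comp_continuousOn (continuousOn_stableExp_neg_I_mul ha b).cexp) hK
    (tendsto_rpow_neg_mul_exp_stableExp_im ha b)
  have herror := (isBigO_refl (fun y : ℝ ↦ y ^ (a + 1)) atTop).mul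
    (stableIntegral_sub_laplace_isBigO ha b (polyGrowth_const 1))
  have hexp : Tendsto (fun y : ℝ ↦ y ^ (a + 1) * Real.exp (-y)) atTop (𝓝 0) := by
    simpa using tendsto_rpow_mul_exp_neg_mul_atTop_nhds_zero (a + 1) 1 one_pos
  have hsum := (herror.trans_tendsto hexp).add hlaplace
  rw [zero_add] at hsum
  refine hsum.congr fun y ↦ ?_
  simp only [one_mul, Function.comp]
  rw [← mul_add, sub_add_cancel]

lemma exists_le_stableIntegral_one_atTop (ha : a ∈ Ioo (0 : ℝ) 2) {b : ℝ} (hb : -1 < b) :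
    ∃ c > 0, ∀ᶠ y in atTop, c * y ^ (-(a + 1)) ≤ stableIntegral a b (fun _ ↦ 1) y := by
  set L := (1 + b) * Real.sin (Real.pi * a / 2) * Real.Gamma (a + 1)
  have hL : 0 < L := by
    refine mul_pos (mul_pos (by linarith) (Real.sin_pos_of_pos_of_lt_pi ?_ ?_))
      (Real.Gamma_pos_of_pos (by linarith [ha.1]))
    · nlinarith [ha.1, Real.pi_pos]
    · nlinarith [ha.2, Real.pi_pos]
  refine ⟨L / 2, half_pos hL, ?_⟩
  filter_upwards [(tendsto_rpow_mul_stableIntegral_one ha b).eventually_const_le (half_lt_self hL),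
    eventually_gt_atTop 0] with y hle hy
  have hpow : 0 < y ^ (a + 1) := Real.rpow_pos_of_pos hy _
  rw [Real.rpow_neg hy.le, ← div_eq_mul_inv, div_le_iff₀ hpow]
  linarith

lemma exists_le_stableIntegral_one (ha : a ∈ Ioo (0 : ℝ) 2) {b : ℝ}
    (hb : b ∈ Ioo (-1 : ℝ) 1) :
    ∃ c > 0, ∀ᶠ y in cobounded ℝ, c * |y| ^ (-(a + 1)) ≤ stableIntegral a b (fun _ ↦ 1) y := by
  obtain ⟨c₁, hc₁, h₁⟩ := exists_le_stableIntegral_one_atTop ha hb.1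
  obtain ⟨c₂, hc₂, h₂⟩ := exists_le_stableIntegral_one_atTop ha (neg_lt_neg hb.2)
  refine ⟨min c₁ c₂, lt_min hc₁ hc₂, ?_⟩
  rw [IsOrderBornology.cobounded_eq, eventually_sup]
  constructor
  · filter_upwards [tendsto_neg_atBot_atTop.eventually h₂, eventually_le_atBot 0] with y hy hy0
    rw [abs_of_nonpos hy0, ← neg_neg y, stableIntegral_neg (D' := fun _ ↦ 1) (by simp), neg_neg]
    exact (mul_le_mul_of_nonneg_right (min_le_right _ _)
      (Real.rpow_nonneg (neg_nonneg.2 hy0) _)).trans hy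
  · filter_upwards [h₁, eventually_ge_atTop 0] with y hy hy0
    rw [abs_of_nonneg hy0]
    exact (mul_le_mul_of_nonneg_right (min_le_left _ _) (Real.rpow_nonneg hy0 _)).trans hy

end StableIntegral

section StableIntegralDeriv

variable {a b : ℝ} {D : ℂ → ℂ}

lemma hasDerivAt_stableIntegral (ha : a ∈ Ioo (0 : ℝ) 2) (hD : PolyGrowth D) (k : ℕ) (y : ℝ) :
    HasDerivAt (stableIntegral a b fun z ↦ (I * z) ^ k * D z)
      (-stableIntegral a b (fun z ↦ (I * z) ^ (k + 1) * D z) y) y := by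
  have hint (j : ℕ) := ((rapidDecay_exp_stableExp ha b).polyGrowth_mul
    ((polyGrowth_I_mul_pow j).mul hD)).integrableOn
  have hkernel : (fun t : ℝ ↦ (I * t) ^ (k + 1) * D t * exp (stableExp a b t)) =
      fun t : ℝ ↦ I * t * ((I * t) ^ k * D t * exp (stableExp a b t)) := by
    ext t
    ring
  have hint' := hint (k + 1)
  rw [hkernel] at hint'
  rw [stableIntegral, ← neg_re, hkernel]
  exact reCLM.hasFDerivAt.comp_hasDerivAt y (hasDerivAt_halfFourier (hint k) hint' y)

lemma integrableOn_exp_neg_rpow_mul_pow (ha : 0 < a) (n : ℕ) :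
    IntegrableOn (fun t : ℝ ↦ Real.exp (-t ^ a) * (1 + t) ^ n) (Ioi 0) := by
  obtain ⟨C, hC⟩ := exists_exp_neg_rpow_mul_pow_le ha one_pos (n + 2)
  refine integrableOn_of_norm_le_inv_one_add_sq (C := C)
    (Continuous.continuousOn (by have := ha.le; fun_prop (disch := assumption))) fun t ht ↦ ?_
  have hbound := hC t ht
  have ht' : (0 : ℝ) ≤ t := ht
  rw [one_mul, pow_add, ← mul_assoc] at hbound
  rw [Real.norm_of_nonneg (by positivity), ← div_eq_mul_inv, le_div_iff₀ (by positivity)]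
  refine le_trans (mul_le_mul_of_nonneg_left ?_ (by positivity)) hbound
  nlinarith

lemma norm_exp_stableExp_ofReal_le {a₁ t : ℝ} (h₁ : 0 < a₁) (ha : a₁ ≤ a) (ht : 0 < t) :
    ‖exp (stableExp a b t)‖ ≤ Real.exp 1 * Real.exp (-t ^ a₁) := by
  rw [norm_exp_stableExp_ofReal a b ht.le, ← Real.exp_add, Real.exp_le_exp]
  rcases le_total t 1 with h | h
  · linarith [Real.rpow_le_one ht.le h h₁.le, Real.rpow_nonneg ht.le a]
  · linarith [Real.rpow_le_rpow_of_exponent_le h ha]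

lemma hasDerivAt_stableIntegral_of_path {α β : ℝ → ℝ} {E : ℝ → ℂ → ℂ} {s : Set ℝ} {s₀ a₁ p K : ℝ}
    (hs : s ∈ 𝓝 s₀) (h₁ : 0 < a₁) (hα : ∀ r ∈ s, α r ∈ Ico a₁ 2)
    (hE : ∀ r ∈ s, ∀ t : ℝ, 0 < t → HasDerivAt (fun r ↦ stableExp (α r) (β r) t) (E r t) r)
    (hE_le : ∀ r ∈ s, ∀ t : ℝ, 0 < t → ‖E r t‖ ≤ K * (t ^ p * (1 + t) ^ 6)) (hp : 0 < p)
    (hE₀ : PolyGrowth (E s₀)) (hD : PolyGrowth D) (y : ℝ) :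
    HasDerivAt (fun r ↦ stableIntegral (α r) (β r) D y)
      (stableIntegral (α s₀) (β s₀) (fun z ↦ D z * E s₀ z) y) s₀ := by
  have hα' {r : ℝ} (hr : r ∈ s) : α r ∈ Ioo (0 : ℝ) 2 := ⟨h₁.trans_le (hα r hr).1, (hα r hr).2⟩
  have hrapid {r : ℝ} (hr : r ∈ s) := rapidDecay_exp_stableExp (hα' hr) (β r)
  have hs₀ : s₀ ∈ s := mem_of_mem_nhds hs
  obtain ⟨L, n, hL⟩ := hD.bound
  set N := ⌈p⌉₊
  refine reCLM.hasFDerivAt.comp_hasDerivAt s₀ (hasDerivAt_halfFourier_param hs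
    (h' := fun r t ↦ D t * E r t * exp (stableExp (α r) (β r) t))
    (bound := fun t ↦ |L| * |K| * Real.exp 1 * (Real.exp (-t ^ a₁) * (1 + t) ^ (n + N + 6)))
    (fun r hr ↦ ((hrapid hr).polyGrowth_mul hD).integrableOn)
    ((hrapid hs₀).polyGrowth_mul (hD.mul hE₀)).integrableOn.aestronglyMeasurable
    (fun r hr t ht ↦ ?_) ((integrableOn_exp_neg_rpow_mul_pow h₁ _).const_mul _)
    (fun r hr t ht ↦ ((hE r hr t ht).cexp.const_mul _).congr_deriv (by ring)) y)
  have hDt : ‖D t‖ ≤ |L| * (1 + t) ^ n := by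
    refine (hL t (ofReal_mem_halfStrip (le_of_lt ht))).trans ?_
    rw [ofReal_re]
    gcongr
    exact le_abs_self L
  have hEt : ‖E r t‖ ≤ |K| * (1 + t) ^ (N + 6) := by
    refine (hE_le r hr t ht).trans ?_
    rw [pow_add, ← Real.rpow_natCast (1 + t) N]
    gcongr
    · exact le_abs_self K
    · calc t ^ p ≤ (1 + t) ^ p := by gcongr; linarith
        _ ≤ (1 + t) ^ (N : ℝ) := Real.rpow_le_rpow_of_exponent_le (by linarith) (Nat.le_ceil p)
  calc ‖D t * E r t * exp (stableExp (α r) (β r) t)‖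
      ≤ |L| * (1 + t) ^ n * (|K| * (1 + t) ^ (N + 6)) *
          (Real.exp 1 * Real.exp (-t ^ a₁)) := by
        rw [norm_mul, norm_mul]
        gcongr
        exact norm_exp_stableExp_ofReal_le h₁ (hα r hr).1 ht
    _ = _ := by ring

lemma hasDerivAt_stableIntegral_param (ha : a ∈ Ioo (0 : ℝ) 2) (hD : PolyGrowth D) (y : ℝ) :
    HasDerivAt (fun a ↦ stableIntegral a b D y)
      (stableIntegral a b (fun z ↦ D z * stableExpDeriv a b z) y) a := by
  obtain ⟨a₁, h₁, ha₁⟩ := exists_between ha.1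
  obtain ⟨a₂, ha₂, h₂⟩ := exists_between ha.2
  obtain ⟨p, hp, hpa⟩ := exists_between (lt_min h₁ one_pos)
  obtain ⟨K, -, hK⟩ := exists_norm_le_rpow_mul hp hpa h₂
  refine hasDerivAt_stableIntegral_of_path (α := id) (β := fun _ ↦ b) (Icc_mem_nhds ha₁ ha₂) h₁
    (fun r hr ↦ ⟨hr.1, hr.2.trans_lt h₂⟩)
    (fun r hr t ht ↦ hasDerivAt_stableExp_param ⟨h₁.trans_le hr.1, hr.2.trans_lt h₂⟩ b
      (ofReal_ne_zero.2 ht.ne'))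
    (K := K + |b| * K) (fun r hr t ht ↦ ?_) hp (polyGrowth_stableExpDeriv ha b) hD y
  obtain ⟨-, hlog, -, hskew⟩ := hK r hr t (ofReal_ne_zero.2 ht.ne')
  rw [norm_real, Real.norm_of_nonneg ht.le] at hlog hskew
  calc ‖stableExpDeriv r b t‖ ≤ ‖(t : ℂ) ^ (r : ℂ) * log t‖ + |b| * ‖skewTermDeriv r t‖ := by
        rw [stableExpDeriv]
        refine (norm_sub_le _ _).trans_eq ?_
        simp
    _ ≤ K * (t ^ p * (1 + t) ^ 6) + |b| * (K * (t ^ p * (1 + t) ^ 6)) := by gcongr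
    _ = _ := by ring

lemma hasDerivAt_stableIntegral_skew (ha : a ∈ Ioo (0 : ℝ) 2) (hD : PolyGrowth D) (y : ℝ) :
    HasDerivAt (fun b ↦ stableIntegral a b D y)
      (stableIntegral a b (fun z ↦ D z * (-I * skewTerm a z)) y) b := by
  obtain ⟨p, hp, hpa⟩ := exists_between (lt_min ha.1 one_pos)
  obtain ⟨K, -, hK⟩ := exists_norm_le_rpow_mul hp hpa ha.2
  refine hasDerivAt_stableIntegral_of_path (α := fun _ ↦ a) (β := id)
    (E := fun _ z ↦ -I * skewTerm a z) (K := K) univ_mem ha.1 (fun _ _ ↦ ⟨le_rfl, ha.2⟩)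
    (fun r _ t _ ↦ hasDerivAt_stableExp_skew a r t) (fun r _ t ht ↦ ?_) hp
    ((polyGrowth_skewTerm ha).const_mul _) hD y
  obtain ⟨-, -, hskew, -⟩ := hK a ⟨le_rfl, le_rfl⟩ t (ofReal_ne_zero.2 ht.ne')
  rw [norm_real, Real.norm_of_nonneg ht.le] at hskew
  rwa [norm_mul, norm_neg, norm_I, one_mul]

end StableIntegralDeriv

section CharFun

lemma exists_charFun_eq_of_tendsto {E : Type*} [NormedAddCommGroup E] [InnerProductSpace ℝ E]
    [FiniteDimensional ℝ E] [MeasurableSpace E] [BorelSpace E] {μ : ℕ → Measure E}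
    [∀ n, IsProbabilityMeasure (μ n)] {φ : E → ℂ} (hφ : ContinuousAt φ 0)
    (h : ∀ t, Tendsto (fun n ↦ charFun (μ n) t) atTop (𝓝 (φ t))) :
    ∃ Q : Measure E, IsProbabilityMeasure Q ∧ charFun Q = φ := by
  let P (n : ℕ) : ProbabilityMeasure E := ⟨μ n, inferInstance⟩
  have htight : IsTightMeasureSet (Set.range fun n ↦ (P n : Measure E)) :=
    isTightMeasureSet_of_tendsto_charFun hφ h
  have hcompact : IsCompact (closure (Set.range P)) :=
    isCompact_closure_of_isTightMeasureSet (by simpa [Set.range, eq_comm] using htight)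
  obtain ⟨Q, -, hQ : Tendsto _ _ _⟩ := hcompact.ultrafilter_le_nhds ((hyperfilter ℕ).map P)
    (.trans (by simp) (monotone_principal subset_closure))
  refine ⟨Q, inferInstance, funext fun t ↦ tendsto_nhds_unique ?_
    ((h t).comp Nat.hyperfilter_le_atTop)⟩
  rw [ProbabilityMeasure.tendsto_iff_forall_integral_rclike_tendsto ℂ] at hQ
  simp_rw [charFun_eq_integral_innerProbChar]
  exact hQ (BoundedContinuousFunction.innerProbChar t)

lemma exists_charFun_eq_pow {E : Type*} [NormedAddCommGroup E] [InnerProductSpace ℝ E]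
    [SecondCountableTopology E] [MeasurableSpace E] [BorelSpace E] (P : Measure E)
    [IsProbabilityMeasure P] (n : ℕ) :
    ∃ Q : Measure E, IsProbabilityMeasure Q ∧ ∀ t, charFun Q t = charFun P t ^ n := by
  induction n with
  | zero => exact ⟨Measure.dirac 0, inferInstance, fun t ↦ by simp⟩
  | succ n ih =>
    obtain ⟨Q, hQ, h⟩ := ih
    exact ⟨Measure.conv Q P, inferInstance, fun t ↦ by rw [charFun_conv, h, pow_succ]⟩

lemma exists_charFun_eq_normalized_pow (P : Measure ℝ) [IsProbabilityMeasure P] (n : ℕ)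
    (c d : ℝ) : ∃ Q : Measure ℝ, IsProbabilityMeasure Q ∧
      ∀ t, charFun Q t = charFun P (c * t) ^ n * exp (-(d * t * I)) := by
  obtain ⟨R, hR, hRpow⟩ := exists_charFun_eq_pow P n
  have : IsProbabilityMeasure (R.map (c * ·)) := Measure.isProbabilityMeasure_map (by fun_prop)
  refine ⟨(R.map (c * ·)).conv (Measure.dirac (-d)), inferInstance, fun t ↦ ?_⟩
  rw [charFun_conv, charFun_map_mul, hRpow, charFun_dirac]
  simp [mul_comm]

lemma norm_pow_sub_pow_le {R : Type*} [NormedCommRing R] [NormOneClass R] {x y : R}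
    (hx : ‖x‖ ≤ 1) (hy : ‖y‖ ≤ 1) (n : ℕ) : ‖x ^ n - y ^ n‖ ≤ n * ‖x - y‖ := by
  induction n with
  | zero => simp
  | succ n ih =>
    calc ‖x ^ (n + 1) - y ^ (n + 1)‖ = ‖x * (x ^ n - y ^ n) + (x - y) * y ^ n‖ := by ring_nf
      _ ≤ ‖x‖ * ‖x ^ n - y ^ n‖ + ‖x - y‖ * ‖y‖ ^ n := by
        refine (norm_add_le _ _).trans (add_le_add (norm_mul_le _ _) ((norm_mul_le _ _).trans ?_))
        gcongr
        exact norm_pow_le _ _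
      _ ≤ 1 * (n * ‖x - y‖) + ‖x - y‖ * 1 := by
        gcongr
        exact pow_le_one₀ (norm_nonneg _) hy
      _ = (n + 1 : ℕ) * ‖x - y‖ := by push_cast; ring

lemma tendsto_natCast_mul_of_isLittleO {a κ : ℝ} (ha : 0 < a) (hκ : 0 < κ) {F : ℝ → ℂ}
    (hF : F =o[𝓝 0] fun s ↦ |s| ^ a) (t : ℝ) :
    Tendsto (fun n : ℕ ↦ (n + 1 : ℕ) * F ((κ * (n + 1 : ℕ)) ^ (-a⁻¹) * t)) atTop (𝓝 0) := by
  have hc : Tendsto (fun n : ℕ ↦ (κ * (n + 1 : ℕ)) ^ (-a⁻¹) * t) atTop (𝓝 0) := by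
    simpa using ((tendsto_rpow_neg_atTop (inv_pos.2 ha)).comp ((tendsto_natCast_atTop_atTop.comp
      (tendsto_add_atTop_nat 1)).const_mul_atTop hκ)).mul_const t
  refine (isLittleO_one_iff ℝ).1 (IsLittleO.trans_isBigO
    ((isBigO_refl (fun n : ℕ ↦ ((n + 1 : ℕ) : ℂ)) atTop).norm_right.mul_isLittleO
      (hF.comp_tendsto hc)) ?_)
  refine (isBigO_const_const (κ⁻¹ * |t| ^ a) one_ne_zero atTop).congr_left fun n ↦ ?_
  rw [Function.comp_apply, abs_mul, Real.mul_rpow (abs_nonneg _) (abs_nonneg _),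
    abs_of_pos (a := (κ * (n + 1 : ℕ)) ^ (-a⁻¹)) (by positivity), ← Real.rpow_mul (by positivity),
    neg_mul, inv_mul_cancel₀ ha.ne', Real.rpow_neg_one, Complex.norm_natCast]
  field_simp

/-- The law `P` is in the domain of attraction of the stable law: `exp Ψ` is the limit of the
characteristic functions of the normalized sums of independent variables of law `P`. -/
lemma exists_charFun_eq_exp_of_isLittleO {a κ : ℝ} (ha : 0 < a) (hκ : 0 < κ) {Ψ : ℝ → ℂ}
    (hcont : ContinuousAt Ψ 0) (hre : ∀ t, (Ψ t).re ≤ 0)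
    (hscale : ∀ l > 0, ∃ d : ℝ, ∀ t : ℝ, Ψ (l * t) = (l ^ a : ℝ) * Ψ t + d * t * I)
    (P : Measure ℝ) [IsProbabilityMeasure P]
    (hP : (fun s ↦ charFun P s - exp (κ * Ψ s)) =o[𝓝 0] fun s ↦ |s| ^ a) :
    ∃ Q : Measure ℝ, IsProbabilityMeasure Q ∧ charFun Q = fun t ↦ exp (Ψ t) := by
  let c (n : ℕ) : ℝ := (κ * (n + 1 : ℕ)) ^ (-a⁻¹)
  have hc (n : ℕ) : 0 < c n := by positivity
  have hca (n : ℕ) : c n ^ a = (κ * (n + 1 : ℕ))⁻¹ := by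
    rw [← Real.rpow_mul (by positivity), neg_mul, inv_mul_cancel₀ ha.ne', Real.rpow_neg_one]
  choose d hd using fun n ↦ hscale (c n) (hc n)
  choose Q hQprob hQ using fun n ↦
    exists_charFun_eq_normalized_pow P (n + 1) (c n) (κ * (n + 1 : ℕ) * d n)
  have hΨ (n : ℕ) (t : ℝ) : exp (Ψ t) = exp (κ * Ψ (c n * t)) ^ (n + 1) *
      exp (-((κ * (n + 1 : ℕ) * d n : ℝ) * t * I)) := by
    have : (κ : ℂ) ≠ 0 := mod_cast hκ.ne'
    have : ((n + 1 : ℕ) : ℂ) ≠ 0 := mod_cast n.succ_ne_zero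
    rw [← exp_nat_mul, ← exp_add, hd, hca]
    congr 1
    push_cast [-Nat.cast_add]
    field_simp
    ring
  refine exists_charFun_eq_of_tendsto (μ := Q) hcont.cexp fun t ↦
    tendsto_iff_norm_sub_tendsto_zero.2 (squeeze_zero (fun _ ↦ norm_nonneg _) (fun n ↦ ?_)
      (tendsto_norm_zero.comp (tendsto_natCast_mul_of_isLittleO ha hκ hP t)))
  calc ‖charFun (Q n) t - exp (Ψ t)‖
      = ‖charFun P (c n * t) ^ (n + 1) - exp (κ * Ψ (c n * t)) ^ (n + 1)‖ := by
        rw [hΨ n, hQ, ← sub_mul, norm_mul, ← ofReal_mul, ← neg_mul, ← ofReal_neg,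
          norm_exp_ofReal_mul_I, mul_one]
    _ ≤ (n + 1 : ℕ) * ‖charFun P (c n * t) - exp (κ * Ψ (c n * t))‖ := by
        refine norm_pow_sub_pow_le (norm_charFun_le_one _) ?_ _
        rw [norm_exp, re_ofReal_mul, Real.exp_le_one_iff]
        exact mul_nonpos_of_nonneg_of_nonpos hκ.le (hre _)
    _ = _ := by rw [Function.comp_apply, norm_mul, Complex.norm_natCast]

end CharFun

section Density

lemma charFun_withDensity_ofReal {f : ℝ → ℝ} (hf : Measurable f) (t : ℝ) :
    charFun (volume.withDensity fun x ↦ ENNReal.ofReal (f x)) t =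
      ∫ x : ℝ, exp (t * x * I) * (max (f x) 0 : ℝ) := by
  rw [charFun_apply_real, integral_withDensity_eq_integral_toReal_smul hf.ennreal_ofReal
    (ae_of_all _ fun _ ↦ ENNReal.ofReal_lt_top)]
  simp only [ENNReal.toReal_ofReal', real_smul, mul_comm]

lemma charFun_add_measure (μ ν : Measure ℝ) [IsFiniteMeasure μ] [IsFiniteMeasure ν] (t : ℝ) :
    charFun (μ + ν) t = charFun μ t + charFun ν t := by
  simp only [charFun_apply_real]
  refine integral_add_measure ?_ ?_ <;>
  exact (integrable_const (1 : ℝ)).mono' (by fun_prop) (ae_of_all _ fun x ↦ by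
    rw [← ofReal_mul, norm_exp_ofReal_mul_I])

lemma integrable_exp_mul_ofReal {f : ℝ → ℝ} (hf : Integrable f) (t : ℝ) :
    Integrable fun x : ℝ ↦ exp (t * x * I) * f x := by
  refine hf.ofReal.bdd_mul (c := 1) (by fun_prop) (ae_of_all _ fun x ↦ ?_)
  rw [← ofReal_mul, norm_exp_ofReal_mul_I]

lemma nonneg_of_integral_exp_eq_charFun {f : ℝ → ℝ} (hf : Continuous f) (hint : Integrable f)
    (Q : Measure ℝ) [IsFiniteMeasure Q]
    (h : ∀ t : ℝ, ∫ x : ℝ, exp (t * x * I) * f x = charFun Q t) (x : ℝ) : 0 ≤ f x := by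
  have : IsFiniteMeasure (volume.withDensity fun x ↦ ENNReal.ofReal (f x)) :=
    isFiniteMeasure_withDensity_ofReal hint.2
  have : IsFiniteMeasure (volume.withDensity fun x ↦ ENNReal.ofReal (-f x)) :=
    isFiniteMeasure_withDensity_ofReal hint.neg.2
  have hdecomp : volume.withDensity (fun x ↦ ENNReal.ofReal (f x)) =
      Q + volume.withDensity fun x ↦ ENNReal.ofReal (-f x) := by
    refine Measure.ext_of_charFun (funext fun t ↦ ?_)
    rw [charFun_add_measure, charFun_withDensity_ofReal hf.measurable,
      charFun_withDensity_ofReal (f := fun x ↦ -f x) hf.neg.measurable, ← h,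
      ← integral_add (integrable_exp_mul_ofReal hint t)
        (integrable_exp_mul_ofReal (f := fun x ↦ max (-f x) 0) hint.neg_part t)]
    refine integral_congr_ae (ae_of_all _ fun x ↦ ?_)
    rcases le_total (f x) 0 with hx | hx <;> simp [hx]
  have hle : (fun x ↦ ENNReal.ofReal (-f x)) ≤ᵐ[volume] fun x ↦ ENNReal.ofReal (f x) := by
    refine ae_le_of_forall_setLIntegral_le_of_sigmaFinite hf.neg.measurable.ennreal_ofReal
      fun s hs _ ↦ ?_
    rw [← withDensity_apply _ hs, ← withDensity_apply _ hs, hdecomp]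
    exact le_add_self
  have hnonneg : ∀ᵐ x, 0 ≤ f x := hle.mono fun x hx ↦ by
    by_contra! hneg
    rw [ENNReal.ofReal_le_ofReal_iff'] at hx
    rcases hx with hx | hx <;> linarith
  have hmax : (fun x ↦ max (f x) 0) = f := ((hf.max continuous_const).ae_eq_iff_eq volume hf).1
    (hnonneg.mono fun x hx ↦ max_eq_left hx)
  exact (le_max_right _ _).trans_eq (congrFun hmax x)

lemma integral_exp_mul_charFun_density {f : ℝ → ℝ} (hf : Integrable f) {k : ℝ → ℂ}
    (hk : Integrable k) :
    ∫ t : ℝ, k t * ∫ y : ℝ, exp (t * y * I) * f y =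
      ∫ y : ℝ, (∫ t : ℝ, exp (t * y * I) * k t) * f y := by
  have hint : Integrable (fun p : ℝ × ℝ ↦ exp (p.1 * p.2 * I) * (k p.1 * f p.2))
      (volume.prod volume) := by
    refine (hk.mul_prod hf.ofReal).bdd_mul (c := 1) (by fun_prop) (ae_of_all _ fun p ↦ ?_)
    rw [← ofReal_mul, norm_exp_ofReal_mul_I]
  simp_rw [← integral_const_mul, ← integral_mul_const]
  rw [integral_integral_swap (hint.congr (ae_of_all _ fun p ↦ ?_))]
  · refine integral_congr_ae (ae_of_all _ fun y ↦ integral_congr_ae (ae_of_all _ fun t ↦ ?_))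
    ring
  · simp only [Function.uncurry]
    ring

lemma integral_eq_two_mul_re_of_conj {F : ℝ → ℂ} (hF : Integrable F)
    (h : ∀ t, F (-t) = conj (F t)) : ∫ t, F t = (2 * (∫ t in Ioi 0, F t).re : ℝ) := by
  have hneg : ∫ t in Iic 0, F t = conj (∫ t in Ioi 0, F t) := by
    rw [← integral_conj, ← integral_congr_ae (ae_of_all _ h), integral_comp_neg_Ioi, neg_zero]
  rw [← intervalIntegral.integral_Iic_add_Ioi (b := 0) hF.integrableOn hF.integrableOn, hneg,
    add_comm, add_conj]

end Density

section Cumulant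

/-- The log characteristic function `log φ(t; (0, 1, a, b))` of a standardized stable law, obtained
from its values `stableExp a b t` at `t ≥ 0` by Hermitian symmetry. -/
noncomputable def stableCumulant (a b t : ℝ) : ℂ :=
  if 0 ≤ t then stableExp a b (|t| : ℝ) else conj (stableExp a b (|t| : ℝ))

variable {a : ℝ}

lemma stableExp_zero (ha : a ≠ 0) (b : ℝ) : stableExp a b 0 = 0 := by
  simp [stableExp, skewTerm, ha]

lemma stableCumulant_of_nonneg (a b : ℝ) {t : ℝ} (ht : 0 ≤ t) :
    stableCumulant a b t = stableExp a b t := by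
  rw [stableCumulant, if_pos ht, abs_of_nonneg ht]

lemma stableCumulant_neg (ha : a ≠ 0) (b t : ℝ) :
    stableCumulant a b (-t) = conj (stableCumulant a b t) := by
  rcases lt_trichotomy t 0 with ht | rfl | ht
  · simp [stableCumulant, ht.le, ht.not_ge]
  · simp [stableCumulant, stableExp_zero ha]
  · simp [stableCumulant, ht.le, ht.not_ge]

lemma norm_stableCumulant (a b t : ℝ) : ‖stableCumulant a b t‖ = ‖stableExp a b (|t| : ℝ)‖ := by
  rw [stableCumulant]
  split_ifs <;> simp

lemma stableCumulant_re (a b t : ℝ) : (stableCumulant a b t).re = -|t| ^ a := by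
  rw [stableCumulant, ← stableExp_ofReal_re a b (abs_nonneg t)]
  split_ifs <;> simp

lemma continuous_stableCumulant (ha : a ∈ Ioo (0 : ℝ) 2) (b : ℝ) :
    Continuous (stableCumulant a b) := by
  have habs : Continuous fun t : ℝ ↦ stableExp a b (|t| : ℝ) :=
    (polyGrowth_stableExp ha b).continuousOn.comp_continuous (by fun_prop)
      fun t ↦ ofReal_mem_halfStrip (abs_nonneg t)
  refine habs.if_le (continuous_conj.comp habs) continuous_const continuous_id fun t ht ↦ ?_
  simp [show t = 0 from ht.symm, stableExp_zero ha.1.ne']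

lemma stableCumulant_isLittleO (ha : a ∈ Ioo (0 : ℝ) 2) (b : ℝ) :
    stableCumulant a b =o[𝓝 0] fun t ↦ |t| ^ (a / 2) := by
  obtain ⟨p, hpa', hpa⟩ := exists_between
    (lt_min (half_lt_self ha.1) (by linarith [ha.2]) : a / 2 < min a 1)
  obtain ⟨K, hK0, hK⟩ := exists_norm_le_rpow_mul ((half_pos ha.1).trans hpa') hpa ha.2
  have hO : stableCumulant a b =O[𝓝 0] fun t ↦ |t| ^ p * (1 + |t|) ^ 6 := by
    refine IsBigO.of_bound ((1 + |b|) * K) (Eventually.of_forall fun t ↦ ?_)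
    rcases eq_or_ne t 0 with rfl | ht
    · simpa [stableCumulant, stableExp_zero ha.1.ne'] using by positivity
    have hz : ((|t| : ℝ) : ℂ) ≠ 0 := mod_cast abs_ne_zero.2 ht
    obtain ⟨hpow, -, hterm, -⟩ := hK a ⟨le_rfl, le_rfl⟩ _ hz
    rw [norm_real, Real.norm_of_nonneg (abs_nonneg t)] at hpow hterm
    rw [norm_stableCumulant, stableExp, Real.norm_of_nonneg (by positivity)]
    refine (norm_sub_le _ _).trans ?_
    rw [norm_neg, norm_mul, norm_mul, norm_I, one_mul, norm_real, Real.norm_eq_abs]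
    nlinarith [mul_le_mul_of_nonneg_left hterm (abs_nonneg b)]
  have hlim : Tendsto (fun t : ℝ ↦ |t| ^ (p - a / 2) * (1 + |t|) ^ 6) (𝓝 0) (𝓝 0) := by
    have hcont : Continuous fun t : ℝ ↦ |t| ^ (p - a / 2) * (1 + |t|) ^ 6 :=
      (continuous_abs.rpow_const fun _ ↦ Or.inr (sub_pos.2 hpa').le).mul (by fun_prop)
    simpa [Real.zero_rpow (sub_pos.2 hpa').ne'] using hcont.tendsto 0
  refine hO.trans_isLittleO (((isBigO_refl (fun t : ℝ ↦ |t| ^ (a / 2)) _).mul_isLittleO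
    ((isLittleO_one_iff ℝ).2 hlim)).congr (fun t ↦ ?_) fun t ↦ mul_one _)
  rw [← mul_assoc, ← Real.rpow_add' (abs_nonneg t) (by linarith [ha.1]), add_sub_cancel]

lemma skewTerm_ofReal_mul (ha : a ∈ Ioo (0 : ℝ) 2) {l t : ℝ} (hl : 0 < l) (ht : 0 < t) :
    skewTerm a (l * t) = (l ^ a : ℝ) * skewTerm a t + skewTerm a l * t := by
  have hl' : (l : ℂ) ≠ 0 := mod_cast hl.ne'
  have ht' : (t : ℂ) ≠ 0 := mod_cast ht.ne'
  rcases eq_or_ne a 1 with rfl | ha1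
  · rw [skewTerm_one, skewTerm_one, skewTerm_one, Real.rpow_one, log_ofReal_mul hl ht',
      ofReal_log hl.le]
    ring
  · rw [skewTerm_of_ne_one ha ha1 ht', skewTerm_of_ne_one ha ha1 hl',
      skewTerm_of_ne_one ha ha1 (mul_ne_zero hl' ht'), mul_cpow_ofReal_nonneg hl.le ht.le,
      ofReal_cpow hl.le]
    ring

lemma stableExp_ofReal_mul (ha : a ∈ Ioo (0 : ℝ) 2) (b : ℝ) {l t : ℝ} (hl : 0 < l) (ht : 0 ≤ t) :
    stableExp a b (l * t) = (l ^ a : ℝ) * stableExp a b t - I * b * skewTerm a l * t := by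
  rcases ht.eq_or_lt with rfl | ht
  · simp [stableExp_zero ha.1.ne']
  rw [stableExp, stableExp, skewTerm_ofReal_mul ha hl ht, mul_cpow_ofReal_nonneg hl.le ht.le,
    ofReal_cpow hl.le]
  ring

lemma exists_stableCumulant_mul (ha : a ∈ Ioo (0 : ℝ) 2) (b : ℝ) {l : ℝ} (hl : 0 < l) :
    ∃ d : ℝ, ∀ t : ℝ,
      stableCumulant a b (l * t) = (l ^ a : ℝ) * stableCumulant a b t + d * t * I := by
  obtain ⟨s, hs⟩ := conj_eq_iff_real.1 (conj_eq_iff_im.2 (skewTerm_ofReal_im a hl.le))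
  refine ⟨-b * s, fun t ↦ ?_⟩
  have hnonneg (t : ℝ) (ht : 0 ≤ t) : stableCumulant a b (l * t) =
      (l ^ a : ℝ) * stableCumulant a b t + (-b * s : ℝ) * t * I := by
    rw [stableCumulant_of_nonneg a b ht, stableCumulant_of_nonneg a b (by positivity), ofReal_mul,
      stableExp_ofReal_mul ha b hl ht, hs]
    push_cast
    ring_nf
  rcases le_total 0 t with ht | ht
  · exact hnonneg t ht
  · have := congrArg conj (hnonneg (-t) (neg_nonneg.2 ht))
    rw [mul_neg, stableCumulant_neg ha.1.ne', stableCumulant_neg ha.1.ne'] at this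
    simpa using this

lemma norm_exp_stableCumulant (a b t : ℝ) :
    ‖exp (stableCumulant a b t)‖ = Real.exp (-|t| ^ a) := by
  rw [norm_exp, stableCumulant_re]

lemma integrable_exp_stableCumulant (ha : a ∈ Ioo (0 : ℝ) 2) (b : ℝ) :
    Integrable fun t ↦ exp (stableCumulant a b t) := by
  obtain ⟨C, hC⟩ := (rapidDecay_exp_stableExp ha b).exists_norm_le_inv_one_add_sq
  refine (integrable_inv_one_add_sq.const_mul C).mono'
    (by have := continuous_stableCumulant ha b; fun_prop) (.of_forall fun t ↦ ?_)
  have := hC _ (ofReal_mem_halfStrip (abs_nonneg t))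
  rwa [norm_exp_stableExp_ofReal a b (abs_nonneg t), ofReal_re, sq_abs,
    ← norm_exp_stableCumulant a b] at this

end Cumulant

section Inversion

variable {a : ℝ}

/-- The density `f(x; (0, 1, a, b))` of a standardized stable law, with the Fourier inversion
integral folded onto the half line. -/
noncomputable def stableDensity (a b x : ℝ) : ℝ := stableIntegral a b (fun _ ↦ 1) x / Real.pi

lemma integral_exp_stableCumulant (ha : a ∈ Ioo (0 : ℝ) 2) (b x : ℝ) :
    ∫ t : ℝ, exp (-I * t * x) * exp (stableCumulant a b t) =
      (2 * Real.pi * stableDensity a b x : ℝ) := by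
  have hint := integrableOn_univ.1 <|
    integrableOn_exp_mul (integrable_exp_stableCumulant ha b).integrableOn x
  rw [integral_eq_two_mul_re_of_conj hint]
  · rw [stableDensity, mul_div_assoc', mul_right_comm, mul_div_cancel_right₀ _ Real.pi_ne_zero,
      stableIntegral, halfFourier]
    congr 3
    refine setIntegral_congr_fun measurableSet_Ioi fun t ht ↦ ?_
    simp only [stableCumulant_of_nonneg a b (le_of_lt ht), one_mul]
  · intro t
    rw [map_mul, ← exp_conj, ← exp_conj, stableCumulant_neg ha.1.ne']
    simp

lemma continuous_stableDensity (ha : a ∈ Ioo (0 : ℝ) 2) (b : ℝ) :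
    Continuous (stableDensity a b) := by
  have h y := hasDerivAt_stableIntegral (b := b) ha (polyGrowth_const 1) 0 y
  simp only [pow_zero, one_mul] at h
  exact (continuous_iff_continuousAt.2 fun y ↦ (h y).continuousAt).div_const _

lemma stableDensity_isBigO (ha : a ∈ Ioo (0 : ℝ) 2) (b : ℝ) :
    stableDensity a b =O[cobounded ℝ] fun x ↦ |x| ^ (-(a + 1)) := by
  have h := (tailAmplitude_one a).stableIntegral_isBigO (tailAmplitude_one a) (by simp) ha b 0
  simp only [pow_zero, mul_one, Nat.cast_zero, add_zero] at h
  exact (h.const_mul_left Real.pi⁻¹).congr_left fun x ↦ (div_eq_inv_mul _ _).symm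

lemma integrable_of_isBigO_abs_rpow {f : ℝ → ℝ} {p : ℝ} (hf : Continuous f) (hp : 1 < p)
    (h : f =O[cobounded ℝ] fun x ↦ |x| ^ (-p)) : Integrable f := by
  have hO : (fun x : ℝ ↦ |x| ^ (-p)) =O[cobounded ℝ] fun x ↦ (1 + ‖x‖) ^ (-p) := by
    refine IsBigO.of_bound (2 ^ p) ?_
    filter_upwards [tendsto_norm_cobounded_atTop.eventually_ge_atTop 1] with x hx
    rw [Real.norm_eq_abs] at hx ⊢
    rw [Real.norm_eq_abs, Real.norm_eq_abs, abs_of_nonneg (by positivity : 0 ≤ |x| ^ (-p)),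
      abs_of_nonneg (by positivity : 0 ≤ (1 + |x|) ^ (-p)),
      Real.rpow_neg (by positivity), Real.rpow_neg (by positivity), ← div_eq_mul_inv,
      le_div_iff₀ (by positivity), inv_mul_le_iff₀ (by positivity), mul_comm,
      ← Real.mul_rpow (by positivity) (by positivity)]
    gcongr
    linarith
  exact hf.locallyIntegrable.integrable_of_isBigO_cocompact
    ((Metric.cobounded_eq_cocompact (α := ℝ)) ▸ h.trans hO)
    (Integrable.integrableAtFilter (integrable_one_add_norm (by simpa using hp)) _)

lemma integrable_stableDensity (ha : a ∈ Ioo (0 : ℝ) 2) (b : ℝ) : Integrable (stableDensity a b) :=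
  integrable_of_isBigO_abs_rpow (continuous_stableDensity ha b) (by linarith [ha.1])
    (stableDensity_isBigO ha b)

lemma exists_le_stableDensity {b : ℝ} (ha : a ∈ Ioo (0 : ℝ) 2) (hb : b ∈ Ioo (-1 : ℝ) 1) :
    ∃ c > 0, ∀ᶠ x in cobounded ℝ, c * |x| ^ (-(a + 1)) ≤ stableDensity a b x := by
  obtain ⟨c, hc, h⟩ := exists_le_stableIntegral_one ha hb
  refine ⟨c / Real.pi, div_pos hc Real.pi_pos, h.mono fun x hx ↦ ?_⟩
  rw [stableDensity, div_mul_eq_mul_div]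
  gcongr

lemma integral_exp_mul_eq_of_fourier {φ : ℝ → ℂ} {f : ℝ → ℝ} (hφ : Continuous φ)
    (hφi : Integrable φ) (hf : Integrable f)
    (h : ∀ x : ℝ, ∫ t : ℝ, exp (-I * t * x) * φ t = (2 * Real.pi * f x : ℝ)) (t : ℝ) :
    ∫ x : ℝ, exp (t * x * I) * f x = φ t := by
  have hpi : 2 * Real.pi ≠ 0 := Real.two_pi_pos.ne'
  have hfourier : 𝓕 (fun v ↦ φ (2 * Real.pi * v)) = fun x ↦ (f x : ℂ) := by
    ext x
    have hsub := Measure.integral_comp_mul_left (fun t : ℝ ↦ exp (-I * t * x) * φ t) (2 * Real.pi)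
    rw [h, abs_of_pos (inv_pos.2 Real.two_pi_pos), ofReal_mul, real_smul, ← mul_assoc, ← ofReal_mul,
      inv_mul_cancel₀ hpi, ofReal_one, one_mul] at hsub
    rw [Real.fourier_real_eq_integral_exp_smul, ← hsub]
    refine integral_congr_ae (.of_forall fun v ↦ ?_)
    simp only [smul_eq_mul]
    congr 2
    push_cast
    ring
  have hinv := congrFun ((hφ.comp (continuous_const_mul _)).fourierInv_fourier_eq
    (hφi.comp_mul_left' hpi) (hfourier ▸ hf.ofReal)) (t / (2 * Real.pi))
  simp only [Function.comp_def, mul_div_cancel₀ t hpi] at hinv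
  rw [← hinv, hfourier, Real.fourierInv_eq']
  refine integral_congr_ae (.of_forall fun x ↦ ?_)
  simp only [smul_eq_mul, RCLike.inner_apply, conj_trivial]
  congr 2
  push_cast
  field_simp

lemma integral_exp_mul_stableDensity (ha : a ∈ Ioo (0 : ℝ) 2) (b t : ℝ) :
    ∫ x : ℝ, exp (t * x * I) * stableDensity a b x = exp (stableCumulant a b t) :=
  integral_exp_mul_eq_of_fourier (continuous_stableCumulant ha b).cexp
    (integrable_exp_stableCumulant ha b) (integrable_stableDensity ha b)
    (integral_exp_stableCumulant ha b) t

end Inversion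

section GaussianMixture

open ProbabilityTheory

lemma exists_add_mul_nonneg {f g : ℝ → ℝ} (hf : Continuous f) (hg : Continuous g)
    (hg_pos : ∀ x, 0 < g x) (hf_nonneg : ∀ᶠ x in cobounded ℝ, 0 ≤ f x) :
    ∃ ν ≥ 0, ∀ x, 0 ≤ f x + ν * g x := by
  rw [Metric.cobounded_eq_cocompact, hasBasis_cocompact.eventually_iff] at hf_nonneg
  obtain ⟨K, hK, hfK⟩ := hf_nonneg
  obtain ⟨ν, hν⟩ := hK.exists_bound_of_continuousOn
    (hf.div hg fun x ↦ (hg_pos x).ne').continuousOn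
  refine ⟨max ν 0, le_max_right _ _, fun x ↦ ?_⟩
  by_cases hx : x ∈ K
  · have h : -(f x / g x) ≤ max ν 0 := (neg_le_abs _).trans ((hν x hx).trans (le_max_left _ _))
    rw [← neg_div, div_le_iff₀ (hg_pos x)] at h
    linarith
  · exact add_nonneg (hfK hx) (mul_nonneg (le_max_right _ _) (hg_pos x).le)

lemma integral_exp_mul_gaussianPDFReal (t : ℝ) :
    ∫ x : ℝ, exp (t * x * I) * gaussianPDFReal 0 1 x = Real.exp (-t ^ 2 / 2) := by
  have h := charFun_withDensity_ofReal (measurable_gaussianPDFReal 0 1) t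
  rw [← gaussianPDF_def, ← gaussianReal_of_var_ne_zero 0 one_ne_zero, charFun_gaussianReal] at h
  simp only [max_eq_left (gaussianPDFReal_nonneg 0 1 _)] at h
  rw [← h]
  push_cast
  congr 1
  ring

lemma exists_charFun_eq_gaussian_mixture {f : ℝ → ℝ} (hf : Continuous f) (hint : Integrable f)
    (hf_one : ∫ x, f x = 1) (hf_nonneg : ∀ᶠ x in cobounded ℝ, 0 ≤ f x) :
    ∃ ν : ℝ, 0 ≤ ν ∧ ∃ P : Measure ℝ, IsProbabilityMeasure P ∧ ∀ t, charFun P t =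
      ((1 + ν)⁻¹ : ℝ) * ((∫ x : ℝ, exp (t * x * I) * f x) + ν * Real.exp (-t ^ 2 / 2)) := by
  have hg : Continuous (gaussianPDFReal 0 1) := by unfold gaussianPDFReal; fun_prop
  obtain ⟨ν, hν, hpos⟩ := exists_add_mul_nonneg hf hg
    (fun x ↦ gaussianPDFReal_pos 0 1 x one_ne_zero) hf_nonneg
  set P := volume.withDensity fun x ↦ ENNReal.ofReal ((1 + ν)⁻¹ * (f x + ν * gaussianPDFReal 0 1 x))
  have hP (t : ℝ) : charFun P t =
      ((1 + ν)⁻¹ : ℝ) * ((∫ x : ℝ, exp (t * x * I) * f x) + ν * Real.exp (-t ^ 2 / 2)) := by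
    rw [charFun_withDensity_ofReal (by fun_prop), ← integral_exp_mul_gaussianPDFReal,
      ← integral_const_mul (ν : ℂ), ← integral_add (integrable_exp_mul_ofReal hint t)
        ((integrable_exp_mul_ofReal (integrable_gaussianPDFReal 0 1) t).const_mul _),
      ← integral_const_mul]
    refine integral_congr_ae (.of_forall fun x ↦ ?_)
    simp only [max_eq_left (mul_nonneg (by positivity : 0 ≤ (1 + ν)⁻¹) (hpos x))]
    push_cast
    ring
  refine ⟨ν, hν, P, ⟨?_⟩, hP⟩
  have h := hP 0
  simp only [charFun_zero, ofReal_zero, zero_mul, exp_zero, one_mul, integral_complex_ofReal,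
    hf_one] at h
  norm_num at h
  rw [← ofReal_one, ← ofReal_add, ← ofReal_inv, ← ofReal_mul, inv_mul_cancel₀ (by positivity),
    ofReal_inj] at h
  exact (ENNReal.toReal_eq_one_iff _).1 h

lemma tendsto_abs_rpow_nhds_zero {p : ℝ} (hp : 0 < p) :
    Tendsto (fun t : ℝ ↦ |t| ^ p) (𝓝 0) (𝓝 0) :=
  (continuous_abs.rpow_const fun _ ↦ .inr hp.le).tendsto' 0 0 (by simp [hp.ne'])

lemma sq_isLittleO_abs_rpow {p : ℝ} (hp : p < 2) :
    (fun t : ℝ ↦ t ^ 2) =o[𝓝 0] fun t ↦ |t| ^ p := by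
  have h := (isLittleO_one_iff ℝ).2 (tendsto_abs_rpow_nhds_zero (sub_pos.2 hp))
  refine (h.mul_isBigO (isBigO_refl (fun t ↦ |t| ^ p) _)).congr' (.of_forall fun t ↦ ?_)
    (.of_forall fun t ↦ one_mul _)
  beta_reduce
  rw [← Real.rpow_add' (abs_nonneg t) (by simp), sub_add_cancel, Real.rpow_two, sq_abs]

lemma exp_sub_one_sub_isLittleO {a : ℝ} (ha : 0 < a) {φ : ℝ → ℂ}
    (hφ : φ =o[𝓝 0] fun t ↦ |t| ^ (a / 2)) :
    (fun t ↦ exp (φ t) - 1 - φ t) =o[𝓝 0] fun t ↦ |t| ^ a := by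
  have hexp : (fun z : ℂ ↦ exp z - 1 - z) =O[𝓝 0] fun z ↦ z ^ 2 := by
    simpa [Finset.sum_range_succ, sub_sub] using exp_sub_sum_range_isBigO_pow 2
  have hsq := hexp.comp_tendsto (hφ.trans_tendsto (tendsto_abs_rpow_nhds_zero (half_pos ha)))
  refine (hsq.trans_isLittleO (hφ.pow two_pos)).congr_right fun t ↦ ?_
  rw [← Real.rpow_mul_natCast (abs_nonneg t), Nat.cast_two, div_mul_cancel₀ a two_ne_zero]

lemma mixture_sub_exp_isLittleO {a ν : ℝ} (ha : a ∈ Ioo (0 : ℝ) 2) (hν : 0 ≤ ν) {Ψ : ℝ → ℂ}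
    (hΨ : Ψ =o[𝓝 0] fun t ↦ |t| ^ (a / 2)) :
    (fun t : ℝ ↦ ((1 + ν)⁻¹ : ℝ) * (exp (Ψ t) + ν * Real.exp (-t ^ 2 / 2)) -
      exp ((1 + ν)⁻¹ * Ψ t)) =o[𝓝 0] fun t ↦ |t| ^ a := by
  have hgauss {p : ℝ} (hp : p < 2) : (fun t : ℝ ↦ (-t ^ 2 / 2 : ℂ)) =o[𝓝 0] fun t ↦ |t| ^ p := by
    refine .of_norm_left ((sq_isLittleO_abs_rpow hp).const_mul_left 2⁻¹ |>.congr_left fun t ↦ ?_)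
    simp [div_eq_inv_mul]
  have h₁ := (exp_sub_one_sub_isLittleO ha.1 hΨ).const_mul_left (1 + ν : ℂ)⁻¹
  have h₂ := exp_sub_one_sub_isLittleO ha.1 (hΨ.const_mul_left (1 + ν : ℂ)⁻¹)
  have h₃ := (exp_sub_one_sub_isLittleO ha.1 (hgauss (by linarith [ha.1, ha.2]))).add (hgauss ha.2)
  refine ((h₁.add (h₃.const_mul_left ((1 + ν : ℂ)⁻¹ * ν))).sub h₂).congr_left fun t ↦ ?_
  have hne : (1 + ν : ℂ) ≠ 0 := mod_cast (by positivity : 1 + ν ≠ 0)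
  push_cast
  field_simp
  ring

end GaussianMixture

section Positivity

variable {a b : ℝ}

lemma integral_stableDensity (ha : a ∈ Ioo (0 : ℝ) 2) (b : ℝ) : ∫ x, stableDensity a b x = 1 := by
  have h := integral_exp_mul_stableDensity ha b 0
  simp only [ofReal_zero, zero_mul, exp_zero, one_mul, integral_complex_ofReal,
    stableCumulant_of_nonneg a b le_rfl, stableExp_zero ha.1.ne'] at h
  exact mod_cast h

lemma stableDensity_nonneg (ha : a ∈ Ioo (0 : ℝ) 2) (hb : b ∈ Ioo (-1 : ℝ) 1) (x : ℝ) :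
    0 ≤ stableDensity a b x := by
  have htail : ∀ᶠ x in cobounded ℝ, 0 ≤ stableDensity a b x := by
    obtain ⟨c, hc, h⟩ := exists_le_stableDensity ha hb
    exact h.mono fun x hx ↦ (by positivity : 0 ≤ c * |x| ^ (-(a + 1))).trans hx
  obtain ⟨ν, hν, P, hP, hcharFun⟩ := exists_charFun_eq_gaussian_mixture
    (continuous_stableDensity ha b) (integrable_stableDensity ha b) (integral_stableDensity ha b)
    htail
  simp only [integral_exp_mul_stableDensity ha b] at hcharFun
  obtain ⟨Q, hQ, hQ_charFun⟩ := exists_charFun_eq_exp_of_isLittleO ha.1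
    (by positivity : 0 < (1 + ν)⁻¹) (continuous_stableCumulant ha b).continuousAt
    (fun t ↦ (stableCumulant_re a b t).trans_le (by simpa using by positivity))
    (fun _ hl ↦ exists_stableCumulant_mul ha b hl) P
    ((mixture_sub_exp_isLittleO ha hν (stableCumulant_isLittleO ha b)).congr_left
      fun t ↦ by rw [hcharFun])
  refine nonneg_of_integral_exp_eq_charFun (continuous_stableDensity ha b)
    (integrable_stableDensity ha b) Q (fun t ↦ ?_) x
  rw [integral_exp_mul_stableDensity ha b, hQ_charFun]

lemma exists_stableDensity_conv_eq (ha : a ∈ Ioo (0 : ℝ) 2) (b : ℝ) :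
    ∃ l > 0, ∃ d : ℝ, ∀ x, ∫ y, stableDensity a b (x - y) * stableDensity a b y =
      l⁻¹ * stableDensity a b ((x + d) / l) := by
  have hl : (0 : ℝ) < 2 ^ a⁻¹ := by positivity
  obtain ⟨d, hd⟩ := exists_stableCumulant_mul ha b hl
  rw [Real.rpow_inv_rpow zero_le_two ha.1.ne'] at hd
  set l : ℝ := 2 ^ a⁻¹
  refine ⟨l, hl, d, fun x ↦ ?_⟩
  have hk := integrableOn_univ.1 <|
    integrableOn_exp_mul (integrable_exp_stableCumulant ha b).integrableOn x
  have hconv (y : ℝ) : ∫ t : ℝ, exp (t * y * I) * (exp (-I * t * x) * exp (stableCumulant a b t)) =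
      (2 * Real.pi * stableDensity a b (x - y) : ℝ) := by
    rw [← integral_exp_stableCumulant ha b]
    refine integral_congr_ae (.of_forall fun t ↦ ?_)
    beta_reduce
    rw [← mul_assoc, ← exp_add]
    congr 2
    push_cast
    ring
  have hscale :
      ∫ t : ℝ, exp (-I * t * x) * exp (stableCumulant a b t) * exp (stableCumulant a b t) =
        (l⁻¹ * (2 * Real.pi * stableDensity a b ((x + d) / l)) : ℝ) := by
    rw [ofReal_mul, ← integral_exp_stableCumulant ha b, ← abs_of_pos (inv_pos.2 hl), ← real_smul,
      ← Measure.integral_comp_mul_left (fun t : ℝ ↦ exp (-I * t * ((x + d) / l : ℝ)) *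
        exp (stableCumulant a b t))]
    refine integral_congr_ae (.of_forall fun t ↦ ?_)
    have : (l : ℂ) ≠ 0 := mod_cast hl.ne'
    simp only [← exp_add, hd]
    congr 1
    push_cast
    field_simp
    ring
  have h := integral_exp_mul_charFun_density (integrable_stableDensity ha b) hk
  simp only [integral_exp_mul_stableDensity ha b, hconv, hscale] at h
  simp only [← ofReal_mul, integral_complex_ofReal, ofReal_inj] at h
  simp only [mul_assoc, integral_const_mul] at h
  field_simp at h ⊢
  exact h.symm

lemma abs_stableDensity_le (ha : a ∈ Ioo (0 : ℝ) 2) (b x : ℝ) :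
    |stableDensity a b x| ≤ (2 * Real.pi)⁻¹ * ∫ t, ‖exp (stableCumulant a b t)‖ := by
  have h := norm_integral_le_integral_norm (μ := volume)
    fun t : ℝ ↦ exp (-I * t * x) * exp (stableCumulant a b t)
  simp only [integral_exp_stableCumulant ha b, norm_mul, norm_exp_neg_I_mul_ofReal, one_mul,
    norm_real, Real.norm_eq_abs, abs_two, abs_of_pos Real.pi_pos] at h
  rwa [← div_eq_inv_mul, le_div_iff₀' Real.two_pi_pos]

lemma stableDensity_pos (ha : a ∈ Ioo (0 : ℝ) 2) (hb : b ∈ Ioo (-1 : ℝ) 1) (x : ℝ) :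
    0 < stableDensity a b x := by
  refine (stableDensity_nonneg ha hb x).lt_of_ne' fun hzero ↦ ?_
  obtain ⟨l, hl, d, hconv⟩ := exists_stableDensity_conv_eq ha b
  have h := hconv (l * x - d)
  rw [sub_add_cancel, mul_div_cancel_left₀ _ hl.ne', hzero, mul_zero] at h
  obtain ⟨c, hc, htail⟩ := exists_le_stableDensity ha hb
  have hpos : ∀ᶠ x in cobounded ℝ, 0 < stableDensity a b x := by
    filter_upwards [htail, eventually_ne_cobounded 0] with y hy hy0
    exact (by positivity : 0 < c * |y| ^ (-(a + 1))).trans_le hy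
  obtain ⟨y, hy, hy'⟩ := (hpos.and
    ((tendsto_const_sub_cobounded (l * x - d)).eventually hpos)).exists
  have hcont := continuous_stableDensity ha b
  refine h.not_gt (integral_pos_of_integrable_nonneg_nonzero (by fun_prop) ?_
    (fun y ↦ mul_nonneg (stableDensity_nonneg ha hb _) (stableDensity_nonneg ha hb _))
    (mul_pos hy' hy).ne')
  exact (integrable_stableDensity ha b).bdd_mul (by fun_prop)
    (.of_forall fun y ↦ abs_stableDensity_le ha b _)

end Positivity

section LocationScale

variable {θ : Fin 4 → ℝ}

lemma psiM_of_pos (hθ : θ ∈ ThetaInt) {t : ℝ} (ht : 0 < t) :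
    psiM θ t = stableExp (θ 2) (θ 3) (θ 1 * t : ℝ) + I * (θ 0 * t : ℝ) := by
  have hu : 0 < θ 1 * t := mul_pos hθ.1 ht
  have hu' : ((θ 1 * t : ℝ) : ℂ) ≠ 0 := ofReal_ne_zero.2 hu.ne'
  rw [psiM, abs_of_pos hu, Real.sign_of_pos ht, stableExp, ← ofReal_cpow hu.le]
  split_ifs with h
  · rw [h, skewTerm_one, Real.rpow_one, ← ofReal_log hu.le]
    push_cast
    ring
  · have hpow : (((θ 1 * t) ^ θ 2 : ℝ) : ℂ) * ((θ 1 * t) ^ (1 - θ 2) : ℝ) = (θ 1 * t : ℝ) := by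
      rw [← ofReal_mul, ← Real.rpow_add hu, add_sub_cancel, Real.rpow_one]
    rw [skewTerm_of_ne_one hθ.2.1 h hu', ← ofReal_cpow hu.le]
    simp only [ofReal_mul, ofReal_neg, ofReal_sub, ofReal_one] at hpow ⊢
    linear_combination (-I * θ 3 * (Real.tan (Real.pi * θ 2 / 2) : ℂ)) * hpow

lemma psiM_neg (θ : Fin 4 → ℝ) (t : ℝ) : psiM θ (-t) = conj (psiM θ t) := by
  simp only [psiM, mul_neg, abs_neg, Real.sign_neg]
  split_ifs <;>
  · simp only [map_add, map_sub, map_mul, map_one, conj_ofReal, conj_I]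
    push_cast
    ring

lemma psiM_eq (hθ : θ ∈ ThetaInt) (t : ℝ) :
    psiM θ t = stableCumulant (θ 2) (θ 3) (θ 1 * t) + I * (θ 0 * t : ℝ) := by
  have hpos (t : ℝ) (ht : 0 < t) :
      psiM θ t = stableCumulant (θ 2) (θ 3) (θ 1 * t) + I * (θ 0 * t : ℝ) := by
    rw [psiM_of_pos hθ ht, stableCumulant_of_nonneg _ _ (mul_pos hθ.1 ht).le]
  have ha := hθ.2.1.1.ne'
  rcases lt_trichotomy t 0 with ht | rfl | ht
  · have h := congrArg conj (hpos (-t) (neg_pos.2 ht))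
    rw [psiM_neg, conj_conj, mul_neg, stableCumulant_neg ha] at h
    simpa using h
  · simp [psiM, stableCumulant, stableExp_zero ha, Real.zero_rpow ha]
  · exact hpos t ht

lemma fM_eq (hθ : θ ∈ ThetaInt) (x : ℝ) :
    fM θ x = stableDensity (θ 2) (θ 3) ((x - θ 0) / θ 1) / θ 1 := by
  have hσ : (θ 1 : ℂ) ≠ 0 := ofReal_ne_zero.2 hθ.1.ne'
  have hscale (t : ℝ) : exp (-I * t * x) * phiM θ t = exp (-I * (θ 1 * t : ℝ) *
      ((x - θ 0) / θ 1 : ℝ)) * exp (stableCumulant (θ 2) (θ 3) (θ 1 * t)) := by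
    rw [phiM, psiM_eq hθ, ← exp_add, ← exp_add]
    congr 1
    push_cast
    field_simp
    ring
  rw [fM]
  simp_rw [hscale]
  rw [Measure.integral_comp_mul_left fun s : ℝ ↦ exp (-I * s * ((x - θ 0) / θ 1 : ℝ)) *
    exp (stableCumulant (θ 2) (θ 3) s), integral_exp_stableCumulant hθ.2.1, real_smul,
    ← ofReal_mul, ofReal_re, abs_of_pos (inv_pos.2 hθ.1)]
  field_simp

lemma eventually_update_mem_thetaInt (hθ : θ ∈ ThetaInt) (j : Fin 4) :
    ∀ᶠ s in 𝓝 (θ j), Function.update θ j s ∈ ThetaInt := by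
  have hopen : IsOpen ThetaInt := (isOpen_lt continuous_const (continuous_apply 1)).inter
    ((isOpen_Ioo.preimage (continuous_apply 2)).inter (isOpen_Ioo.preimage (continuous_apply 3)))
  refine (continuous_const.update j continuous_id).continuousAt.eventually_mem (hopen.mem_nhds ?_)
  rwa [id, Function.update_eq_self]

end LocationScale

section ScoreKernel

/-- `π` times the `k`-th derivative, up to the sign `(-1) ^ k`, of the standardized stable
density. -/
noncomputable def densityKernel (a b : ℝ) (k : ℕ) : ℝ → ℝ :=
  stableIntegral a b fun z ↦ (I * z) ^ k

/-- The standardized form of the parameter derivatives `(-1) ^ k ∂ⱼ ∂ₓᵏ f` of a stable density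
`f`: in the location-scale variable they are multiples of `scoreKernel j a b k` by constants. -/
noncomputable def scoreKernel (j : Fin 4) (a b : ℝ) (k : ℕ) : ℝ → ℝ :=
  match j with
  | 0 => densityKernel a b (k + 1)
  | 1 => fun y ↦ y * densityKernel a b (k + 1) y - (k + 1) * densityKernel a b k y
  | 2 => stableIntegral a b fun z ↦ (I * z) ^ k * stableExpDeriv a b z
  | 3 => stableIntegral a b fun z ↦ (I * z) ^ k * (-I * skewTerm a z)

/-- The growth of the score function of the `j`-th parameter `(μ, σ, α, β)`. -/
noncomputable def scoreRate (j : Fin 4) : ℝ → ℝ :=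
  match j with
  | 0 => fun x ↦ |x| ^ (-1 : ℝ)
  | 2 => fun x ↦ Real.log |x|
  | 1 | 3 => fun _ ↦ 1

variable {a : ℝ}

lemma densityKernel_zero (a b y : ℝ) : densityKernel a b 0 y = Real.pi * stableDensity a b y := by
  simp only [densityKernel, stableDensity, pow_zero, mul_div_cancel₀ _ Real.pi_ne_zero]

lemma hasDerivAt_densityKernel (ha : a ∈ Ioo (0 : ℝ) 2) (b : ℝ) (k : ℕ) (y : ℝ) :
    HasDerivAt (densityKernel a b k) (-densityKernel a b (k + 1) y) y := by
  have h := hasDerivAt_stableIntegral (b := b) ha (polyGrowth_const 1) k y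
  simpa only [densityKernel, mul_one] using h

lemma hasDerivAt_scoreKernel (ha : a ∈ Ioo (0 : ℝ) 2) (b : ℝ) (j : Fin 4) (k : ℕ) (y : ℝ) :
    HasDerivAt (scoreKernel j a b k) (-scoreKernel j a b (k + 1) y) y := by
  match j with
  | 0 => exact hasDerivAt_densityKernel ha b (k + 1) y
  | 1 =>
    refine (((hasDerivAt_id y).mul (hasDerivAt_densityKernel ha b (k + 1) y)).sub
      ((hasDerivAt_densityKernel ha b k y).const_mul (k + 1 : ℝ))).congr_deriv ?_
    simp only [scoreKernel, id]
    push_cast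
    ring
  | 2 => exact hasDerivAt_stableIntegral ha (polyGrowth_stableExpDeriv ha b) k y
  | 3 => exact hasDerivAt_stableIntegral ha ((polyGrowth_skewTerm ha).const_mul (-I)) k y

lemma densityKernel_isBigO (ha : a ∈ Ioo (0 : ℝ) 2) (b : ℝ) (k : ℕ) :
    densityKernel a b k =O[cobounded ℝ] fun y ↦ |y| ^ (-(a + k + 1)) := by
  have h := (tailAmplitude_one a).stableIntegral_isBigO (tailAmplitude_one a) (by simp) ha b k
  simpa only [densityKernel, pow_zero, mul_one] using h

lemma tendsto_abs_cobounded_atTop : Tendsto (fun x : ℝ ↦ |x|) (cobounded ℝ) atTop :=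
  tendsto_norm_cobounded_atTop

lemma tendsto_log_abs_cobounded_atTop : Tendsto (fun x : ℝ ↦ Real.log |x|) (cobounded ℝ) atTop :=
  Real.tendsto_log_atTop.comp tendsto_abs_cobounded_atTop

lemma scoreKernel_isBigO (ha : a ∈ Ioo (0 : ℝ) 2) (b : ℝ) (j : Fin 4) (k : ℕ) :
    scoreKernel j a b k =O[cobounded ℝ] fun y ↦ |y| ^ (-(a + k + 1)) * scoreRate j y := by
  have hsucc : densityKernel a b (k + 1) =O[cobounded ℝ]
      fun y ↦ |y| ^ (-(a + k + 1)) * |y| ^ (-1 : ℝ) := by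
    refine (densityKernel_isBigO ha b (k + 1)).congr' .rfl ?_
    filter_upwards [tendsto_abs_cobounded_atTop.eventually_gt_atTop 0] with y hy
    rw [← Real.rpow_add hy]
    push_cast
    ring_nf
  match j with
  | 0 => exact hsucc
  | 1 =>
    simp only [scoreKernel, scoreRate, mul_one]
    refine .sub ?_ ((densityKernel_isBigO ha b k).const_mul_left _)
    refine ((isBigO_refl (fun y : ℝ ↦ y) _).abs_right.mul hsucc).congr' .rfl ?_
    filter_upwards [tendsto_abs_cobounded_atTop.eventually_gt_atTop 0] with y hy
    rw [Real.rpow_neg_one, mul_left_comm, mul_inv_cancel₀ hy.ne', mul_one]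
  | 2 =>
    have hlog : (fun y : ℝ ↦ 1 + Real.log |y|) =O[cobounded ℝ] fun y ↦ Real.log |y| :=
      ((isLittleO_const_left.2 <| .inr <| tendsto_norm_atTop_atTop.comp
        tendsto_log_abs_cobounded_atTop).isBigO).add (isBigO_refl _ _)
    have h := (tailAmplitude_stableExpDeriv ha b).stableIntegral_isBigO
      (tailAmplitude_stableExpDeriv ha (-b)) (fun t ht ↦ stableExpDeriv_neg_skew ha b ht.le) ha b k
    simp only [pow_one] at h
    exact h.trans ((isBigO_refl _ _).mul hlog)
  | 3 =>
    have hconj (t : ℝ) (ht : 0 < t) : -(-I * skewTerm a t) = conj (-I * skewTerm a t) := by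
      simp [conj_eq_iff_im.2 (skewTerm_ofReal_im a ht.le)]
    exact (tailAmplitude_skew ha).stableIntegral_isBigO (tailAmplitude_skew ha).neg hconj ha b k

end ScoreKernel

section Derivatives

/-- The derivative `(-1) ^ k ∂ₓᵏ f(x; θ)` of the stable density. -/
noncomputable def densityDeriv (θ : Fin 4 → ℝ) (k : ℕ) (x : ℝ) : ℝ :=
  densityKernel (θ 2) (θ 3) k ((x - θ 0) / θ 1) / (Real.pi * θ 1 ^ (k + 1))

/-- The derivative `(-1) ^ k ∂ⱼ ∂ₓᵏ f(x; θ)` of the stable density; a derivative in the location or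
the scale (`j = 0, 1`) contributes a further power of the scale to the denominator. -/
noncomputable def densityParamDeriv (j : Fin 4) (θ : Fin 4 → ℝ) (k : ℕ) (x : ℝ) : ℝ :=
  scoreKernel j (θ 2) (θ 3) k ((x - θ 0) / θ 1) / (Real.pi * θ 1 ^ (k + ![2, 2, 1, 1] j))

variable {θ : Fin 4 → ℝ}

lemma fM_eq_densityDeriv (hθ : θ ∈ ThetaInt) (x : ℝ) : fM θ x = densityDeriv θ 0 x := by
  rw [fM_eq hθ, densityDeriv, densityKernel_zero, zero_add, pow_one,
    mul_div_mul_left _ _ Real.pi_ne_zero]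

lemma fM_pos (hθ : θ ∈ ThetaInt) (x : ℝ) : 0 < fM θ x := by
  rw [fM_eq hθ]
  exact div_pos (stableDensity_pos hθ.2.1 hθ.2.2 _) hθ.1

lemma hasDerivAt_comp_sub_div {F : ℝ → ℝ} {F' m s x : ℝ} (hF : HasDerivAt F F' ((x - m) / s)) :
    HasDerivAt (fun x ↦ F ((x - m) / s)) (F' / s) x := by
  have h := hF.comp x (((hasDerivAt_id x).sub_const m).div_const s)
  rwa [mul_one_div] at h

lemma hasDerivAt_densityDeriv_update (hθ : θ ∈ ThetaInt) (j : Fin 4) (k : ℕ) (x : ℝ) :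
    HasDerivAt (fun s ↦ densityDeriv (Function.update θ j s) k x) (densityParamDeriv j θ k x)
      (θ j) := by
  have hσ := hθ.1.ne'
  have hπ := Real.pi_ne_zero
  have hy := hasDerivAt_densityKernel hθ.2.1 (θ 3) k ((x - θ 0) / θ 1)
  match j with
  | 0 =>
    refine ((hy.comp (θ 0) (((hasDerivAt_id (θ 0)).const_sub x).div_const (θ 1))).div_const
      (Real.pi * θ 1 ^ (k + 1))).congr_deriv ?_
    simp only [densityParamDeriv, scoreKernel, Matrix.cons_val]
    field_simp
    ring
  | 1 =>
    have hquot : HasDerivAt (fun s ↦ (x - θ 0) / s) (-(x - θ 0) / θ 1 ^ 2) (θ 1) := by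
      simpa using (hasDerivAt_const (θ 1) (x - θ 0)).fun_div (hasDerivAt_id (θ 1)) hσ
    have hpow := (hasDerivAt_pow (k + 1) (θ 1)).const_mul Real.pi
    refine ((hy.comp (θ 1) hquot).fun_div hpow (by positivity)).congr_deriv ?_
    simp only [densityParamDeriv, scoreKernel, Matrix.cons_val, Function.comp]
    push_cast
    field_simp
    ring
  | 2 =>
    exact (hasDerivAt_stableIntegral_param (b := θ 3) hθ.2.1 (polyGrowth_I_mul_pow k)
      ((x - θ 0) / θ 1)).div_const (Real.pi * θ 1 ^ (k + 1))
  | 3 =>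
    exact (hasDerivAt_stableIntegral_skew (b := θ 3) hθ.2.1 (polyGrowth_I_mul_pow k)
      ((x - θ 0) / θ 1)).div_const (Real.pi * θ 1 ^ (k + 1))

lemma hasDerivAt_densityDeriv (hθ : θ ∈ ThetaInt) (k : ℕ) (x : ℝ) :
    HasDerivAt (densityDeriv θ k) (-densityDeriv θ (k + 1) x) x := by
  refine ((hasDerivAt_comp_sub_div (hasDerivAt_densityKernel hθ.2.1 (θ 3) k _)).div_const
    (Real.pi * θ 1 ^ (k + 1))).congr_deriv ?_
  rw [densityDeriv, div_div, neg_div]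
  ring_nf

lemma hasDerivAt_densityParamDeriv (hθ : θ ∈ ThetaInt) (j : Fin 4) (k : ℕ) (x : ℝ) :
    HasDerivAt (densityParamDeriv j θ k) (-densityParamDeriv j θ (k + 1) x) x := by
  refine ((hasDerivAt_comp_sub_div (hasDerivAt_scoreKernel hθ.2.1 (θ 3) j k _)).div_const
    (Real.pi * θ 1 ^ (k + ![2, 2, 1, 1] j))).congr_deriv ?_
  rw [densityParamDeriv, div_div, neg_div]
  ring_nf

lemma fP_eq (hθ : θ ∈ ThetaInt) (j : Fin 4) (x : ℝ) : fP j θ x = densityParamDeriv j θ 0 x := by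
  rw [fP, EventuallyEq.deriv_eq (f := fun s ↦ densityDeriv (Function.update θ j s) 0 x),
    (hasDerivAt_densityDeriv_update hθ j 0 x).deriv]
  exact (eventually_update_mem_thetaInt hθ j).mono fun s hs ↦ fM_eq_densityDeriv hs x

lemma ellP_eq (hθ : θ ∈ ThetaInt) (j : Fin 4) (x : ℝ) :
    ellP j θ x = densityParamDeriv j θ 0 x / densityDeriv θ 0 x := by
  rw [ellP, fP_eq hθ, fM_eq_densityDeriv hθ]

lemma ellPP_zero_eq (hθ : θ ∈ ThetaInt) (j : Fin 4) (x : ℝ) :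
    ellPP 0 j θ x = (densityParamDeriv j θ 1 x * densityDeriv θ 0 x -
      densityDeriv θ 1 x * densityParamDeriv j θ 0 x) / densityDeriv θ 0 x ^ 2 := by
  have hf : densityDeriv θ 0 x ≠ 0 := fM_eq_densityDeriv hθ x ▸ (fM_pos hθ x).ne'
  have h := (hasDerivAt_densityDeriv_update hθ j 1 x).fun_div
    (hasDerivAt_densityDeriv_update hθ j 0 x) (by rwa [Function.update_eq_self])
  rw [ellPP, EventuallyEq.deriv_eq (f := fun s ↦ densityDeriv (Function.update θ j s) 1 x /
    densityDeriv (Function.update θ j s) 0 x), h.deriv, Function.update_eq_self]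
  exact (eventually_update_mem_thetaInt hθ j).mono fun s hs ↦ ellP_eq hs 0 x

lemma ellPX_eq (hθ : θ ∈ ThetaInt) (j : Fin 4) (x : ℝ) :
    ellPX j θ x = -((densityParamDeriv j θ 1 x * densityDeriv θ 0 x -
      densityDeriv θ 1 x * densityParamDeriv j θ 0 x) / densityDeriv θ 0 x ^ 2) := by
  have hf : densityDeriv θ 0 x ≠ 0 := fM_eq_densityDeriv hθ x ▸ (fM_pos hθ x).ne'
  have h := (hasDerivAt_densityParamDeriv hθ j 0 x).fun_div (hasDerivAt_densityDeriv hθ 0 x) hf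
  rw [ellPX, funext (ellP_eq hθ j), h.deriv]
  ring

lemma ellPP_zero_eq_neg_ellPX (hθ : θ ∈ ThetaInt) (j : Fin 4) (x : ℝ) :
    ellPP 0 j θ x = -ellPX j θ x := by
  rw [ellPP_zero_eq hθ, ellPX_eq hθ, neg_neg]

end Derivatives

section Tails

lemma isBigOAtInfty_of_isBigO {h r : ℝ → ℝ} (hO : h =O[cobounded ℝ] r)
    (hr : ∀ᶠ x in cobounded ℝ, 0 ≤ r x) : IsBigOAtInfty h r := by
  obtain ⟨c, hc, hO⟩ := hO.exists_pos
  obtain ⟨M, -, hM⟩ := (hasBasis_cobounded_norm (E := ℝ)).eventually_iff.1 (hO.bound.and hr)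
  refine ⟨c, hc, max M 1, by positivity, fun x hx ↦ ?_⟩
  obtain ⟨hle, hnonneg⟩ := hM ((le_max_left M 1).trans hx)
  rwa [Real.norm_of_nonneg hnonneg] at hle

lemma scoreRate_nonneg (j : Fin 4) : ∀ᶠ x in cobounded ℝ, 0 ≤ scoreRate j x := by
  match j with
  | 0 => exact .of_forall fun x ↦ Real.rpow_nonneg (abs_nonneg x) _
  | 2 => exact tendsto_log_abs_cobounded_atTop.eventually_ge_atTop 0
  | 1 | 3 => exact .of_forall fun _ ↦ zero_le_one

lemma tendsto_sub_div_cobounded (m : ℝ) {s : ℝ} (hs : s ≠ 0) :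
    Tendsto (fun x : ℝ ↦ (x - m) / s) (cobounded ℝ) (cobounded ℝ) := by
  simp only [div_eq_mul_inv]
  exact (tendsto_mul_right_cobounded (inv_ne_zero hs)).comp (tendsto_sub_const_cobounded m)

lemma abs_sub_div_isTheta (m : ℝ) {s : ℝ} (hs : s ≠ 0) :
    (fun x : ℝ ↦ |(x - m) / s|) =Θ[cobounded ℝ] fun x ↦ |x| := by
  have hsub : (fun x : ℝ ↦ x - m) =Θ[cobounded ℝ] fun x ↦ x :=
    (IsEquivalent.refl.sub_isLittleO (isLittleO_const_id_cobounded m)).isTheta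
  simp only [div_eq_inv_mul]
  exact (hsub.const_mul_left (inv_ne_zero hs)).norm_left.norm_right

lemma log_abs_isBigO_log_abs {l : Filter ℝ} {u v : ℝ → ℝ} (hu : Tendsto u l (cobounded ℝ))
    (hv : Tendsto v l (cobounded ℝ)) (h : (fun x ↦ |u x|) =O[l] fun x ↦ |v x|) :
    (fun x ↦ Real.log |u x|) =O[l] fun x ↦ Real.log |v x| := by
  obtain ⟨C, hC, hbound⟩ := h.exists_pos
  have hconst : (fun _ ↦ Real.log C) =O[l] fun x ↦ Real.log |v x| :=
    (isLittleO_const_left.2 <| .inr <| tendsto_norm_atTop_atTop.comp <|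
      tendsto_log_abs_cobounded_atTop.comp hv).isBigO
  refine IsBigO.trans (.of_norm_eventuallyLE ?_) (hconst.add (isBigO_refl _ _))
  filter_upwards [hbound.bound, (tendsto_abs_cobounded_atTop.comp hu).eventually_ge_atTop 1,
    (tendsto_abs_cobounded_atTop.comp hv).eventually_gt_atTop 0] with x hle hux hvx
  simp only [Function.comp, norm_abs_eq_norm, Real.norm_eq_abs] at hle hux hvx
  rw [Real.norm_of_nonneg (Real.log_nonneg hux), ← Real.log_mul hC.ne' hvx.ne']
  exact Real.log_le_log (by positivity) hle

lemma scoreRate_sub_div_isBigO (j : Fin 4) (m : ℝ) {s : ℝ} (hs : s ≠ 0) :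
    (fun x ↦ scoreRate j ((x - m) / s)) =O[cobounded ℝ] scoreRate j := by
  have hΘ := abs_sub_div_isTheta m hs
  match j with
  | 0 =>
    simp only [scoreRate, Real.rpow_neg_one]
    exact hΘ.inv.isBigO
  | 2 => exact log_abs_isBigO_log_abs (tendsto_sub_div_cobounded m hs) tendsto_id hΘ.isBigO
  | 1 | 3 => exact isBigO_refl _ _

lemma scoreKernel_div_isBigO {a b : ℝ} (ha : a ∈ Ioo (0 : ℝ) 2) (hb : b ∈ Ioo (-1 : ℝ) 1)
    (j : Fin 4) (k : ℕ) :
    (fun y ↦ scoreKernel j a b k y / densityKernel a b 0 y) =O[cobounded ℝ]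
      fun y ↦ (|y| ^ k)⁻¹ * scoreRate j y := by
  obtain ⟨c, hc, hlower⟩ := exists_le_stableDensity ha hb
  have hinv : (fun y ↦ (densityKernel a b 0 y)⁻¹) =O[cobounded ℝ] fun y ↦ |y| ^ (a + 1) := by
    refine .of_bound (Real.pi * c)⁻¹ ?_
    filter_upwards [hlower, tendsto_abs_cobounded_atTop.eventually_gt_atTop 0] with y hy hy0
    rw [densityKernel_zero, norm_inv, norm_mul, Real.norm_of_nonneg Real.pi_nonneg,
      Real.norm_of_nonneg (stableDensity_pos ha hb y).le, Real.norm_of_nonneg (by positivity),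
      ← inv_inv (|y| ^ (a + 1)), ← Real.rpow_neg hy0.le, ← mul_inv, mul_assoc]
    gcongr
  simp only [div_eq_mul_inv]
  refine ((scoreKernel_isBigO ha b j k).mul hinv).congr' .rfl ?_
  filter_upwards [tendsto_abs_cobounded_atTop.eventually_gt_atTop 0] with y hy
  rw [mul_right_comm, ← Real.rpow_add hy, ← Real.rpow_natCast, ← Real.rpow_neg hy.le]
  ring_nf

variable {θ : Fin 4 → ℝ}

lemma densityParamDeriv_div_isBigO (hθ : θ ∈ ThetaInt) (j : Fin 4) (k : ℕ) :
    (fun x ↦ densityParamDeriv j θ k x / densityDeriv θ 0 x) =O[cobounded ℝ]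
      fun x ↦ (|x| ^ k)⁻¹ * scoreRate j x := by
  have hσ := hθ.1.ne'
  have hstd := (scoreKernel_div_isBigO hθ.2.1 hθ.2.2 j k).comp_tendsto
    (tendsto_sub_div_cobounded (θ 0) hσ)
  have hrate := (((abs_sub_div_isTheta (θ 0) hσ).pow k).inv.isBigO).mul
    (scoreRate_sub_div_isBigO j (θ 0) hσ)
  refine ((hstd.trans hrate).const_mul_left
    (Real.pi * θ 1 ^ (0 + 1) / (Real.pi * θ 1 ^ (k + ![2, 2, 1, 1] j)))).congr_left fun x ↦ ?_
  rw [densityParamDeriv, densityDeriv, Function.comp, div_div_div_eq, div_mul_div_comm]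
  ring_nf

lemma ellP_isBigOAtInfty (hθ : θ ∈ ThetaInt) (j : Fin 4) :
    IsBigOAtInfty (ellP j θ) (scoreRate j) := by
  refine isBigOAtInfty_of_isBigO ?_ (scoreRate_nonneg j)
  simpa only [← ellP_eq hθ, pow_zero, inv_one, one_mul] using densityParamDeriv_div_isBigO hθ j 0

lemma ellPP_zero_isBigOAtInfty (hθ : θ ∈ ThetaInt) (j : Fin 4) :
    IsBigOAtInfty (ellPP 0 j θ) fun x ↦ |x| ^ (-1 : ℝ) * scoreRate j x := by
  refine isBigOAtInfty_of_isBigO ?_ ((scoreRate_nonneg j).mono fun x hx ↦ by positivity)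
  have hμ := densityParamDeriv_div_isBigO hθ 0 0
  have hj := densityParamDeriv_div_isBigO hθ j 0
  have hμj := densityParamDeriv_div_isBigO hθ j 1
  simp only [pow_zero, pow_one, inv_one, one_mul, ← Real.rpow_neg_one] at hμ hj hμj
  refine (hμj.sub (hμ.mul hj)).congr_left fun x ↦ ?_
  have hf : densityDeriv θ 0 x ≠ 0 := fM_eq_densityDeriv hθ x ▸ (fM_pos hθ x).ne'
  rw [ellPP_zero_eq hθ, show densityDeriv θ 1 x = densityParamDeriv 0 θ 0 x from rfl]
  field_simp

end Tails

end StableLaw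

/-- Tail behavior of the score functions and their first-order derivatives
(with `θ = (μ,σ,α,β)`, indices `0,1,2,3`): `ℓ_μ = O(|x|⁻¹)`, `ℓ_σ = O(1)`,
`ℓ_α = O(log|x|)`, `ℓ_β = O(1)`, and `ℓ_{μμ} = -ℓ_μ' = O(|x|⁻²)`,
`ℓ_{μσ} = -ℓ_σ' = O(|x|⁻¹)`, `ℓ_{μα} = -ℓ_α' = O(|x|⁻¹ log|x|)`,
`ℓ_{μβ} = -ℓ_β' = O(|x|⁻¹)`. -/
theorem score_tail_bounds (θ : Fin 4 → ℝ) (hθ : θ ∈ ThetaInt) :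
    IsBigOAtInfty (ellP 0 θ) (fun x => |x| ^ (-1 : ℝ)) ∧
    IsBigOAtInfty (ellP 1 θ) (fun _ => 1) ∧
    IsBigOAtInfty (ellP 2 θ) (fun x => Real.log |x|) ∧
    IsBigOAtInfty (ellP 3 θ) (fun _ => 1) ∧
    ((∀ x : ℝ, ellPP 0 0 θ x = -ellPX 0 θ x) ∧
      IsBigOAtInfty (ellPP 0 0 θ) (fun x => |x| ^ (-2 : ℝ))) ∧
    ((∀ x : ℝ, ellPP 0 1 θ x = -ellPX 1 θ x) ∧
      IsBigOAtInfty (ellPP 0 1 θ) (fun x => |x| ^ (-1 : ℝ))) ∧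
    ((∀ x : ℝ, ellPP 0 2 θ x = -ellPX 2 θ x) ∧
      IsBigOAtInfty (ellPP 0 2 θ) (fun x => |x| ^ (-1 : ℝ) * Real.log |x|)) ∧
    ((∀ x : ℝ, ellPP 0 3 θ x = -ellPX 3 θ x) ∧
      IsBigOAtInfty (ellPP 0 3 θ) (fun x => |x| ^ (-1 : ℝ))) := by
  have score := StableLaw.ellP_isBigOAtInfty hθ
  have derivative := StableLaw.ellPP_zero_isBigOAtInfty hθ
  have swap := StableLaw.ellPP_zero_eq_neg_ellPX hθ
  have abs_rpow_neg_two (x : ℝ) : |x| ^ (-2 : ℝ) = |x| ^ (-1 : ℝ) * |x| ^ (-1 : ℝ) := by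
    rw [Real.rpow_neg (abs_nonneg x), Real.rpow_neg_one, Real.rpow_two, sq, mul_inv]
  refine ⟨score 0, score 1, score 2, score 3, ⟨swap 0, ?_⟩, ⟨swap 1, ?_⟩, ⟨swap 2, derivative 2⟩,
    ⟨swap 3, ?_⟩⟩
  · simpa only [StableLaw.scoreRate, abs_rpow_neg_two] using derivative 0
  · simpa only [StableLaw.scoreRate, mul_one] using derivative 1
  · simpa only [StableLaw.scoreRate, mul_one] using derivative 3
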